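/- arXiv:1504.06748 — 3 statements merged into one kernel-verified Lean document; each statement's English description precedes it below -/
import Mathlib

section
/- Let S be a set of q − 1 + a points in PG(2,q) with a ≥ 3, and suppose ℓ₁ and ℓ₂ are a-secants of S such that there is a unique tangent to S at each point of S ∩ ℓ_i for i = 1, 2; let N₁, N₂ be the nuclei of ℓ₁, ℓ₂. Then: (1) either N₁ ∈ ℓ₂ and N₂ ∈ ℓ₁, or (2) N₁ = N₂, p divides a, and for every R ∈ S contained in a unique tangent r to S, the tangent r passes through the common nucleus N₁ = N₂. (3) If ℓ₃ is a further a-secant of S such that there is a unique tangent to S at each point of S ∩ ℓ₃, and q or a is odd, then ℓ₃ is the line N₁N₂ (so ℓ₃ is uniquely determined). -/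
/-! Common setup: the Desarguesian projective plane `PG(2,q)` over a finite field `F = GF(q)`.
Points are the projective points of `F³`; lines are the 2-dimensional linear subspaces of `F³`,
with incidence given by containment. -/

/-- Points of `PG(2,F)`. -/
abbrev PGPoint (F : Type*) [Field F] := Projectivization F (Fin 3 → F)

/-- Lines of `PG(2,F)`: the 2-dimensional linear subspaces of `F³`. -/
abbrev PGLine (F : Type*) [Field F] := {W : Submodule F (Fin 3 → F) // Module.finrank F W = 2}

/-- Incidence between a point and a line of `PG(2,F)`. -/
def pgMem {F : Type*} [Field F] (P : PGPoint F) (L : PGLine F) : Prop :=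
  P.submodule ≤ L.val

/-- The number of points of the point set `B` lying on the line `L`;
`L` is a *`k`-secant* of `B` if `nsec B L = k`, a *tangent* if `k = 1`,
a *bisecant* if `k = 2` and a *trisecant* if `k = 3`. -/
noncomputable def nsec {F : Type*} [Field F] (B : Set (PGPoint F)) (L : PGLine F) : ℕ :=
  {P ∈ B | pgMem P L}.ncard

/-- A blocking set: a point set meeting every line. -/
def isBlocking {F : Type*} [Field F] (B : Set (PGPoint F)) : Prop :=
  ∀ L : PGLine F, ∃ P ∈ B, pgMem P L

/-- A minimal blocking set: every point is essential. -/
def isMinimalBlocking {F : Type*} [Field F] (B : Set (PGPoint F)) : Prop :=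
  isBlocking B ∧ ∀ P ∈ B, ¬ isBlocking (B \ {P})

/-- `B` is a blocking set of Rédei type with Rédei line `ℓ`: a blocking set of size
`q + N ≤ 2q` such that `ℓ` meets `B` in exactly `N = |B| − q` points. -/
def isRedeiWithLine {F : Type*} [Field F] (q : ℕ) (B : Set (PGPoint F)) (ℓ : PGLine F) : Prop :=
  isBlocking B ∧ B.ncard ≤ 2 * q ∧ nsec B ℓ + q = B.ncard

/-- A semioval: through each of its points there passes exactly one tangent. -/
def isSemioval {F : Type*} [Field F] (S : Set (PGPoint F)) : Prop :=
  ∀ P ∈ S, ∃! t : PGLine F, pgMem P t ∧ nsec S t = 1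

/-!
Let `N` be the nucleus of `ℓ`, and view `ℓ` as the line at infinity and `T = S ∪ {N}` as `q` affine
points together with `a` directions that these points do not determine. If `r` is the unique tangent
to `S` at an affine point `R` and `m` is another line through `R`, then the product over the other
`q - 1` affine points of the values of an equation of the line of slope `x` in the pencil of `m` and
`r` is a polynomial in `x` equal to `-1` at the slopes of the points of `T ∩ ℓ` (Wilson) and to `0`
elsewhere. Summing it over `x` shows that `a` is the product of the values of an equation of `r`:
if `p ∣ a`, the only point of `T` that can lie on `r` besides `R`, namely `N`, does. Summing
`x⁻¹` times the polynomial yields `∑ r(P) / m(P) = 0`, where `P` runs over `S ∩ ℓ`, provided that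
`m` is a further `a`-secant. Hence a weighted sum of the points of `S ∩ ℓ` lies on the unique
tangents at all points of `S ∩ m`: the nucleus of `m` is on `ℓ` unless `p ∣ a`.

If `p ∣ a` and there are three such lines, then all three have the same nucleus, and a computation
in the style of Segre's lemma of tangents, in a triangle with one vertex on each line, exhibits `a`
elements of `F` whose `(a - 2)`-th power is `-1`. Two of them coincide, which makes the lines
concurrent and the common element `1`; so `1 = -1`, and `q` and `a` are even.
-/

open Finset

lemma exists_eq_smul_of_ker_le_ker {K V : Type*} [Field K] [AddCommGroup V] [Module K V]
    {f g : Module.Dual K V} (h : LinearMap.ker f ≤ LinearMap.ker g) : ∃ c : K, g = c • f := by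
  have hg := mem_span_of_iInf_ker_le_ker (L := fun _ : Unit => f) (K := g) (by simpa using h)
  simpa [Submodule.mem_span_singleton, eq_comm] using hg

lemma two_ne_zero_of_odd_of_natCast_eq_zero {R : Type*} [Ring R] [Nontrivial R] {n : ℕ}
    (hodd : Odd n) (hn : (n : R) = 0) : (2 : R) ≠ 0 := by
  intro htwo
  obtain ⟨m, rfl⟩ := hodd
  simp [htwo] at hn

lemma exists_ne_map_eq_of_forall_pow_eq {R ι : Type*} [CommRing R] [IsDomain R] {s : Finset ι}
    {k : ℕ} (hk : 0 < k) (hs : k < #s) {φ : ι → R} {y : R} (hφ : ∀ i ∈ s, φ i ^ k = y) :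
    ∃ i ∈ s, ∃ j ∈ s, i ≠ j ∧ φ i = φ j := by
  classical
  have hcard := (Multiset.toFinset_card_le _).trans (Polynomial.card_nthRoots k y)
  exact exists_ne_map_eq_of_card_lt_of_maps_to (hcard.trans_lt hs) fun i hi => by
    simpa [Polynomial.mem_nthRoots hk] using hφ i hi

section FiniteField

variable {K : Type*} [Field K]

lemma prod_erase_eq_neg_one_of_bijOn [Finite K] {ι : Type*} [DecidableEq ι]
    {s : Finset ι} {b : ι → K} (hb : Set.BijOn b s Set.univ) {i : ι} (hi : i ∈ s) (hbi : b i = 0) :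
    ∏ j ∈ s.erase i, b j = -1 := by
  classical
  have := Fintype.ofFinite K
  have hzero {j : ι} (hj : j ∈ s.erase i) : b j ≠ 0 := fun h =>
    (mem_erase.1 hj).1 (hb.injOn (mem_of_mem_erase hj) hi (h.trans hbi.symm))
  calc ∏ j ∈ s.erase i, b j = ∏ x : Kˣ, (x : K) := by
        refine prod_bij (fun j hj => Units.mk0 (b j) (hzero hj)) (fun _ _ => mem_univ _) ?_ ?_
          fun _ _ => rfl
        · exact fun j hj k hk h => hb.injOn (mem_of_mem_erase hj) (mem_of_mem_erase hk)
            (congrArg Units.val h)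
        · intro x _
          obtain ⟨j, hj, hjx⟩ := hb.surjOn (Set.mem_univ (x : K))
          exact ⟨j, mem_erase.2 ⟨fun e => x.ne_zero (hjx ▸ e ▸ hbi), hj⟩, Units.ext hjx⟩
    _ = -1 := by
        rw [← Units.coe_prod, FiniteField.prod_univ_units_id_eq_neg_one, Units.val_neg,
          Units.val_one]

open Polynomial in
lemma natDegree_prod_linear_le {ι : Type*} {s : Finset ι} (a b : ι → K) :
    (∏ i ∈ s, (C (a i) * X + C (b i))).natDegree ≤ #s := by
  refine (natDegree_prod_le _ _).trans ((sum_le_card_nsmul s _ 1 fun i _ => ?_).trans_eq ?_)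
  · exact natDegree_linear_le
  · rw [smul_eq_mul, mul_one]

variable [Fintype K]

lemma sum_pow_card_sub_one : ∑ x : K, x ^ (Fintype.card K - 1) = -1 := by
  classical
  have hcard := Fintype.one_lt_card (α := K)
  have hpow (x : K) : x ^ (Fintype.card K - 1) = 1 - if x = 0 then 1 else 0 := by
    split_ifs with hx
    · rw [hx, zero_pow (by omega), sub_self]
    · rw [FiniteField.pow_card_sub_one_eq_one x hx, sub_zero]
  simp [hpow]

lemma sum_eval_eq_neg_coeff {f : Polynomial K} (hf : f.natDegree < Fintype.card K) :
    ∑ x : K, f.eval x = -f.coeff (Fintype.card K - 1) := by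
  have hcard := Nat.sub_add_cancel (Fintype.card_pos (α := K))
  simp_rw [Polynomial.eval_eq_sum_range' hf]
  rw [sum_comm, ← hcard, sum_range_succ, sum_eq_zero fun i hi => ?_]
  · rw [hcard, ← mul_sum, sum_pow_card_sub_one, mul_neg_one, zero_add]
  · rw [← mul_sum, FiniteField.sum_pow_lt_card_sub_one K i (mem_range.1 hi), mul_zero]

section LinearFactors

open Polynomial

variable {ι : Type*} {s : Finset ι} (a b : ι → K)

lemma sum_prod_linear_eq_neg_prod (hs : #s + 1 = Fintype.card K) :
    ∑ x : K, ∏ i ∈ s, (a i * x + b i) = -∏ i ∈ s, a i := by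
  have hdeg := (natDegree_prod_linear_le (s := s) a b).trans_lt (Nat.lt_of_succ_le hs.le)
  have hcoeff := coeff_prod_of_natDegree_le (s := s) (fun i => C (a i) * X + C (b i)) 1
    fun i _ => natDegree_linear_le
  rw [mul_one] at hcoeff
  have := sum_eval_eq_neg_coeff hdeg
  rw [← hs, Nat.add_sub_cancel, hcoeff] at this
  simpa [eval_prod] using this

lemma sum_prod_linear_eq_zero (hs : #s + 1 < Fintype.card K) :
    ∑ x : K, ∏ i ∈ s, (a i * x + b i) = 0 := by
  have hdeg := natDegree_prod_linear_le (s := s) a b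
  have := sum_eval_eq_neg_coeff (hdeg.trans_lt (by omega))
  rw [coeff_eq_zero_of_natDegree_lt (by omega), neg_zero] at this
  simpa [eval_prod] using this

end LinearFactors

end FiniteField

section Plane

variable {F : Type*} [Field F]

lemma pgLine_eq_of_mem {P Q : PGPoint F} {ℓ m : PGLine F} (hPQ : P ≠ Q) (hPℓ : pgMem P ℓ)
    (hQℓ : pgMem Q ℓ) (hPm : pgMem P m) (hQm : pgMem Q m) : ℓ = m := by
  refine Subtype.ext (Projectivization.line_unique hPQ _ _ ℓ.2 m.2 ?_ ?_ ?_ ?_) <;>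
    rwa [Submodule.mem_projectivization_iff_submodule_le]

section Equations

namespace PGLine

/-- The line with equation `g = 0`. -/
def ofForm (g : Module.Dual F (Fin 3 → F)) (hg : g ≠ 0) : PGLine F :=
  ⟨LinearMap.ker g, by simpa using Module.Dual.finrank_ker_add_one_of_ne_zero hg⟩

lemma exists_ofForm_eq (ℓ : PGLine F) : ∃ g hg, ofForm g hg = ℓ := by
  have hlt : ℓ.val < ⊤ := by
    refine lt_top_iff_ne_top.2 fun h => ?_
    have := h ▸ ℓ.2
    simp at this
  obtain ⟨g, hg, hle⟩ := Submodule.exists_le_ker_of_lt_top _ hlt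
  exact ⟨g, hg, Subtype.ext
    (Submodule.eq_of_le_of_finrank_eq hle (ℓ.2.trans (ofForm g hg).2.symm)).symm⟩

/-- A linear form `g` such that `g = 0` is an equation of `ℓ`, determined up to a scalar. -/
noncomputable def form (ℓ : PGLine F) : Module.Dual F (Fin 3 → F) :=
  ℓ.exists_ofForm_eq.choose

lemma form_ne_zero (ℓ : PGLine F) : ℓ.form ≠ 0 :=
  ℓ.exists_ofForm_eq.choose_spec.choose

lemma ofForm_form (ℓ : PGLine F) : ofForm ℓ.form ℓ.form_ne_zero = ℓ :=
  ℓ.exists_ofForm_eq.choose_spec.choose_spec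

end PGLine

variable {P Q : PGPoint F} {ℓ m : PGLine F} {f g : Module.Dual F (Fin 3 → F)}

lemma pgMem_ofForm (hg : g ≠ 0) : pgMem P (PGLine.ofForm g hg) ↔ g P.rep = 0 := by
  rw [pgMem, Projectivization.submodule_eq, Submodule.span_singleton_le_iff_mem]
  exact LinearMap.mem_ker

lemma pgMem_iff_form_eq_zero : pgMem P ℓ ↔ ℓ.form P.rep = 0 := by
  rw [← pgMem_ofForm ℓ.form_ne_zero, ℓ.ofForm_form]

lemma pgMem_mk_iff_form_eq_zero {v : Fin 3 → F} (hv : v ≠ 0) :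
    pgMem (Projectivization.mk F v hv) ℓ ↔ ℓ.form v = 0 := by
  conv_lhs => rw [← ℓ.ofForm_form]
  rw [pgMem, Projectivization.submodule_mk, Submodule.span_singleton_le_iff_mem]
  exact LinearMap.mem_ker

lemma exists_eq_smul_of_ofForm_eq {hf : f ≠ 0} {hg : g ≠ 0}
    (h : PGLine.ofForm f hf = PGLine.ofForm g hg) : ∃ c : F, g = c • f :=
  exists_eq_smul_of_ker_le_ker (congrArg Subtype.val h).le

lemma form_ne_smul_form (hne : m ≠ ℓ) (c : F) : m.form ≠ c • ℓ.form := by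
  intro hc
  have hle : ℓ.val ≤ m.val := by
    rw [← ℓ.ofForm_form, ← m.ofForm_form]
    intro v (hv : ℓ.form v = 0)
    change m.form v = 0
    rw [hc, LinearMap.smul_apply, hv, smul_zero]
  exact hne (Subtype.ext (Submodule.eq_of_le_of_finrank_eq hle (ℓ.2.trans m.2.symm)).symm)

lemma form_sub_smul_form_ne_zero (hne : m ≠ ℓ) (x : F) : m.form - x • ℓ.form ≠ 0 :=
  fun h => form_ne_smul_form hne x (sub_eq_zero.1 h)

lemma ofForm_sub_smul_form_ne (hg : ∀ c : F, g ≠ c • ℓ.form) (x : F)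
    (hx : g - x • ℓ.form ≠ 0) : PGLine.ofForm _ hx ≠ ℓ := by
  intro e
  obtain ⟨c, hc⟩ := exists_eq_smul_of_ofForm_eq (ℓ.ofForm_form.trans e.symm)
  exact hg (c + x) (by rw [add_smul, ← hc, sub_add_cancel])

lemma exists_eq_smul_of_eq_zero (hPQ : P ≠ Q) (hf : f ≠ 0) (hfP : f P.rep = 0)
    (hfQ : f Q.rep = 0) (hgP : g P.rep = 0) (hgQ : g Q.rep = 0) : ∃ c : F, g = c • f := by
  by_cases hg : g = 0
  · exact ⟨0, by rw [hg, zero_smul]⟩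
  · exact exists_eq_smul_of_ofForm_eq (pgLine_eq_of_mem hPQ ((pgMem_ofForm hf).2 hfP)
      ((pgMem_ofForm hf).2 hfQ) ((pgMem_ofForm hg).2 hgP) ((pgMem_ofForm hg).2 hgQ))

lemma exists_pgMem_pgMem (P Q : PGPoint F) : ∃ m : PGLine F, pgMem P m ∧ pgMem Q m := by
  have hlt : Submodule.span F (Set.range ![P.rep, Q.rep]) < ⊤ := by
    refine lt_top_iff_ne_top.2 fun h => ?_
    have := finrank_range_le_card (R := F) ![P.rep, Q.rep]
    rw [Set.finrank, h] at this
    simp at this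
  obtain ⟨g, hg, hle⟩ := Submodule.exists_le_ker_of_lt_top _ hlt
  exact ⟨PGLine.ofForm g hg, (pgMem_ofForm hg).2 (hle (Submodule.subset_span ⟨0, rfl⟩)),
    (pgMem_ofForm hg).2 (hle (Submodule.subset_span ⟨1, rfl⟩))⟩

lemma exists_pgMem_ne (R : PGPoint F) (r : PGLine F) : ∃ m : PGLine F, pgMem R m ∧ m ≠ r := by
  obtain ⟨v, hv⟩ : ∃ v, r.form v ≠ 0 := by
    by_contra! h
    exact r.form_ne_zero (LinearMap.ext h)
  have hv0 : v ≠ 0 := by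
    rintro rfl
    exact hv (map_zero _)
  obtain ⟨m, hRm, hvm⟩ := exists_pgMem_pgMem R (Projectivization.mk F v hv0)
  refine ⟨m, hRm, ?_⟩
  rintro rfl
  exact hv ((pgMem_mk_iff_form_eq_zero hv0).1 hvm)

lemma neg_mul_div_eq_one_of_concurrent {f₀ f₁ f₂ : Module.Dual F (Fin 3 → F)}
    {A A' B C : PGPoint F} (hne : A ≠ A') (hf₀ : f₀ ≠ 0) (hA₀ : f₀ A.rep = 0)
    (hA₀' : f₀ A'.rep = 0) (hB₁ : f₁ B.rep = 0) (hC₂ : f₂ C.rep = 0) (hA₂ : f₂ A.rep ≠ 0)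
    (hA₂' : f₂ A'.rep ≠ 0) (hB₀ : f₀ B.rep ≠ 0) (hC₁ : f₁ C.rep ≠ 0)
    (heq : f₁ A.rep / f₂ A.rep = f₁ A'.rep / f₂ A'.rep) :
    -(f₀ C.rep * f₂ B.rep / (f₀ B.rep * f₁ C.rep)) * (f₁ A.rep / f₂ A.rep) = 1 := by
  set y := f₁ A.rep / f₂ A.rep with hy
  obtain ⟨d, hd⟩ := exists_eq_smul_of_eq_zero (g := f₁ - y • f₂) hne hf₀ hA₀ hA₀'
    (by simp [hy, hA₂]) (by simp [heq, hA₂'])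
  have hdB : -(y * f₂ B.rep) = d * f₀ B.rep := by
    simpa [hB₁] using LinearMap.congr_fun hd B.rep
  have hdC : f₁ C.rep = d * f₀ C.rep := by simpa [hC₂] using LinearMap.congr_fun hd C.rep
  field_simp
  linear_combination f₀ C.rep * hdB - f₀ B.rep * hdC

/-- `A`, `B`, `C` are the vertices of a triangle with the opposite sides `a`, `b`, `c`. -/
structure IsTriangle (A B C : PGPoint F) (a b c : PGLine F) : Prop where
  pgMem₁₂ : pgMem A b
  pgMem₁₃ : pgMem A c
  pgMem₂₁ : pgMem B a
  pgMem₂₃ : pgMem B c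
  pgMem₃₁ : pgMem C a
  pgMem₃₂ : pgMem C b
  not_pgMem₁ : ¬pgMem A a
  not_pgMem₂ : ¬pgMem B b
  not_pgMem₃ : ¬pgMem C c

namespace IsTriangle

variable {A B C : PGPoint F} {a b c : PGLine F}

lemma rotate (h : IsTriangle A B C a b c) : IsTriangle B C A b c a :=
  ⟨h.pgMem₂₃, h.pgMem₂₁, h.pgMem₃₂, h.pgMem₃₁, h.pgMem₁₂, h.pgMem₁₃, h.not_pgMem₂, h.not_pgMem₃,
    h.not_pgMem₁⟩

lemma dual_eq_zero (h : IsTriangle A B C a b c) (hgA : g A.rep = 0) (hgB : g B.rep = 0)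
    (hgC : g C.rep = 0) : g = 0 := by
  have hBC : B ≠ C := by
    rintro rfl
    exact h.not_pgMem₂ h.pgMem₃₂
  obtain ⟨x, rfl⟩ := exists_eq_smul_of_eq_zero hBC a.form_ne_zero
    (pgMem_iff_form_eq_zero.1 h.pgMem₂₁) (pgMem_iff_form_eq_zero.1 h.pgMem₃₁)
    hgB hgC
  rw [(mul_eq_zero.1 hgA).resolve_right fun hA => h.not_pgMem₁ (pgMem_iff_form_eq_zero.2 hA),
    zero_smul]

end IsTriangle

end Equations

open scoped Classical in
/-- The points of `T` on `ℓ`. -/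
noncomputable def onLine (T : Finset (PGPoint F)) (ℓ : PGLine F) : Finset (PGPoint F) :=
  {u ∈ T | pgMem u ℓ}

open scoped Classical in
/-- The points of `T` off `ℓ`, an affine point set if `ℓ` is taken as the line at infinity. -/
noncomputable def offLine (T : Finset (PGPoint F)) (ℓ : PGLine F) : Finset (PGPoint F) :=
  {u ∈ T | ¬pgMem u ℓ}

section Incidence

variable {T : Finset (PGPoint F)} {P Q R u : PGPoint F} {ℓ : PGLine F}

lemma mem_onLine : u ∈ onLine T ℓ ↔ u ∈ T ∧ pgMem u ℓ := by
  classical exact mem_filter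

lemma mem_offLine : u ∈ offLine T ℓ ↔ u ∈ T ∧ ¬pgMem u ℓ := by
  classical exact mem_filter

lemma form_ne_zero_of_mem_offLine (hu : u ∈ offLine T ℓ) : ℓ.form u.rep ≠ 0 :=
  fun h => (mem_offLine.1 hu).2 (pgMem_iff_form_eq_zero.2 h)

lemma ne_smul_form_of_mem_offLine {g : Module.Dual F (Fin 3 → F)} (hR : R ∈ offLine T ℓ)
    (hg : g ≠ 0) (hgR : g R.rep = 0) (c : F) : g ≠ c • ℓ.form := by
  rintro rfl
  rcases mul_eq_zero.1 hgR with rfl | hR0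
  · exact hg (zero_smul F _)
  · exact form_ne_zero_of_mem_offLine hR hR0

lemma card_onLine_add_card_offLine : #(onLine T ℓ) + #(offLine T ℓ) = #T := by
  classical exact card_filter_add_card_filter_not _

lemma onLine_mono {T' : Finset (PGPoint F)} (h : T ⊆ T') : onLine T ℓ ⊆ onLine T' ℓ := fun _ hu =>
  mem_onLine.2 ⟨h (mem_onLine.1 hu).1, (mem_onLine.1 hu).2⟩

lemma prod_sdiff_triple [DecidableEq (PGPoint F)] {M : Type*} [CommMonoid M]
    (hP : P ∈ onLine T ℓ) (hQ : Q ∈ offLine T ℓ) (hR : R ∈ offLine T ℓ) (φ : PGPoint F → M) :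
    ∏ u ∈ T \ {P, Q, R}, φ u =
      (∏ u ∈ (onLine T ℓ).erase P, φ u) * ∏ u ∈ ((offLine T ℓ).erase Q).erase R, φ u := by
  classical
  rw [mem_onLine] at hP
  rw [mem_offLine] at hQ hR
  rw [← prod_filter_mul_prod_filter_not (T \ {P, Q, R}) (pgMem · ℓ)]
  congr 2 <;> ext u <;>
    simp only [mem_filter, mem_sdiff, mem_insert, mem_singleton, mem_erase, mem_onLine,
      mem_offLine] <;> grind

lemma nsec_coe : nsec (T : Set (PGPoint F)) ℓ = #(onLine T ℓ) := by
  rw [nsec, ← Set.ncard_coe_finset]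
  congr 1
  ext u
  simp [mem_onLine]

end Incidence

/-- With `ℓ` at infinity, `(m.form - x • r.form) / ℓ.form` is an affine function vanishing on the
line of slope `x` in the pencil spanned by `m` and `r`; this is the product of its values on `V`. -/
noncomputable def pencilProd (V : Finset (PGPoint F)) (ℓ m r : PGLine F) (x : F) : F :=
  ∏ u ∈ V, (m.form - x • r.form) u.rep / ℓ.form u.rep

lemma pencilProd_eq_prod_linear (V : Finset (PGPoint F)) (ℓ m r : PGLine F) (x : F) :
    pencilProd V ℓ m r x =
      ∏ u ∈ V, (-(r.form u.rep / ℓ.form u.rep) * x + m.form u.rep / ℓ.form u.rep) := by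
  refine prod_congr rfl fun u _ => ?_
  rw [LinearMap.sub_apply, LinearMap.smul_apply, smul_eq_mul]
  ring

/-- `r` passes through the point `R` of `T` off `ℓ`, misses `T ∩ ℓ`, and is the only line through
`R` that may contain no further point of `T`. For `T = S ∪ {N}` these are the lines `r` that are the
unique tangent to `S` at a point `R` off `ℓ`. -/
structure IsPossibleTangent (T : Finset (PGPoint F)) (ℓ : PGLine F) (R : PGPoint F)
    (r : PGLine F) : Prop where
  point_mem : R ∈ offLine T ℓ
  point_pgMem : pgMem R r
  not_pgMem : ∀ P ∈ onLine T ℓ, ¬pgMem P r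
  exists_mem : ∀ m, pgMem R m → m ≠ r → ∃ u ∈ T, u ≠ R ∧ pgMem u m

namespace IsPossibleTangent

variable {T : Finset (PGPoint F)} {P R : PGPoint F} {ℓ r m : PGLine F}

lemma form_ne_zero (hr : IsPossibleTangent T ℓ R r) (hP : P ∈ onLine T ℓ) : r.form P.rep ≠ 0 :=
  fun e => hr.not_pgMem P hP (pgMem_iff_form_eq_zero.2 e)

lemma form_sub_smul_form_eq_zero_iff (hr : IsPossibleTangent T ℓ R r) (hP : P ∈ onLine T ℓ)
    {x : F} : (m.form - x • r.form) P.rep = 0 ↔ m.form P.rep / r.form P.rep = x := by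
  rw [div_eq_iff (hr.form_ne_zero hP), LinearMap.sub_apply, LinearMap.smul_apply, smul_eq_mul,
    sub_eq_zero]

lemma form_sub_smul_form_apply (hr : IsPossibleTangent T ℓ R r) (hRm : pgMem R m) (x : F) :
    (m.form - x • r.form) R.rep = 0 := by
  simp [pgMem_iff_form_eq_zero.1 hRm, pgMem_iff_form_eq_zero.1 hr.point_pgMem]

lemma injOn_form_div_form (hr : IsPossibleTangent T ℓ R r) (hRm : pgMem R m) (hmr : m ≠ r) :
    Set.InjOn (fun P : PGPoint F => m.form P.rep / r.form P.rep) (onLine T ℓ) := by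
  intro P hP P' hP' hPP'
  by_contra hne
  obtain ⟨c, hc⟩ := exists_eq_smul_of_eq_zero hne ℓ.form_ne_zero
    (pgMem_iff_form_eq_zero.1 (mem_onLine.1 hP).2) (pgMem_iff_form_eq_zero.1 (mem_onLine.1 hP').2)
    ((hr.form_sub_smul_form_eq_zero_iff hP).2 rfl)
    ((hr.form_sub_smul_form_eq_zero_iff hP').2 hPP'.symm)
  exact ne_smul_form_of_mem_offLine hr.point_mem (form_sub_smul_form_ne_zero hmr _)
    (hr.form_sub_smul_form_apply hRm _) c hc

lemma pencilProd_eq_zero [DecidableEq (PGPoint F)] (hr : IsPossibleTangent T ℓ R r)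
    (hRm : pgMem R m) (hmr : m ≠ r) {x : F}
    (hx : ∀ P ∈ onLine T ℓ, m.form P.rep / r.form P.rep ≠ x) :
    pencilProd ((offLine T ℓ).erase R) ℓ m r x = 0 := by
  have hne := form_sub_smul_form_ne_zero hmr x
  obtain ⟨u, hu, huR, hux⟩ :=
    hr.exists_mem _ ((pgMem_ofForm hne).2 (hr.form_sub_smul_form_apply hRm x))
      (ofForm_sub_smul_form_ne (form_ne_smul_form hmr) x hne)
  rw [pgMem_ofForm] at hux
  have huℓ : ¬pgMem u ℓ := fun huℓ => hx u (mem_onLine.2 ⟨hu, huℓ⟩)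
    ((hr.form_sub_smul_form_eq_zero_iff (mem_onLine.2 ⟨hu, huℓ⟩)).1 hux)
  exact prod_eq_zero (mem_erase.2 ⟨huR, mem_offLine.2 ⟨hu, huℓ⟩⟩) (by rw [hux, zero_div])

end IsPossibleTangent

/-- `r` is the only tangent to `S` at the point `R`. -/
def IsUniqueTangent (S : Finset (PGPoint F)) (R : PGPoint F) (r : PGLine F) : Prop :=
  pgMem R r ∧ nsec (S : Set (PGPoint F)) r = 1 ∧
    ∀ t, pgMem R t ∧ nsec (S : Set (PGPoint F)) t = 1 → t = r

namespace IsUniqueTangent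

variable {S : Finset (PGPoint F)} {R u : PGPoint F} {m r : PGLine F}

lemma card_onLine (hr : IsUniqueTangent S R r) : #(onLine S r) = 1 :=
  nsec_coe.symm.trans hr.2.1

lemma eq_of_mem (hr : IsUniqueTangent S R r) (hR : R ∈ S) (hu : u ∈ S) (hur : pgMem u r) :
    u = R :=
  card_le_one.1 hr.card_onLine.le _ (mem_onLine.2 ⟨hu, hur⟩) _ (mem_onLine.2 ⟨hR, hr.1⟩)

lemma exists_mem (hr : IsUniqueTangent S R r) (hR : R ∈ S) (hRm : pgMem R m) (hmr : m ≠ r) :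
    ∃ u ∈ S, u ≠ R ∧ pgMem u m := by
  have hpos : 0 < #(onLine S m) := card_pos.2 ⟨R, mem_onLine.2 ⟨hR, hRm⟩⟩
  have hne : #(onLine S m) ≠ 1 := fun h => hmr (hr.2.2 m ⟨hRm, nsec_coe.trans h⟩)
  obtain ⟨u, hu, huR⟩ := exists_mem_ne (by omega : 1 < #(onLine S m)) R
  exact ⟨u, (mem_onLine.1 hu).1, huR, (mem_onLine.1 hu).2⟩

lemma ne_of_three_le (hr : IsUniqueTangent S R r) (hm : 3 ≤ #(onLine S m)) : m ≠ r := by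
  rintro rfl
  have := hr.card_onLine
  omega

end IsUniqueTangent

/-- `N` lies on all unique tangents to `S` at the points of `S ∩ ℓ`. -/
def IsNucleus (S : Finset (PGPoint F)) (ℓ : PGLine F) (N : PGPoint F) : Prop :=
  ∀ P ∈ onLine S ℓ, ∀ t, IsUniqueTangent S P t → pgMem N t

lemma IsNucleus.of_nsec_eq_one {S : Finset (PGPoint F)} {m : PGLine F} {N : PGPoint F}
    (hN : ∀ P ∈ S, pgMem P m → ∀ t : PGLine F, pgMem P t → nsec (S : Set (PGPoint F)) t = 1 →
      pgMem N t) : IsNucleus S m N := fun P hP t ht =>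
  hN P (mem_onLine.1 hP).1 (mem_onLine.1 hP).2 t ht.1 ht.2.1

variable [Fintype F]

/-- The affine part `T \ ℓ` has `q` points and determines none of the directions `T ∩ ℓ`: each line
other than `ℓ` through a point of `T ∩ ℓ` meets it. For `T = S ∪ {N}` with `N` off `ℓ`, this says
that `N` is a nucleus of the line `ℓ` with respect to `S`. -/
structure IsDirectionAvoiding (T : Finset (PGPoint F)) (ℓ : PGLine F) : Prop where
  card_eq : #(offLine T ℓ) = Fintype.card F
  exists_mem : ∀ P ∈ onLine T ℓ, ∀ m, pgMem P m → m ≠ ℓ → ∃ u ∈ offLine T ℓ, pgMem u m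

namespace IsDirectionAvoiding

variable {T : Finset (PGPoint F)} {P R u : PGPoint F} {ℓ m : PGLine F}
  {g : Module.Dual F (Fin 3 → F)}

/-- With `ℓ` at infinity, `g / ℓ.form` is an affine function whose level sets are the affine lines
in the direction `P`; each of the `q` of them contains one of the `q` points of `T \ ℓ`. -/
lemma bijOn (h : IsDirectionAvoiding T ℓ) (hP : P ∈ onLine T ℓ) (hgP : g P.rep = 0)
    (hg : ∀ c : F, g ≠ c • ℓ.form) :
    Set.BijOn (fun u : PGPoint F => g u.rep / ℓ.form u.rep) (offLine T ℓ) Set.univ := by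
  classical
  have hsurj : Set.SurjOn (fun u : PGPoint F => g u.rep / ℓ.form u.rep) (offLine T ℓ) Set.univ := by
    intro x _
    have hx : g - x • ℓ.form ≠ 0 := fun e => hg x (sub_eq_zero.1 e)
    have hPx : pgMem P (PGLine.ofForm _ hx) := by
      simp [pgMem_ofForm, hgP, pgMem_iff_form_eq_zero.1 (mem_onLine.1 hP).2]
    obtain ⟨u, hu, hux⟩ := h.exists_mem P hP _ hPx (ofForm_sub_smul_form_ne hg x hx)
    rw [pgMem_ofForm] at hux
    refine ⟨u, hu, (div_eq_iff (form_ne_zero_of_mem_offLine hu)).2 ?_⟩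
    simpa [sub_eq_zero] using hux
  refine ⟨fun _ _ => Set.mem_univ _, ?_, hsurj⟩
  rw [← coe_univ] at hsurj
  exact injOn_of_surjOn_of_card_le _ (fun _ _ => mem_univ _) hsurj h.card_eq.le

lemma prod_div_form_eq_neg_one [DecidableEq (PGPoint F)] (h : IsDirectionAvoiding T ℓ)
    (hP : P ∈ onLine T ℓ) (hR : R ∈ offLine T ℓ) (hg : g ≠ 0) (hgP : g P.rep = 0)
    (hgR : g R.rep = 0) : ∏ u ∈ (offLine T ℓ).erase R, g u.rep / ℓ.form u.rep = -1 :=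
  prod_erase_eq_neg_one_of_bijOn (h.bijOn hP hgP (ne_smul_form_of_mem_offLine hR hg hgR)) hR
    (by rw [hgR, zero_div])

lemma eq_or_eq_of_pgMem (h : IsDirectionAvoiding T ℓ) (hP : P ∈ onLine T ℓ)
    (hR : R ∈ offLine T ℓ) (hPm : pgMem P m) (hRm : pgMem R m) (hu : u ∈ T) (hum : pgMem u m) :
    u = P ∨ u = R := by
  by_cases huℓ : pgMem u ℓ
  · refine Or.inl (by_contra fun huP => (mem_offLine.1 hR).2 ?_)
    rwa [pgLine_eq_of_mem huP huℓ (mem_onLine.1 hP).2 hum hPm]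
  · rw [pgMem_iff_form_eq_zero] at hPm hRm hum
    refine Or.inr ((h.bijOn hP hPm (ne_smul_form_of_mem_offLine hR m.form_ne_zero hRm)).injOn
      (mem_offLine.2 ⟨hu, huℓ⟩) hR ?_)
    simp only [hRm, hum, zero_div]

lemma onLine_subset_offLine (h : IsDirectionAvoiding T ℓ) (hne : m ≠ ℓ) (hm : 3 ≤ #(onLine T m)) :
    onLine T m ⊆ offLine T ℓ := by
  intro P hP
  rw [mem_onLine] at hP
  refine mem_offLine.2 ⟨hP.1, fun hPℓ => hne ?_⟩
  classical
  obtain ⟨R, hR, hRP⟩ := exists_mem_ne (by omega : 1 < #(onLine T m)) P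
  rw [mem_onLine] at hR
  by_cases hRℓ : pgMem R ℓ
  · exact pgLine_eq_of_mem hRP hR.2 hP.2 hRℓ hPℓ
  have hsub : onLine T m ⊆ {P, R} := fun u hu => by
    rw [mem_onLine] at hu
    simpa using h.eq_or_eq_of_pgMem (mem_onLine.2 ⟨hP.1, hPℓ⟩) (mem_offLine.2 ⟨hR.1, hRℓ⟩)
      hP.2 hR.2 hu.1 hu.2
  have := (card_le_card hsub).trans card_le_two
  omega

end IsDirectionAvoiding

namespace IsPossibleTangent

variable {T : Finset (PGPoint F)} {P R : PGPoint F} {ℓ r m : PGLine F}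

lemma pencilProd_eq_neg_one [DecidableEq (PGPoint F)] (h : IsDirectionAvoiding T ℓ)
    (hr : IsPossibleTangent T ℓ R r) (hRm : pgMem R m) (hmr : m ≠ r) (hP : P ∈ onLine T ℓ) :
    pencilProd ((offLine T ℓ).erase R) ℓ m r (m.form P.rep / r.form P.rep) = -1 :=
  h.prod_div_form_eq_neg_one hP hr.point_mem (form_sub_smul_form_ne_zero hmr _)
    ((hr.form_sub_smul_form_eq_zero_iff hP).2 rfl) (hr.form_sub_smul_form_apply hRm _)

/-- Up to sign, `pencilProd` is the indicator function of the slopes of the points of `T ∩ ℓ`. -/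
lemma sum_mul_pencilProd [DecidableEq (PGPoint F)] (h : IsDirectionAvoiding T ℓ)
    (hr : IsPossibleTangent T ℓ R r) (hRm : pgMem R m) (hmr : m ≠ r) (φ : F → F) :
    ∑ x, φ x * pencilProd ((offLine T ℓ).erase R) ℓ m r x =
      -∑ P ∈ onLine T ℓ, φ (m.form P.rep / r.form P.rep) := by
  classical
  rw [← sum_subset (subset_univ ((onLine T ℓ).image fun P => m.form P.rep / r.form P.rep)),
    sum_image (hr.injOn_form_div_form hRm hmr), ← sum_neg_distrib]
  · exact sum_congr rfl fun P hP => by rw [pencilProd_eq_neg_one h hr hRm hmr hP, mul_neg_one]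
  · intro x _ hx
    rw [pencilProd_eq_zero hr hRm hmr fun P hP e => hx (mem_image.2 ⟨P, hP, e⟩), mul_zero]

lemma natCast_card_onLine [DecidableEq (PGPoint F)] (h : IsDirectionAvoiding T ℓ)
    (hr : IsPossibleTangent T ℓ R r) :
    (#(onLine T ℓ) : F) = ∏ u ∈ (offLine T ℓ).erase R, -(r.form u.rep / ℓ.form u.rep) := by
  obtain ⟨m, hRm, hmr⟩ := exists_pgMem_ne R r
  have hcard : #((offLine T ℓ).erase R) + 1 = Fintype.card F :=
    (card_erase_add_one hr.point_mem).trans h.card_eq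
  have hsum := sum_mul_pencilProd h hr hRm hmr fun _ => 1
  simp only [pencilProd_eq_prod_linear, one_mul, sum_const, nsmul_one,
    sum_prod_linear_eq_neg_prod _ _ hcard] at hsum
  exact (neg_inj.1 hsum).symm

lemma sum_div_eq_zero (h : IsDirectionAvoiding T ℓ) (hr : IsPossibleTangent T ℓ R r)
    (hRm : pgMem R m) (hmr : m ≠ r) (hm : 3 ≤ #(onLine T m)) :
    ∑ P ∈ onLine T ℓ, r.form P.rep / m.form P.rep = 0 := by
  classical
  have hmℓ : m ≠ ℓ := by
    rintro rfl
    exact (mem_offLine.1 hr.point_mem).2 hRm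
  have hmR : R ∈ onLine T m := mem_onLine.2 ⟨(mem_offLine.1 hr.point_mem).1, hRm⟩
  obtain ⟨v, hv, w, hw, hvw⟩ := one_lt_card.1
    (by rw [card_erase_of_mem hmR]; omega : 1 < #((onLine T m).erase R))
  have hsub := erase_subset_erase R (h.onLine_subset_offLine hmℓ hm)
  have hm0 {u} (hu : u ∈ (onLine T m).erase R) : m.form u.rep = 0 :=
    pgMem_iff_form_eq_zero.1 (mem_onLine.1 (mem_of_mem_erase hu)).2
  have hmul (x : F) : x⁻¹ * pencilProd ((offLine T ℓ).erase R) ℓ m r x =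
      -(r.form v.rep / ℓ.form v.rep) * pencilProd (((offLine T ℓ).erase R).erase v) ℓ m r x := by
    simp only [pencilProd_eq_prod_linear]
    rw [← mul_prod_erase _ _ (hsub hv), hm0 hv, zero_div, add_zero]
    rcases eq_or_ne x 0 with rfl | hx
    · rw [prod_eq_zero (i := w) (mem_erase.2 ⟨hvw.symm, hsub hw⟩) (by simp [hm0 hw])]
      simp
    · field_simp
  have hcard : #(((offLine T ℓ).erase R).erase v) + 1 < Fintype.card F := by
    rw [card_erase_add_one (hsub hv), ← h.card_eq]
    exact card_erase_lt_of_mem hr.point_mem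
  have hsum := sum_mul_pencilProd h hr hRm hmr fun x => x⁻¹
  simp only [hmul, ← mul_sum] at hsum
  simp only [pencilProd_eq_prod_linear, sum_prod_linear_eq_zero _ _ hcard, mul_zero,
    inv_div] at hsum
  exact neg_eq_zero.1 hsum.symm

end IsPossibleTangent

section Nuclei

/-- `ℓ` is an `a`-secant, `a ≥ 3`, of the set `S` of `q - 1 + a` points, and there is a unique
tangent to `S` at each point of `S ∩ ℓ`; this is the condition under which `ℓ` has a nucleus. -/
structure IsNuclear (S : Finset (PGPoint F)) (ℓ : PGLine F) : Prop where
  card_offLine : #(offLine S ℓ) + 1 = Fintype.card F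
  three_le : 3 ≤ #(onLine S ℓ)
  exists_isUniqueTangent : ∀ P ∈ onLine S ℓ, ∃ t, IsUniqueTangent S P t

variable {S : Finset (PGPoint F)} {N N' N₁ N₂ R u : PGPoint F} {ℓ ℓ₁ ℓ₂ m r : PGLine F}

namespace IsNuclear

lemma not_pgMem_of_isNucleus (h : IsNuclear S ℓ) (hN : IsNucleus S ℓ N) : ¬pgMem N ℓ := by
  intro hNℓ
  have := h.three_le
  obtain ⟨P, hP, hPN⟩ := exists_mem_ne (by omega : 1 < #(onLine S ℓ)) N
  obtain ⟨t, ht⟩ := h.exists_isUniqueTangent P hP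
  exact ht.ne_of_three_le h.three_le
    (pgLine_eq_of_mem hPN (mem_onLine.1 hP).2 hNℓ ht.1 (hN P hP t ht))

lemma notMem_of_isNucleus (h : IsNuclear S ℓ) (hN : IsNucleus S ℓ N) : N ∉ S := by
  intro hNS
  obtain ⟨P, hP⟩ := card_pos.1 (by have := h.three_le; omega : 0 < #(onLine S ℓ))
  obtain ⟨t, ht⟩ := h.exists_isUniqueTangent P hP
  have hNP := ht.eq_of_mem (mem_onLine.1 hP).1 hNS (hN P hP t ht)
  exact h.not_pgMem_of_isNucleus hN (hNP ▸ (mem_onLine.1 hP).2)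

lemma eq_of_isNucleus (h : IsNuclear S ℓ) (hN : IsNucleus S ℓ N) (hN' : IsNucleus S ℓ N') :
    N = N' := by
  by_contra hne
  obtain ⟨P, hP, Q, hQ, hPQ⟩ := one_lt_card.1
    (by have := h.three_le; omega : 1 < #(onLine S ℓ))
  obtain ⟨t, ht⟩ := h.exists_isUniqueTangent P hP
  obtain ⟨t', ht'⟩ := h.exists_isUniqueTangent Q hQ
  obtain rfl := pgLine_eq_of_mem hne (hN P hP t ht) (hN' P hP t ht) (hN Q hQ t' ht')
    (hN' Q hQ t' ht')
  exact hPQ (ht'.eq_of_mem (mem_onLine.1 hQ).1 (mem_onLine.1 hP).1 ht.1)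

lemma onLine_insert [DecidableEq (PGPoint F)] (h : IsNuclear S ℓ) (hN : IsNucleus S ℓ N) :
    onLine (insert N S) ℓ = onLine S ℓ := by
  classical
  rw [onLine, filter_insert, if_neg (h.not_pgMem_of_isNucleus hN), onLine]

lemma isDirectionAvoiding_insert [DecidableEq (PGPoint F)] (h : IsNuclear S ℓ)
    (hN : IsNucleus S ℓ N) :
    IsDirectionAvoiding (insert N S) ℓ where
  card_eq := by
    classical
    rw [offLine, filter_insert, if_pos (h.not_pgMem_of_isNucleus hN), card_insert_of_notMem
      fun hNS => h.notMem_of_isNucleus hN (mem_filter.1 hNS).1, ← h.card_offLine, offLine]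
  exists_mem P hP m hPm hmℓ := by
    rw [h.onLine_insert hN] at hP
    have ⟨hPS, hPℓ⟩ := mem_onLine.1 hP
    obtain ⟨t, ht⟩ := h.exists_isUniqueTangent P hP
    by_cases hmt : m = t
    · exact ⟨N, mem_offLine.2 ⟨mem_insert_self N S, h.not_pgMem_of_isNucleus hN⟩,
        hmt ▸ hN P hP t ht⟩
    · obtain ⟨u, hu, huP, hum⟩ := ht.exists_mem hPS hPm hmt
      exact ⟨u, mem_offLine.2 ⟨mem_insert_of_mem hu,
        fun huℓ => hmℓ (pgLine_eq_of_mem huP hum hPm huℓ hPℓ)⟩, hum⟩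

lemma isPossibleTangent_insert [DecidableEq (PGPoint F)] (h : IsNuclear S ℓ)
    (hN : IsNucleus S ℓ N) (hR : R ∈ offLine S ℓ) (hr : IsUniqueTangent S R r) :
    IsPossibleTangent (insert N S) ℓ R r where
  point_mem := mem_offLine.2 ⟨mem_insert_of_mem (mem_offLine.1 hR).1, (mem_offLine.1 hR).2⟩
  point_pgMem := hr.1
  not_pgMem P hP hPr := by
    rw [h.onLine_insert hN, mem_onLine] at hP
    exact (mem_offLine.1 hR).2 (hr.eq_of_mem (mem_offLine.1 hR).1 hP.1 hPr ▸ hP.2)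
  exists_mem m hRm hmr := by
    obtain ⟨u, hu, huR, hum⟩ := hr.exists_mem (mem_offLine.1 hR).1 hRm hmr
    exact ⟨u, mem_insert_of_mem hu, huR, hum⟩

lemma pgMem_of_isUniqueTangent (h : IsNuclear S ℓ) (hN : IsNucleus S ℓ N)
    (ha : (#(onLine S ℓ) : F) = 0) (hR : R ∈ S) (hr : IsUniqueTangent S R r) : pgMem N r := by
  classical
  by_cases hRℓ : pgMem R ℓ
  · exact hN R (mem_onLine.2 ⟨hR, hRℓ⟩) r hr
  have hprod := (h.isPossibleTangent_insert hN (mem_offLine.2 ⟨hR, hRℓ⟩) hr).natCast_card_onLine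
    (h.isDirectionAvoiding_insert hN)
  rw [h.onLine_insert hN, ha, eq_comm, prod_eq_zero_iff] at hprod
  obtain ⟨u, hu, hur⟩ := hprod
  rw [mem_erase] at hu
  have hur : pgMem u r := pgMem_iff_form_eq_zero.2
    ((div_eq_zero_iff.1 (neg_eq_zero.1 hur)).resolve_right (form_ne_zero_of_mem_offLine hu.2))
  obtain rfl := (mem_insert.1 (mem_offLine.1 hu.2).1).resolve_right
    fun huS => hu.1 (hr.eq_of_mem hR huS hur)
  exact hur

lemma isNucleus_of_natCast_eq_zero (h : IsNuclear S ℓ) (hN : IsNucleus S ℓ N)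
    (ha : (#(onLine S ℓ) : F) = 0) (m : PGLine F) : IsNucleus S m N :=
  fun _ hP _ ht => h.pgMem_of_isUniqueTangent hN ha (mem_onLine.1 hP).1 ht

lemma not_pgMem_of_mem_onLine (h : IsNuclear S ℓ) (hN : IsNucleus S ℓ N) (hne : m ≠ ℓ)
    (hm : 3 ≤ #(onLine S m)) (hu : u ∈ onLine S m) : ¬pgMem u ℓ := by
  classical
  exact (mem_offLine.1 ((h.isDirectionAvoiding_insert hN).onLine_subset_offLine hne
    (hm.trans (card_le_card (onLine_mono (subset_insert N S))))
    (onLine_mono (subset_insert N S) hu))).2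

/-- `W` is the sum of the points of `S ∩ ℓ₁`, represented by vectors at which `ℓ₂.form` is `1`, so
that it takes the value `a` at the sum. -/
lemma exists_isNucleus_pgMem (h : IsNuclear S ℓ₁) (hN : IsNucleus S ℓ₁ N) (hne : ℓ₂ ≠ ℓ₁)
    (ha : (#(onLine S ℓ₁) : F) ≠ 0) (h₂ : 3 ≤ #(onLine S ℓ₂)) :
    ∃ W, pgMem W ℓ₁ ∧ IsNucleus S ℓ₂ W := by
  classical
  have hoff {u : PGPoint F} (hu : u ∈ onLine S ℓ₂) : ¬pgMem u ℓ₁ :=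
    h.not_pgMem_of_mem_onLine hN hne h₂ hu
  have hf₂ {P : PGPoint F} (hP : P ∈ onLine S ℓ₁) : ℓ₂.form P.rep ≠ 0 := fun h0 =>
    hoff (mem_onLine.2 ⟨(mem_onLine.1 hP).1, pgMem_iff_form_eq_zero.2 h0⟩) (mem_onLine.1 hP).2
  set w : Fin 3 → F := ∑ P ∈ onLine S ℓ₁, (ℓ₂.form P.rep)⁻¹ • P.rep with hw
  have hform (m : PGLine F) :
      m.form w = ∑ P ∈ onLine S ℓ₁, m.form P.rep / ℓ₂.form P.rep := by
    simp only [hw, map_sum, map_smul, smul_eq_mul, inv_mul_eq_div]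
  have hw₀ : w ≠ 0 := by
    intro hw₀
    have := hform ℓ₂
    rw [hw₀, map_zero, sum_congr rfl fun P hP => div_self (hf₂ hP), sum_const, nsmul_one] at this
    exact ha this.symm
  refine ⟨Projectivization.mk F w hw₀, ?_, fun Q hQ t ht => ?_⟩
  · rw [pgMem_mk_iff_form_eq_zero, hform]
    exact sum_eq_zero fun P hP => by
      rw [pgMem_iff_form_eq_zero.1 (mem_onLine.1 hP).2, zero_div]
  · have hQ' := mem_onLine.1 hQ
    have := (h.isPossibleTangent_insert hN (mem_offLine.2 ⟨hQ'.1, hoff hQ⟩) ht).sum_div_eq_zero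
      (h.isDirectionAvoiding_insert hN) hQ'.2 (ht.ne_of_three_le h₂)
      (h₂.trans (card_le_card (onLine_mono (subset_insert N S))))
    rwa [pgMem_mk_iff_form_eq_zero, hform, ← h.onLine_insert hN]

lemma pgMem_of_isNucleus (h₁ : IsNuclear S ℓ₁) (hN₁ : IsNucleus S ℓ₁ N₁) (h₂ : IsNuclear S ℓ₂)
    (hN₂ : IsNucleus S ℓ₂ N₂) (hne : ℓ₂ ≠ ℓ₁) (ha : (#(onLine S ℓ₁) : F) ≠ 0) :
    pgMem N₂ ℓ₁ := by
  obtain ⟨W, hWℓ₁, hW⟩ := h₁.exists_isNucleus_pgMem hN₁ hne ha h₂.three_le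
  rwa [h₂.eq_of_isNucleus hN₂ hW]

end IsNuclear

end Nuclei

section Triangles

variable {T : Finset (PGPoint F)} {A B C : PGPoint F} {ℓ a b c : PGLine F} {k : ℕ}

namespace IsDirectionAvoiding

lemma form_ne_zero (h : IsDirectionAvoiding T ℓ) (hA : A ∈ onLine T ℓ) (hB : B ∈ offLine T ℓ)
    (hAc : pgMem A c) (hBc : pgMem B c) {u : PGPoint F} (hu : u ∈ T) (huA : u ≠ A)
    (huB : u ≠ B) : c.form u.rep ≠ 0 := fun hc =>
  (h.eq_or_eq_of_pgMem hA hB hAc hBc hu (pgMem_iff_form_eq_zero.2 hc)).elim huA huB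

lemma form_div_form_of_isTriangle (h : IsDirectionAvoiding T ℓ) (hABC : IsTriangle A B C a b c)
    (hA : A ∈ onLine T ℓ) (hB : B ∈ offLine T ℓ) {u : PGPoint F} (hu : u ∈ onLine T ℓ)
    (huA : u ≠ A) :
    b.form u.rep / c.form u.rep =
      -(ℓ.form C.rep * b.form B.rep / (ℓ.form B.rep * c.form C.rep)) := by
  have hcu : c.form u.rep ≠ 0 := by
    refine h.form_ne_zero hA hB hABC.pgMem₁₃ hABC.pgMem₂₃ (mem_onLine.1 hu).1 huA ?_
    rintro rfl
    exact (mem_offLine.1 hB).2 (mem_onLine.1 hu).2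
  have hBℓ := form_ne_zero_of_mem_offLine hB
  have hAb := pgMem_iff_form_eq_zero.1 hABC.pgMem₁₂
  have hAc := pgMem_iff_form_eq_zero.1 hABC.pgMem₁₃
  have hBc := pgMem_iff_form_eq_zero.1 hABC.pgMem₂₃
  have hCb := pgMem_iff_form_eq_zero.1 hABC.pgMem₃₂
  have hCc := mt pgMem_iff_form_eq_zero.2 hABC.not_pgMem₃
  have hAℓ := pgMem_iff_form_eq_zero.1 (mem_onLine.1 hA).2
  have huℓ := pgMem_iff_form_eq_zero.1 (mem_onLine.1 hu).2
  have hrel := LinearMap.congr_fun (hABC.dual_eq_zero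
    (g := (ℓ.form B.rep * c.form C.rep) • b.form + (ℓ.form C.rep * b.form B.rep) • c.form -
      (b.form B.rep * c.form C.rep) • ℓ.form)
    (by simp [hAb, hAc, hAℓ]) (by simp [hBc]; ring) (by simp [hCb]; ring)) u.rep
  simp only [LinearMap.sub_apply, LinearMap.add_apply, LinearMap.smul_apply, smul_eq_mul, huℓ,
    mul_zero, sub_zero, LinearMap.zero_apply] at hrel
  field_simp
  linear_combination hrel

lemma prod_div_form_eq_neg_div [DecidableEq (PGPoint F)] (h : IsDirectionAvoiding T ℓ)
    (hA : A ∈ onLine T ℓ) (hB : B ∈ offLine T ℓ) (hC : C ∈ offLine T ℓ) (hAb : pgMem A b)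
    (hCb : pgMem C b) (hBb : ¬pgMem B b) :
    ∏ u ∈ ((offLine T ℓ).erase C).erase B, b.form u.rep / ℓ.form u.rep =
      -(ℓ.form B.rep / b.form B.rep) := by
  have hBC : B ≠ C := by
    rintro rfl
    exact hBb hCb
  have hBℓ := form_ne_zero_of_mem_offLine hB
  rw [pgMem_iff_form_eq_zero] at hAb hCb hBb
  have hprod := h.prod_div_form_eq_neg_one hA hC b.form_ne_zero hAb hCb
  rw [← mul_prod_erase _ _ (mem_erase.2 ⟨hBC, hB⟩)] at hprod
  field_simp at hprod ⊢
  exact hprod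

lemma prod_form_div_form_of_isTriangle [DecidableEq (PGPoint F)] (h : IsDirectionAvoiding T ℓ)
    (hk : #(onLine T ℓ) = k + 2) (hABC : IsTriangle A B C a b c) (hA : A ∈ onLine T ℓ)
    (hB : B ∈ offLine T ℓ) (hC : C ∈ offLine T ℓ) :
    ∏ u ∈ T \ {A, B, C}, b.form u.rep / c.form u.rep =
      -(-(ℓ.form C.rep * b.form B.rep / (ℓ.form B.rep * c.form C.rep))) ^ k := by
  have hon := prod_congr rfl fun u hu =>
    h.form_div_form_of_isTriangle hABC hA hB (mem_of_mem_erase hu) (ne_of_mem_erase hu)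
  rw [prod_const, card_erase_of_mem hA, hk] at hon
  have hb := h.prod_div_form_eq_neg_div hA hB hC hABC.pgMem₁₂ hABC.pgMem₃₂ hABC.not_pgMem₂
  have hc := h.prod_div_form_eq_neg_div hA hC hB hABC.pgMem₁₃ hABC.pgMem₂₃ hABC.not_pgMem₃
  rw [erase_right_comm] at hb
  have hoff : ∏ u ∈ ((offLine T ℓ).erase B).erase C, b.form u.rep / c.form u.rep =
      ℓ.form B.rep * c.form C.rep / (ℓ.form C.rep * b.form B.rep) := by
    have hℓ (u) (hu : u ∈ ((offLine T ℓ).erase B).erase C) : ℓ.form u.rep ≠ 0 :=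
      form_ne_zero_of_mem_offLine (mem_of_mem_erase (mem_of_mem_erase hu))
    rw [prod_congr rfl fun u hu => (div_div_div_cancel_right₀ (hℓ u hu) _ _).symm,
      prod_div_distrib, hb, hc, neg_div_neg_eq, div_div_div_eq, mul_comm (b.form B.rep)]
  have hBb := mt pgMem_iff_form_eq_zero.2 hABC.not_pgMem₂
  have hCc := mt pgMem_iff_form_eq_zero.2 hABC.not_pgMem₃
  have hBℓ := form_ne_zero_of_mem_offLine hB
  have hCℓ := form_ne_zero_of_mem_offLine hC
  rw [prod_sdiff_triple hA hB hC, hon, hoff, Nat.add_succ_sub_one, pow_succ]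
  field_simp

variable {ℓs : Fin 3 → PGLine F} {P : Fin 3 → PGPoint F}

lemma exists_isTriangle (h : ∀ i, IsDirectionAvoiding T (ℓs i))
    (hon : ∀ i, P i ∈ onLine T (ℓs i)) (hoff : ∀ i j, i ≠ j → P i ∈ offLine T (ℓs j)) :
    ∃ a b c, IsTriangle (P 0) (P 1) (P 2) a b c := by
  have hne {i j : Fin 3} (hij : i ≠ j) : P i ≠ P j := fun e =>
    (mem_offLine.1 (hoff i j hij)).2 (e ▸ (mem_onLine.1 (hon j)).2)
  have hside {i j k : Fin 3} (hij : i ≠ j) (hik : i ≠ k) (hjk : j ≠ k) {m : PGLine F}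
      (hj : pgMem (P j) m) (hk : pgMem (P k) m) : ¬pgMem (P i) m := fun hi =>
    (h j).form_ne_zero (hon j) (hoff k j hjk.symm) hj hk (mem_onLine.1 (hon i)).1 (hne hij)
      (hne hik) (pgMem_iff_form_eq_zero.1 hi)
  obtain ⟨a, ha₁, ha₂⟩ := exists_pgMem_pgMem (P 1) (P 2)
  obtain ⟨b, hb₂, hb₀⟩ := exists_pgMem_pgMem (P 2) (P 0)
  obtain ⟨c, hc₀, hc₁⟩ := exists_pgMem_pgMem (P 0) (P 1)
  exact ⟨a, b, c, hb₀, hc₀, ha₁, hc₁, ha₂, hb₂, hside (by decide) (by decide) (by decide) ha₁ ha₂,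
    hside (by decide) (by decide) (by decide) hb₂ hb₀,
    hside (by decide) (by decide) (by decide) hc₀ hc₁⟩

/-- Multiply the three instances of `prod_form_div_form_of_isTriangle`: the forms of the sides of
the triangle cancel. -/
lemma pow_eq_neg_one (h : ∀ i, IsDirectionAvoiding T (ℓs i))
    (hk : ∀ i, #(onLine T (ℓs i)) = k + 2) (hon : ∀ i, P i ∈ onLine T (ℓs i))
    (hoff : ∀ i j, i ≠ j → P i ∈ offLine T (ℓs j)) :
    (-((ℓs 0).form (P 2).rep * (ℓs 2).form (P 1).rep /
      ((ℓs 0).form (P 1).rep * (ℓs 1).form (P 2).rep)) *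
      ((ℓs 1).form (P 0).rep / (ℓs 2).form (P 0).rep)) ^ k = -1 := by
  classical
  obtain ⟨a, b, c, hP⟩ := exists_isTriangle h hon hoff
  have h₀ := (h 0).prod_form_div_form_of_isTriangle (hk 0) hP (hon 0) (hoff 1 0 (by decide))
    (hoff 2 0 (by decide))
  have h₁ := (h 1).prod_form_div_form_of_isTriangle (hk 1) hP.rotate (hon 1)
    (hoff 2 1 (by decide)) (hoff 0 1 (by decide))
  have h₂ := (h 2).prod_form_div_form_of_isTriangle (hk 2) hP.rotate.rotate (hon 2)
    (hoff 0 2 (by decide)) (hoff 1 2 (by decide))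
  have hrot (A B C : PGPoint F) : ({B, C, A} : Finset (PGPoint F)) = {A, B, C} := by
    ext u
    simp only [mem_insert, mem_singleton]
    tauto
  rw [hrot] at h₁
  rw [hrot, hrot] at h₂
  have hcancel : _ * _ * _ = _ * _ * _ := congrArg₂ (· * ·) (congrArg₂ (· * ·) h₀ h₁) h₂
  rw [← prod_mul_distrib, ← prod_mul_distrib, prod_eq_one fun u hu => ?_] at hcancel
  · have hA := mt pgMem_iff_form_eq_zero.2 hP.not_pgMem₁
    have hB := mt pgMem_iff_form_eq_zero.2 hP.not_pgMem₂
    have hC := mt pgMem_iff_form_eq_zero.2 hP.not_pgMem₃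
    rw [neg_mul_neg, mul_neg, ← mul_pow, ← mul_pow, eq_comm, neg_eq_iff_eq_neg] at hcancel
    rw [← hcancel]
    congr 1
    field_simp
  · simp only [mem_sdiff, mem_insert, mem_singleton, not_or] at hu
    obtain ⟨huT, hu₀, hu₁, hu₂⟩ := hu
    have ha := (h 1).form_ne_zero (hon 1) (hoff 2 1 (by decide)) hP.pgMem₂₁ hP.pgMem₃₁ huT hu₁ hu₂
    have hb := (h 2).form_ne_zero (hon 2) (hoff 0 2 (by decide)) hP.pgMem₃₂ hP.pgMem₁₂ huT hu₂ hu₀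
    have hc := (h 0).form_ne_zero (hon 0) (hoff 1 0 (by decide)) hP.pgMem₁₃ hP.pgMem₂₃ huT hu₀ hu₁
    field_simp

/-- With two points fixed, the point on the third line yields `k + 2` values with `k`-th power `-1`,
hence two of them agree; but then the three lines are concurrent and the value is `1`. -/
lemma two_eq_zero_of_injective (hℓs : Function.Injective ℓs) (h : ∀ i, IsDirectionAvoiding T (ℓs i))
    (hk : ∀ i, #(onLine T (ℓs i)) = k + 2) (hk₀ : 0 < k) : (2 : F) = 0 := by
  classical
  have hoff {i j : Fin 3} (hij : i ≠ j) : onLine T (ℓs i) ⊆ offLine T (ℓs j) :=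
    (h j).onLine_subset_offLine (hℓs.ne hij) (by rw [hk]; omega)
  have hnonempty (i : Fin 3) : (onLine T (ℓs i)).Nonempty := card_pos.1 (by rw [hk]; omega)
  obtain ⟨B, hB⟩ := hnonempty 1
  obtain ⟨C, hC⟩ := hnonempty 2
  set c := -((ℓs 0).form C.rep * (ℓs 2).form B.rep /
    ((ℓs 0).form B.rep * (ℓs 1).form C.rep)) with hc
  have hpow (A) (hA : A ∈ onLine T (ℓs 0)) :
      (c * ((ℓs 1).form A.rep / (ℓs 2).form A.rep)) ^ k = -1 := by
    have hon (i : Fin 3) : ![A, B, C] i ∈ onLine T (ℓs i) := by fin_cases i <;> assumption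
    exact pow_eq_neg_one h hk hon fun i j hij => hoff hij (hon i)
  obtain ⟨A, hA, A', hA', hne, heq⟩ :=
    exists_ne_map_eq_of_forall_pow_eq hk₀ (by rw [hk]; omega) hpow
  have hzero {i : Fin 3} {u : PGPoint F} (hu : u ∈ onLine T (ℓs i)) : (ℓs i).form u.rep = 0 :=
    pgMem_iff_form_eq_zero.1 (mem_onLine.1 hu).2
  have hform {i j : Fin 3} (hij : i ≠ j) {u : PGPoint F} (hu : u ∈ onLine T (ℓs i)) :
      (ℓs j).form u.rep ≠ 0 := form_ne_zero_of_mem_offLine (hoff hij hu)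
  have hc₀ : c ≠ 0 := neg_ne_zero.2 <| div_ne_zero
    (mul_ne_zero (hform (by decide) hC) (hform (by decide) hB))
    (mul_ne_zero (hform (by decide) hB) (hform (by decide) hC))
  have hone := neg_mul_div_eq_one_of_concurrent hne (ℓs 0).form_ne_zero (hzero hA) (hzero hA')
    (hzero hB) (hzero hC) (hform (by decide) hA) (hform (by decide) hA') (hform (by decide) hB)
    (hform (by decide) hC) (mul_left_cancel₀ hc₀ heq)
  have hneg := hpow A hA
  rw [hc, hone, one_pow] at hneg
  linear_combination hneg

end IsDirectionAvoiding

end Triangles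

section Main

variable {S : Finset (PGPoint F)} {N N₁ N₂ : PGPoint F} {ℓ₁ ℓ₂ ℓ₃ m : PGLine F} {k : ℕ}

namespace IsNuclear

lemma of_nsec_eq (hk : 3 ≤ k) (hS : (S : Set (PGPoint F)).ncard = Fintype.card F - 1 + k)
    (hm : nsec (S : Set (PGPoint F)) m = k) (htan : ∀ P ∈ S, pgMem P m →
      ∃! t : PGLine F, pgMem P t ∧ nsec (S : Set (PGPoint F)) t = 1) : IsNuclear S m := by
  rw [nsec_coe] at hm
  rw [Set.ncard_coe_finset, ← card_onLine_add_card_offLine (ℓ := m), hm] at hS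
  refine ⟨?_, hm.symm ▸ hk, fun P hP => ?_⟩
  · have := Fintype.card_pos (α := F)
    omega
  · obtain ⟨t, ht, huniq⟩ := htan P (mem_onLine.1 hP).1 (mem_onLine.1 hP).2
    exact ⟨t, ht.1, ht.2, huniq⟩

lemma two_eq_zero (h₁ : IsNuclear S ℓ₁) (h₂ : IsNuclear S ℓ₂) (h₃ : IsNuclear S ℓ₃)
    (hN : IsNucleus S ℓ₁ N) (h₁₂ : ℓ₁ ≠ ℓ₂) (h₃₁ : ℓ₃ ≠ ℓ₁) (h₃₂ : ℓ₃ ≠ ℓ₂)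
    (hk₁ : #(onLine S ℓ₁) = k) (hk₂ : #(onLine S ℓ₂) = k) (hk₃ : #(onLine S ℓ₃) = k)
    (hk₀ : (k : F) = 0) : (2 : F) = 0 := by
  classical
  have hℓ : Function.Injective ![ℓ₁, ℓ₂, ℓ₃] := by
    intro i j
    fin_cases i <;> fin_cases j <;> simp [h₁₂, h₁₂.symm, h₃₁, h₃₁.symm, h₃₂, h₃₂.symm]
  have hs (i : Fin 3) : IsNuclear S (![ℓ₁, ℓ₂, ℓ₃] i) ∧ #(onLine S (![ℓ₁, ℓ₂, ℓ₃] i)) = k := by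
    fin_cases i
    exacts [⟨h₁, hk₁⟩, ⟨h₂, hk₂⟩, ⟨h₃, hk₃⟩]
  have hN (i : Fin 3) : IsNucleus S (![ℓ₁, ℓ₂, ℓ₃] i) N :=
    h₁.isNucleus_of_natCast_eq_zero hN (by rw [hk₁, hk₀]) _
  have hk : 3 ≤ k := hk₁ ▸ h₁.three_le
  refine IsDirectionAvoiding.two_eq_zero_of_injective hℓ
    (fun i => (hs i).1.isDirectionAvoiding_insert (hN i)) (k := k - 2) (fun i => ?_) (by omega)
  rw [(hs i).1.onLine_insert (hN i), (hs i).2]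
  omega

lemma ne_and_pgMem_and_pgMem (h₁ : IsNuclear S ℓ₁) (h₂ : IsNuclear S ℓ₂) (h₃ : IsNuclear S ℓ₃)
    (hN₁ : IsNucleus S ℓ₁ N₁) (hN₂ : IsNucleus S ℓ₂ N₂) (h₁₂ : ℓ₁ ≠ ℓ₂) (h₃₁ : ℓ₃ ≠ ℓ₁)
    (h₃₂ : ℓ₃ ≠ ℓ₂) (hk₁ : (#(onLine S ℓ₁) : F) ≠ 0) (hk₂ : (#(onLine S ℓ₂) : F) ≠ 0)
    (hk₃ : (#(onLine S ℓ₃) : F) ≠ 0) : N₁ ≠ N₂ ∧ pgMem N₁ ℓ₃ ∧ pgMem N₂ ℓ₃ := by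
  obtain ⟨N₃, -, hN₃⟩ := h₁.exists_isNucleus_pgMem hN₁ h₃₁ hk₁ h₃.three_le
  refine ⟨?_, h₃.pgMem_of_isNucleus hN₃ h₁ hN₁ h₃₁.symm hk₃,
    h₃.pgMem_of_isNucleus hN₃ h₂ hN₂ h₃₂.symm hk₃⟩
  rintro rfl
  exact h₂.not_pgMem_of_isNucleus hN₂ (h₂.pgMem_of_isNucleus hN₂ h₁ hN₁ h₁₂ hk₂)

end IsNuclear

end Main

end Plane

/-- Let `S` be a set of `q − 1 + a` points in `PG(2,q)`, `q = p^h`, `a ≥ 3`, and let `ℓ₁, ℓ₂` be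
(distinct) `a`-secants of `S` such that at each point of `S ∩ ℓᵢ` there is a unique tangent
to `S`, with nuclei `N₁, N₂`.  Then:
(1) either `N₁ ∈ ℓ₂` and `N₂ ∈ ℓ₁`, or
(2) `N₁ = N₂`, `p ∣ a`, and every unique tangent at a point of `S` passes through `N₁ = N₂`;
(3) if `ℓ₃` is a further `a`-secant of `S` with a unique tangent at each point of `S ∩ ℓ₃`
    and `q` or `a` is odd, then `ℓ₃` is the line `N₁N₂` (in particular `N₁ ≠ N₂`, so `ℓ₃` is
    uniquely determined). -/
theorem stmt_16 {F : Type*} [Field F] [Fintype F] (p h q : ℕ) (hp : p.Prime) (hq : q = p ^ h)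
    (hcard : Fintype.card F = q)
    (a : ℕ) (ha : 3 ≤ a)
    (S : Set (PGPoint F)) (hsize : S.ncard = q - 1 + a)
    (ℓ₁ ℓ₂ : PGLine F) (hne : ℓ₁ ≠ ℓ₂)
    (h₁ : nsec S ℓ₁ = a) (h₂ : nsec S ℓ₂ = a)
    (htan₁ : ∀ P ∈ S, pgMem P ℓ₁ → ∃! t : PGLine F, pgMem P t ∧ nsec S t = 1)
    (htan₂ : ∀ P ∈ S, pgMem P ℓ₂ → ∃! t : PGLine F, pgMem P t ∧ nsec S t = 1)
    (N₁ N₂ : PGPoint F)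
    (hN₁ : ∀ P ∈ S, pgMem P ℓ₁ → ∀ t : PGLine F, pgMem P t → nsec S t = 1 → pgMem N₁ t)
    (hN₂ : ∀ P ∈ S, pgMem P ℓ₂ → ∀ t : PGLine F, pgMem P t → nsec S t = 1 → pgMem N₂ t) :
    ((pgMem N₁ ℓ₂ ∧ pgMem N₂ ℓ₁) ∨
      (N₁ = N₂ ∧ p ∣ a ∧
        ∀ R ∈ S, ∀ r : PGLine F,
          (pgMem R r ∧ nsec S r = 1 ∧ ∀ t : PGLine F, pgMem R t ∧ nsec S t = 1 → t = r) →
          pgMem N₁ r)) ∧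
    (∀ ℓ₃ : PGLine F, ℓ₃ ≠ ℓ₁ → ℓ₃ ≠ ℓ₂ → nsec S ℓ₃ = a →
      (∀ P ∈ S, pgMem P ℓ₃ → ∃! t : PGLine F, pgMem P t ∧ nsec S t = 1) →
      (Odd q ∨ Odd a) →
      N₁ ≠ N₂ ∧ pgMem N₁ ℓ₃ ∧ pgMem N₂ ℓ₃) := by
  subst hcard
  obtain ⟨S, rfl⟩ := (Set.toFinite S).exists_finset_coe
  have hNuc {ℓ : PGLine F} (hℓ) (htan) : IsNuclear S ℓ := .of_nsec_eq ha hsize hℓ htan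
  have hn₁ := hNuc h₁ htan₁
  have hn₂ := hNuc h₂ htan₂
  replace hN₁ : IsNucleus S ℓ₁ N₁ := .of_nsec_eq_one hN₁
  replace hN₂ : IsNucleus S ℓ₂ N₂ := .of_nsec_eq_one hN₂
  rw [nsec_coe] at h₁ h₂
  by_cases ha₀ : (a : F) = 0
  · have := Fact.mk hp
    have := charP_of_card_eq_prime_pow hq
    have hk₁ : (#(onLine S ℓ₁) : F) = 0 := by rw [h₁, ha₀]
    refine ⟨.inr ⟨hn₂.eq_of_isNucleus (hn₁.isNucleus_of_natCast_eq_zero hN₁ hk₁ ℓ₂) hN₂,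
      (CharP.cast_eq_zero_iff F p a).1 ha₀,
      fun R hR r hr => hn₁.pgMem_of_isUniqueTangent hN₁ hk₁ hR hr⟩, ?_⟩
    intro ℓ₃ h₃₁ h₃₂ h₃ htan₃ hodd
    refine absurd (hn₁.two_eq_zero hn₂ (hNuc h₃ htan₃) hN₁ hne h₃₁ h₃₂ h₁ h₂
      (nsec_coe.symm.trans h₃) ha₀) <| hodd.elim
      (two_ne_zero_of_odd_of_natCast_eq_zero · (Nat.cast_card_eq_zero F))
      (two_ne_zero_of_odd_of_natCast_eq_zero · ha₀)
  · have hk {ℓ : PGLine F} (hℓ : #(onLine S ℓ) = a) : (#(onLine S ℓ) : F) ≠ 0 := by rwa [hℓ]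
    refine ⟨.inl ⟨hn₂.pgMem_of_isNucleus hN₂ hn₁ hN₁ hne (hk h₂),
      hn₁.pgMem_of_isNucleus hN₁ hn₂ hN₂ hne.symm (hk h₁)⟩, fun ℓ₃ h₃₁ h₃₂ h₃ htan₃ _ => ?_⟩
    exact hn₁.ne_and_pgMem_and_pgMem hn₂ (hNuc h₃ htan₃) hN₁ hN₂ hne h₃₁ h₃₂ (hk h₁) (hk h₂)
      (hk (nsec_coe.symm.trans h₃))
end

section
/- Let S be a set of q − 1 + a points in PG(2,q) with a ≥ 3, and suppose ℓ is an a-secant of S such that there is a unique tangent to S at each point of S ∩ ℓ; let N_ℓ be the nucleus of ℓ. If there is a point of S contained in no tangent to S, then p divides a. Moreover, if a = 3 and there are two points of S each contained in no tangent to S, then the line determined by these two points contains N_ℓ. -/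
/-!
Take the nucleus as the origin of an affine plane with `ℓ` at infinity. For each direction `r i` of
a point of `S ∩ ℓ`, the `q - 1` affine points `u k` of `S` then meet each of the `q - 1` lines of
direction `r i` off the origin exactly once, so Wilson's theorem gives
`∏_{k ≠ t} det(r i, u k - u t) = 1 / det(r i, u t)`. If `u t` is on no tangent, this product
vanishes when `r i` is replaced by any other direction. The coordinates of
`(∏_{k ≠ t} det(v, u k - u t)) • v` are polynomials of degree `q - 1` in `v`, so they sum to `0`
over all `v` in the plane; this leaves `∑ i, r i / det(r i, u t) = 0`. Applying `det(·, u t)` gives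
`a = 0` in the field, and for `a = 3` the relation confines `u t` to a fixed line through the
origin.
-/

open Finset Module

section FiniteFieldSums

variable {F V M X ι : Type*} [Field F] [AddCommGroup V] [Module F V] [AddCommGroup M] [Module F M]

theorem sum_eq_neg_sum_of_smul_invariant [Finite F] [Fintype ι] [Fintype X] [SMul Fˣ X]
    {r : ι → X} (hr : Function.Injective fun y : ι × Fˣ => y.2 • r y.1)
    {G : X → M} (hG : ∀ (c : Fˣ) x, G (c • x) = G x)
    (hsupp : ∀ x, G x ≠ 0 → ∃ i, ∃ c : Fˣ, c • r i = x) :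
    ∑ x, G x = -∑ i, G (r i) := by
  classical
  have := Fintype.ofFinite F
  calc ∑ x, G x = ∑ y : ι × Fˣ, G (r y.1) := by
        refine (Fintype.sum_of_injective _ hr _ _ (fun x hx => ?_) fun y => (hG y.2 _).symm).symm
        by_contra hGx
        obtain ⟨i, c, rfl⟩ := hsupp x hGx
        exact hx ⟨(i, c), rfl⟩
    _ = (Fintype.card Fˣ : F) • ∑ i, G (r i) := by
        simp only [Fintype.sum_prod_type, sum_const, card_univ, smul_sum, Nat.cast_smul_eq_nsmul]
    _ = -∑ i, G (r i) := by
        rw [Fintype.card_units, Nat.cast_pred Fintype.card_pos, FiniteField.cast_card_eq_zero,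
          zero_sub, neg_one_smul]

variable [Fintype F] [Fintype V]

theorem sum_prod_dual_eq_zero (s : Finset ι) (f : ι → Dual F V)
    (hs : #s < (Fintype.card F - 1) * finrank F V) : ∑ v, ∏ i ∈ s, f i v = 0 := by
  let b := finBasis F V
  let P : ι → MvPolynomial (Fin (finrank F V)) F :=
    fun i => (f i).toMvPolynomial b (Basis.singleton Unit F) ()
  have eval_P (i : ι) (v : V) : MvPolynomial.eval (b.equivFun v) (P i) = f i v := by
    simpa using (f i).toMvPolynomial_eval_eq_apply b (Basis.singleton Unit F) () (b.repr v)
  have degree_lt : (∏ i ∈ s, P i).totalDegree < (Fintype.card F - 1) * finrank F V :=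
    calc (∏ i ∈ s, P i).totalDegree ≤ ∑ i ∈ s, (P i).totalDegree :=
          MvPolynomial.totalDegree_finsetProd _ _
      _ ≤ ∑ _i ∈ s, 1 := sum_le_sum fun i _ => LinearMap.toMvPolynomial_totalDegree_le _ _ _ _
      _ = #s := by simp
      _ < _ := hs
  calc ∑ v, ∏ i ∈ s, f i v = ∑ v, MvPolynomial.eval (b.equivFun v) (∏ i ∈ s, P i) := by
        simp only [map_prod, eval_P]
    _ = ∑ x, MvPolynomial.eval x (∏ i ∈ s, P i) :=
        b.equivFun.toEquiv.sum_comp fun x => MvPolynomial.eval x (∏ i ∈ s, P i)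
    _ = 0 := MvPolynomial.sum_eval_eq_zero _ (by simpa using degree_lt)

theorem sum_prod_dual_smul_eq_zero (s : Finset ι) (f : ι → Dual F V)
    (hs : #s + 1 < (Fintype.card F - 1) * finrank F V) : ∑ v, (∏ i ∈ s, f i v) • v = 0 := by
  refine (forall_dual_apply_eq_zero_iff F _).1 fun g => ?_
  have hg := sum_prod_dual_eq_zero (insertNone s) (fun i => i.elim g f) (by simpa using hs)
  simpa only [prod_insertNone, Option.elim, map_sum, map_smul, smul_eq_mul, mul_comm] using hg

theorem prod_units_erase_sub_eq_inv [DecidableEq F] (τ : Fˣ) :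
    ∏ c ∈ univ.erase τ, ((c : F) - τ) = (τ : F)⁻¹ := by
  let valEmb : Fˣ ↪ F := ⟨Units.val, Units.val_injective⟩
  have map_univ : univ.map valEmb = univ.erase 0 := by
    ext x
    simp [valEmb, ← isUnit_iff_ne_zero, IsUnit]
  have prod_nonzero : ∏ x ∈ univ.erase (0 : F), x = -1 := by
    simp [← map_univ, valEmb, ← Units.coe_prod, FiniteField.prod_univ_units_id_eq_neg_one]
  have prod_shift : ∏ c ∈ univ.erase (τ : F), (c - τ) = -1 := by
    rw [← prod_nonzero]
    exact prod_equiv (Equiv.subRight (τ : F)) (by simp [sub_eq_zero]) (by simp)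
  have map_erase : (univ.erase τ).map valEmb = (univ.erase (τ : F)).erase 0 := by
    rw [map_erase, map_univ, erase_right_comm]; rfl
  rw [← mul_prod_erase _ _ (by simp [τ.ne_zero.symm] : 0 ∈ univ.erase (τ : F)), ← map_erase,
    prod_map, zero_sub, neg_mul, neg_inj] at prod_shift
  exact eq_inv_of_mul_eq_one_right prod_shift

end FiniteFieldSums

section PlaneDet

variable {R : Type*} [CommRing R]

/-- The determinant of two vectors of the plane, as a bilinear form; it vanishes when the vectors
are parallel, and the lines of direction `d` are its level sets `planeDet d x = c`. -/
def planeDet : (Fin 2 → R) →ₗ[R] (Fin 2 → R) →ₗ[R] R :=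
  LinearMap.mk₂ R (fun v w => v 0 * w 1 - v 1 * w 0)
    (fun _ _ _ => by simp only [Pi.add_apply]; ring)
    (fun _ _ _ => by simp only [Pi.smul_apply, smul_eq_mul]; ring)
    (fun _ _ _ => by simp only [Pi.add_apply]; ring)
    (fun _ _ _ => by simp only [Pi.smul_apply, smul_eq_mul]; ring)

theorem planeDet_apply (v w : Fin 2 → R) : planeDet v w = v 0 * w 1 - v 1 * w 0 := rfl

theorem planeDet_self (v : Fin 2 → R) : planeDet v v = 0 := by
  rw [planeDet_apply]; ring

theorem neg_planeDet (v w : Fin 2 → R) : -planeDet v w = planeDet w v := by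
  rw [planeDet_apply, planeDet_apply]; ring

theorem exists_planeDet_ne_zero {v : Fin 2 → R} (hv : v ≠ 0) : ∃ w, planeDet v w ≠ 0 := by
  by_contra! h
  refine hv (funext (Fin.forall_fin_two.2 ⟨?_, ?_⟩))
  · simpa [planeDet_apply] using h ![0, 1]
  · simpa [planeDet_apply] using h ![1, 0]

theorem exists_smul_eq_of_planeDet_eq_zero {F : Type*} [Field F] {v w : Fin 2 → F}
    (hv : v ≠ 0) (h : planeDet v w = 0) : ∃ c : F, c • v = w := by
  by_contra! hvw
  have hli := (LinearIndependent.pair_iff' hv).2 hvw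
  have hdet := (Matrix.linearIndependent_rows_iff_isUnit (A := Matrix.of ![v, w])).1 hli
  rw [Matrix.isUnit_iff_isUnit_det, Matrix.det_fin_two, isUnit_iff_ne_zero] at hdet
  exact hdet h

end PlaneDet

section Affine

variable {F ι κ : Type*} [Field F]

/-- The affine form of a nucleus. For points at infinity with direction vectors `r i` and `q - 1`
affine points `u k`, every affine line through a point at infinity that misses the origin contains
some `u k`; only the lines through the origin can be tangents there. -/
structure OriginIsNucleus (r : ι → Fin 2 → F) (u : κ → Fin 2 → F) : Prop where
  card_eq : Nat.card κ = Nat.card Fˣ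
  pairwise : Pairwise fun i j => planeDet (r i) (r j) ≠ 0
  exists_planeDet_eq : ∀ i (c : Fˣ), ∃ k, planeDet (r i) (u k) = c

/-- Every affine line through `u t`, except those through a point at infinity `r i`, contains a
further point `u k`. This is how a point contained in no tangent appears in affine coordinates. -/
def DeterminesOtherDirections (r : ι → Fin 2 → F) (u : κ → Fin 2 → F) (t : κ) : Prop :=
  ∀ d ≠ 0, (∀ i, planeDet d (r i) ≠ 0) → ∃ k ≠ t, planeDet d (u k) = planeDet d (u t)

namespace OriginIsNucleus

variable {r : ι → Fin 2 → F} {u : κ → Fin 2 → F} {t : κ}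

theorem direction_ne_zero (h : OriginIsNucleus r u) (i : ι) : r i ≠ 0 := by
  intro hi
  obtain ⟨k, hk⟩ := h.exists_planeDet_eq i 1
  simp [hi] at hk

theorem injective_units_smul (h : OriginIsNucleus r u) :
    Function.Injective fun x : ι × Fˣ => x.2 • r x.1 := by
  rintro ⟨i, c⟩ ⟨j, d⟩ hij
  obtain rfl : i = j := by
    by_contra hne
    have := congrArg (planeDet (r i)) hij
    simp [Units.smul_def, planeDet_self, h.pairwise hne] at this
  simpa [Units.smul_def, h.direction_ne_zero, Units.ext_iff] using hij

theorem exists_equiv_planeDet_eq [Finite κ] (h : OriginIsNucleus r u) (i : ι) :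
    ∃ e : Fˣ ≃ κ, ∀ c, planeDet (r i) (u (e c)) = c := by
  choose e he using h.exists_planeDet_eq i
  have e_inj : Function.Injective e := fun c d hcd => Units.ext <| by rw [← he c, ← he d, hcd]
  exact ⟨.ofBijective e (e_inj.bijective_of_nat_card_le h.card_eq.le), he⟩

theorem planeDet_ne_zero [Finite κ] (h : OriginIsNucleus r u) (i : ι) (t : κ) :
    planeDet (r i) (u t) ≠ 0 := by
  obtain ⟨e, he⟩ := h.exists_equiv_planeDet_eq i
  obtain ⟨τ, rfl⟩ := e.surjective t
  exact he τ ▸ τ.ne_zero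

theorem prod_planeDet_sub_eq_inv [Finite F] [Fintype κ] [DecidableEq κ]
    (h : OriginIsNucleus r u) (i : ι) (t : κ) :
    ∏ k ∈ univ.erase t, planeDet (r i) (u k - u t) = (planeDet (r i) (u t))⁻¹ := by
  classical
  have := Fintype.ofFinite F
  obtain ⟨e, he⟩ := h.exists_equiv_planeDet_eq i
  obtain ⟨τ, rfl⟩ := e.surjective t
  rw [he, ← prod_units_erase_sub_eq_inv]
  exact (prod_equiv e (by simp) (by simp [he])).symm

theorem exists_units_smul_eq_of_prod_ne_zero [Fintype κ] [DecidableEq κ] (h : OriginIsNucleus r u)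
    (ht : DeterminesOtherDirections r u t) {v : Fin 2 → F} (hv : v ≠ 0)
    (hprod : ∏ k ∈ univ.erase t, planeDet v (u k - u t) ≠ 0) : ∃ i, ∃ c : Fˣ, c • r i = v := by
  obtain ⟨i, hi⟩ : ∃ i, planeDet v (r i) = 0 := by
    by_contra! hr
    obtain ⟨k, hkt, hk⟩ := ht v hv hr
    exact prod_ne_zero_iff.1 hprod k (mem_erase.2 ⟨hkt, mem_univ k⟩)
      (by rw [map_sub, hk, sub_self])
  obtain ⟨c, hc⟩ := exists_smul_eq_of_planeDet_eq_zero (h.direction_ne_zero i)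
    (by rw [← neg_planeDet, hi, neg_zero])
  have hc0 : c ≠ 0 := by
    rintro rfl
    exact hv (by rw [← hc, zero_smul])
  exact ⟨i, Units.mk0 c hc0, hc⟩

variable [Finite F] [Finite κ] [Fintype ι]

theorem sum_inv_planeDet_smul_eq_zero (h : OriginIsNucleus r u)
    (ht : DeterminesOtherDirections r u t) : ∑ i, (planeDet (r i) (u t))⁻¹ • r i = 0 := by
  classical
  have := Fintype.ofFinite F
  have := Fintype.ofFinite κ
  let G (v : Fin 2 → F) := (∏ k ∈ univ.erase t, planeDet v (u k - u t)) • v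
  have card_units : #(univ.erase t) + 1 = Fintype.card F - 1 := by
    rw [card_erase_add_one (mem_univ t), card_univ, ← Nat.card_eq_fintype_card, h.card_eq,
      Nat.card_units, Nat.card_eq_fintype_card]
  have sum_G : ∑ v, G v = 0 :=
    sum_prod_dual_smul_eq_zero (univ.erase t) (fun k => planeDet.flip (u k - u t))
      (by rw [finrank_fin_fun]; omega)
  have G_smul (c : Fˣ) (v : Fin 2 → F) : G (c • v) = G v := by
    have hc : (c : F) ^ (#(univ.erase t) + 1) = 1 := by
      rw [card_units, FiniteField.pow_card_sub_one_eq_one _ c.ne_zero]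
    simp only [G, Units.smul_def, map_smul, LinearMap.smul_apply, smul_eq_mul, prod_mul_distrib,
      prod_const, smul_smul]
    rw [mul_right_comm, ← pow_succ, hc, one_mul]
  have G_supp (v : Fin 2 → F) (hv : G v ≠ 0) : ∃ i, ∃ c : Fˣ, c • r i = v :=
    h.exists_units_smul_eq_of_prod_ne_zero ht (smul_ne_zero_iff.1 hv).2 (smul_ne_zero_iff.1 hv).1
  rw [sum_eq_neg_sum_of_smul_invariant h.injective_units_smul G_smul G_supp, neg_eq_zero] at sum_G
  simpa only [G, h.prod_planeDet_sub_eq_inv] using sum_G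

theorem cast_card_eq_zero (h : OriginIsNucleus r u) (ht : DeterminesOtherDirections r u t) :
    (Fintype.card ι : F) = 0 := by
  simpa [h.planeDet_ne_zero] using
    congrArg (planeDet.flip (u t)) (h.sum_inv_planeDet_smul_eq_zero ht)

theorem exists_planeDet_eq_zero_of_card_eq_three (h : OriginIsNucleus r u)
    (hι : Fintype.card ι = 3) :
    ∃ w ≠ 0, ∀ t, DeterminesOtherDirections r u t → planeDet w (u t) = 0 := by
  classical
  obtain ⟨x, y, z, hxy, hxz, hyz, huniv⟩ := card_eq_three.1 (card_univ.trans hι)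
  -- Clearing denominators in `det(x, y) / det(y, t) + det(x, z) / det(z, t) = 0` makes it linear
  -- in `t`.
  refine ⟨planeDet (r x) (r y) • r z + planeDet (r x) (r z) • r y, fun hw => ?_, fun t ht => ?_⟩
  · have := congrArg (planeDet (r y)) hw
    simp [planeDet_self, h.pairwise hxy, h.pairwise hyz] at this
  · have relation : (planeDet (r y) (u t))⁻¹ * planeDet (r x) (r y) +
        (planeDet (r z) (u t))⁻¹ * planeDet (r x) (r z) = 0 := by
      simpa [huniv, hxy, hxz, hyz, planeDet_self] using
        congrArg (planeDet (r x)) (h.sum_inv_planeDet_smul_eq_zero ht)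
    have hy := h.planeDet_ne_zero y t
    have hz := h.planeDet_ne_zero z t
    field_simp at relation
    simp only [map_add, map_smul, LinearMap.add_apply, LinearMap.smul_apply, smul_eq_mul]
    linear_combination relation

end OriginIsNucleus

end Affine

section Lines

variable {F : Type*} [Field F]

theorem pgMem_iff_rep_mem {P : PGPoint F} {L : PGLine F} : pgMem P L ↔ P.rep ∈ L.val := by
  rw [pgMem, Projectivization.submodule_eq, Submodule.span_singleton_le_iff_mem]

theorem pgPoint_eq_of_smul_rep_eq {P Q : PGPoint F} {c : F} (h : c • P.rep = Q.rep) : P = Q := by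
  rw [← P.mk_rep, ← Q.mk_rep, eq_comm]
  exact (Projectivization.mk_eq_mk_iff' F _ _ Q.rep_nonzero P.rep_nonzero).2 ⟨c, h⟩

theorem pgLine_eq_of_pgMem {P Q : PGPoint F} {L M : PGLine F} (hPQ : P ≠ Q) (hPL : pgMem P L)
    (hQL : pgMem Q L) (hPM : pgMem P M) (hQM : pgMem Q M) : L = M := by
  have hli : LinearIndependent F ![P.rep, Q.rep] :=
    (LinearIndependent.pair_iff' P.rep_nonzero).2 fun c hc => hPQ (pgPoint_eq_of_smul_rep_eq hc)
  have span_eq (K : PGLine F) (hP : pgMem P K) (hQ : pgMem Q K) :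
      Submodule.span F (Set.range ![P.rep, Q.rep]) = K.val := by
    refine Submodule.eq_of_le_of_finrank_eq ?_ ?_
    · rw [Matrix.range_cons_cons_empty, Submodule.span_le, Set.pair_subset_iff]
      exact ⟨pgMem_iff_rep_mem.1 hP, pgMem_iff_rep_mem.1 hQ⟩
    · rw [finrank_span_eq_card hli, Fintype.card_fin, K.2]
  exact Subtype.ext ((span_eq L hPL hQL).symm.trans (span_eq M hPM hQM))

theorem nsec_eq_one_of_forall_eq {S : Set (PGPoint F)} {P : PGPoint F} {L : PGLine F}
    (hPS : P ∈ S) (hPL : pgMem P L) (hP : ∀ Q ∈ S, pgMem Q L → Q = P) : nsec S L = 1 :=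
  Set.ncard_eq_one.2 ⟨P, Set.eq_singleton_iff_unique_mem.2 ⟨⟨hPS, hPL⟩, fun Q hQ => hP Q hQ.1 hQ.2⟩⟩

end Lines

section Tangents

variable {F : Type*} [Field F] {S : Set (PGPoint F)} {ℓ : PGLine F} {N : PGPoint F}

/-- The point `T` is contained in no tangent to `S`. -/
def IsTangentFree (S : Set (PGPoint F)) (T : PGPoint F) : Prop :=
  ∀ t : PGLine F, pgMem T t → nsec S t ≠ 1

/-- `N` is the nucleus of the line `ℓ` with respect to `S`: each point of `S ∩ ℓ` is on a tangent
to `S`, and all tangents at these points pass through `N`. -/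
structure IsNucleus_s17 (S : Set (PGPoint F)) (ℓ : PGLine F) (N : PGPoint F) : Prop where
  exists_tangent : ∀ P ∈ S, pgMem P ℓ → ∃ t : PGLine F, pgMem P t ∧ nsec S t = 1
  mem_tangent : ∀ P ∈ S, pgMem P ℓ → ∀ t : PGLine F, pgMem P t → nsec S t = 1 → pgMem N t

theorem IsNucleus_s17.not_pgMem (hN : IsNucleus_s17 S ℓ N) (hℓ : 1 < nsec S ℓ) : ¬ pgMem N ℓ := by
  intro hNℓ
  obtain ⟨P, ⟨hPS, hPℓ⟩, hPN⟩ := Set.exists_ne_of_one_lt_ncard hℓ N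
  obtain ⟨t, hPt, ht⟩ := hN.exists_tangent P hPS hPℓ
  obtain rfl := pgLine_eq_of_pgMem hPN hPt (hN.mem_tangent P hPS hPℓ t hPt ht) hPℓ hNℓ
  omega

theorem IsTangentFree.not_pgMem {T : PGPoint F} (hT : IsTangentFree S T) (hTS : T ∈ S)
    (hN : IsNucleus_s17 S ℓ N) : ¬ pgMem T ℓ := by
  intro hTℓ
  obtain ⟨t, hTt, ht⟩ := hN.exists_tangent T hTS hTℓ
  exact hT t hTt ht

theorem IsTangentFree.exists_ne {T : PGPoint F} (hT : IsTangentFree S T) (hTS : T ∈ S)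
    {L : PGLine F} (hTL : pgMem T L) : ∃ Q ∈ S, pgMem Q L ∧ Q ≠ T := by
  by_contra! h
  exact hT L hTL (nsec_eq_one_of_forall_eq hTS hTL h)

end Tangents

/-- Linear coordinates of `PG(2,F)` in which `ℓ` is the line at infinity of the affine plane
`F²`, with first coordinate `0`, and `N` is the origin. -/
structure AffineChart {F : Type*} [Field F] (ℓ : PGLine F) (N : PGPoint F) where
  toEquiv : (Fin 3 → F) ≃ₗ[F] F × (Fin 2 → F)
  fst_eq_zero_iff : ∀ w, (toEquiv w).1 = 0 ↔ w ∈ ℓ.val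
  map_origin : toEquiv N.rep = (1, 0)

namespace AffineChart

variable {F : Type*} [Field F] {ℓ : PGLine F} {N P Q : PGPoint F}

theorem nonempty_of_not_pgMem (hN : ¬ pgMem N ℓ) : Nonempty (AffineChart ℓ N) := by
  rw [pgMem_iff_rep_mem] at hN
  have hcompl : IsCompl (Submodule.span F {N.rep}) ℓ.val := by
    refine (Submodule.isCompl_iff_disjoint _ _ ?_).2
      (Submodule.disjoint_span_singleton_of_notMem hN).symm
    rw [finrank_span_singleton N.rep_nonzero, ℓ.2, finrank_fin_fun]
  let lineEquiv := LinearEquiv.toSpanNonzeroSingleton F _ N.rep N.rep_nonzero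
  let e := lineEquiv.symm.prodCongr (finBasisOfFinrankEq F ℓ.val ℓ.2).equivFun
  refine ⟨(Submodule.prodEquivOfIsCompl _ _ hcompl).symm.trans e, fun w => ?_, ?_⟩
  · rw [← Submodule.prodEquivOfIsCompl_symm_apply_fst_eq_zero _ _ hcompl]
    exact lineEquiv.symm.map_eq_zero_iff
  · have hN_symm := Submodule.prodEquivOfIsCompl_symm_apply_left _ _ hcompl (lineEquiv 1)
    have hN_rep : (lineEquiv 1 : Fin 3 → F) = N.rep := one_smul F _
    rw [hN_rep] at hN_symm
    rw [LinearEquiv.trans_apply, hN_symm, LinearEquiv.prodCongr_apply,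
      lineEquiv.symm_apply_apply, map_zero]

variable (φ : AffineChart ℓ N)

/-- The direction vector of a point of `ℓ`; meaningless for other points. -/
noncomputable def direction (P : PGPoint F) : Fin 2 → F := (φ.toEquiv P.rep).2

/-- The coordinate vector of a point off `ℓ` in the affine plane; the junk value on `ℓ` is `0`. -/
noncomputable def coord (P : PGPoint F) : Fin 2 → F :=
  (φ.toEquiv P.rep).1⁻¹ • (φ.toEquiv P.rep).2

theorem pgMem_iff : pgMem P ℓ ↔ (φ.toEquiv P.rep).1 = 0 :=
  pgMem_iff_rep_mem.trans (φ.fst_eq_zero_iff _).symm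

theorem direction_ne_zero (hP : pgMem P ℓ) : φ.direction P ≠ 0 := fun h =>
  P.rep_nonzero (φ.toEquiv.map_eq_zero_iff.1 (Prod.ext (φ.pgMem_iff.1 hP) h))

theorem eq_of_planeDet_direction_eq_zero (hP : pgMem P ℓ) (hQ : pgMem Q ℓ)
    (h : planeDet (φ.direction P) (φ.direction Q) = 0) : P = Q := by
  obtain ⟨c, hc⟩ := exists_smul_eq_of_planeDet_eq_zero (φ.direction_ne_zero hP) h
  refine pgPoint_eq_of_smul_rep_eq (c := c) (φ.toEquiv.injective (Prod.ext ?_ ?_))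
  · rw [map_smul, Prod.smul_fst, φ.pgMem_iff.1 hP, φ.pgMem_iff.1 hQ, smul_zero]
  · rw [map_smul]
    exact hc

/-- The projective line with affine equation `det(d, x) = c`, whose point at infinity has
direction `d`. -/
noncomputable def line {d : Fin 2 → F} (hd : d ≠ 0) (c : F) : PGLine F :=
  let f : Dual F (Fin 3 → F) :=
    (planeDet d ∘ₗ LinearMap.snd F F _ - c • LinearMap.fst F F _) ∘ₗ φ.toEquiv.toLinearMap
  have hf : f ≠ 0 := by
    obtain ⟨x, hx⟩ := exists_planeDet_ne_zero hd
    refine fun h => hx ?_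
    simpa [f] using LinearMap.congr_fun h (φ.toEquiv.symm (0, x))
  ⟨LinearMap.ker f, by
    have hker := Module.Dual.finrank_ker_add_one_of_ne_zero hf
    rw [finrank_fin_fun] at hker
    omega⟩

variable {φ} {d : Fin 2 → F} {hd : d ≠ 0} {c : F}

theorem pgMem_line_iff :
    pgMem P (φ.line hd c) ↔ planeDet d (φ.toEquiv P.rep).2 = c * (φ.toEquiv P.rep).1 :=
  pgMem_iff_rep_mem.trans (LinearMap.mem_ker.trans sub_eq_zero)

theorem pgMem_line_iff_direction (hP : pgMem P ℓ) :
    pgMem P (φ.line hd c) ↔ planeDet d (φ.direction P) = 0 := by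
  rw [pgMem_line_iff, φ.pgMem_iff.1 hP, mul_zero, direction]

theorem pgMem_line_iff_coord (hP : ¬ pgMem P ℓ) :
    pgMem P (φ.line hd c) ↔ planeDet d (φ.coord P) = c := by
  rw [pgMem_line_iff, coord, map_smul, smul_eq_mul, inv_mul_eq_iff_eq_mul₀ (φ.pgMem_iff.not.1 hP),
    mul_comm c]

theorem origin_mem_line_iff : pgMem N (φ.line hd c) ↔ c = 0 := by
  rw [pgMem_line_iff, φ.map_origin, map_zero, mul_one, eq_comm]

variable {S : Set (PGPoint F)}

theorem originIsNucleus [Finite F] (φ : AffineChart ℓ N) (hN : IsNucleus_s17 S ℓ N)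
    (hS : S.ncard = Nat.card Fˣ + nsec S ℓ) :
    OriginIsNucleus (fun P : {P ∈ S | pgMem P ℓ} => φ.direction P)
      (fun P : {P ∈ S | ¬ pgMem P ℓ} => φ.coord P) where
  card_eq := by
    have hsplit : nsec S ℓ + {P ∈ S | ¬ pgMem P ℓ}.ncard = S.ncard :=
      Set.ncard_inter_add_ncard_sdiff_eq_ncard S {P | pgMem P ℓ} S.toFinite
    rw [Nat.card_coe_set_eq]
    omega
  pairwise P Q hPQ h :=
    hPQ (Subtype.ext (φ.eq_of_planeDet_direction_eq_zero P.2.2 Q.2.2 h))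
  exists_planeDet_eq := by
    rintro ⟨P, hPS, hPℓ⟩ c
    by_contra! hc
    let L := φ.line (φ.direction_ne_zero hPℓ) (c : F)
    have hPL : pgMem P L := (pgMem_line_iff_direction hPℓ).2 (planeDet_self _)
    have tangent_L : nsec S L = 1 := by
      refine nsec_eq_one_of_forall_eq hPS hPL fun Q hQS hQL => ?_
      by_cases hQℓ : pgMem Q ℓ
      · exact (φ.eq_of_planeDet_direction_eq_zero hPℓ hQℓ
          ((pgMem_line_iff_direction hQℓ).1 hQL)).symm
      · exact absurd ((pgMem_line_iff_coord hQℓ).1 hQL) (hc ⟨Q, hQS, hQℓ⟩)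
    exact c.ne_zero (origin_mem_line_iff.1 (hN.mem_tangent P hPS hPℓ L hPL tangent_L))

theorem determinesOtherDirections (φ : AffineChart ℓ N) {T : {P ∈ S | ¬ pgMem P ℓ}}
    (hT : IsTangentFree S T.1) :
    DeterminesOtherDirections (fun P : {P ∈ S | pgMem P ℓ} => φ.direction P)
      (fun P : {P ∈ S | ¬ pgMem P ℓ} => φ.coord P) T := by
  intro d hd hdr
  obtain ⟨T, hTS, hTℓ⟩ := T
  obtain ⟨Q, hQS, hQL, hQT⟩ := hT.exists_ne hTS
    ((pgMem_line_iff_coord (hd := hd) (φ := φ) hTℓ).2 rfl)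
  have hQℓ : ¬ pgMem Q ℓ := fun hQℓ =>
    hdr ⟨Q, hQS, hQℓ⟩ ((pgMem_line_iff_direction hQℓ).1 hQL)
  exact ⟨⟨Q, hQS, hQℓ⟩, fun h => hQT (congrArg Subtype.val h), (pgMem_line_iff_coord hQℓ).1 hQL⟩

end AffineChart

namespace IsNucleus_s17

variable {F : Type*} [Field F] [Finite F] {S : Set (PGPoint F)} {ℓ : PGLine F} {N : PGPoint F}

theorem cast_nsec_eq_zero (hN : IsNucleus_s17 S ℓ N) (hℓ : 1 < nsec S ℓ)
    (hS : S.ncard = Nat.card Fˣ + nsec S ℓ) {T : PGPoint F} (hTS : T ∈ S)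
    (hT : IsTangentFree S T) : (nsec S ℓ : F) = 0 := by
  have := Fintype.ofFinite {P ∈ S | pgMem P ℓ}
  obtain ⟨φ⟩ := AffineChart.nonempty_of_not_pgMem (hN.not_pgMem hℓ)
  have hT' := φ.determinesOtherDirections (T := ⟨T, hTS, hT.not_pgMem hTS hN⟩) hT
  rw [nsec, ← Nat.card_coe_set_eq, Nat.card_eq_fintype_card]
  exact (φ.originIsNucleus hN hS).cast_card_eq_zero hT'

theorem exists_line_of_nsec_eq_three (hN : IsNucleus_s17 S ℓ N) (hℓ : nsec S ℓ = 3)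
    (hS : S.ncard = Nat.card Fˣ + nsec S ℓ) :
    ∃ L : PGLine F, pgMem N L ∧ ∀ T ∈ S, IsTangentFree S T → pgMem T L := by
  have := Fintype.ofFinite {P ∈ S | pgMem P ℓ}
  obtain ⟨φ⟩ := AffineChart.nonempty_of_not_pgMem (hN.not_pgMem (by omega))
  have hcard : Fintype.card {P ∈ S | pgMem P ℓ} = 3 := by
    rw [← Nat.card_eq_fintype_card, Nat.card_coe_set_eq, ← nsec, hℓ]
  obtain ⟨w, hw0, hw⟩ :=
    (φ.originIsNucleus hN hS).exists_planeDet_eq_zero_of_card_eq_three hcard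
  refine ⟨φ.line hw0 0, AffineChart.origin_mem_line_iff.2 rfl, fun T hTS hT => ?_⟩
  have hTℓ := hT.not_pgMem hTS hN
  exact (AffineChart.pgMem_line_iff_coord hTℓ).2
    (hw ⟨T, hTS, hTℓ⟩ (φ.determinesOtherDirections hT))

end IsNucleus_s17

/-- Let `S` be a set of `q − 1 + a` points in `PG(2,q)`, `q = p^h`, `a ≥ 3`, and let `ℓ` be an
`a`-secant of `S` such that at each point of `S ∩ ℓ` there is a unique tangent to `S`;
let `N` be the nucleus of `ℓ`.  If some point of `S` lies on no tangent to `S`, then `p ∣ a`.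
Moreover, if `a = 3` and there are two (distinct) points of `S` each lying on no tangent to
`S`, then the line determined by these two points contains `N`. -/
theorem stmt_17 {F : Type*} [Field F] [Fintype F] (p h q : ℕ) (hp : p.Prime) (hq : q = p ^ h)
    (hcard : Fintype.card F = q)
    (a : ℕ) (ha : 3 ≤ a)
    (S : Set (PGPoint F)) (hsize : S.ncard = q - 1 + a)
    (ℓ : PGLine F) (hℓ : nsec S ℓ = a)
    (htan : ∀ P ∈ S, pgMem P ℓ → ∃! t : PGLine F, pgMem P t ∧ nsec S t = 1)
    (N : PGPoint F)
    (hN : ∀ P ∈ S, pgMem P ℓ → ∀ t : PGLine F, pgMem P t → nsec S t = 1 → pgMem N t) :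
    ((∃ T ∈ S, ∀ t : PGLine F, pgMem T t → nsec S t ≠ 1) → p ∣ a) ∧
    (a = 3 →
      ∀ T₁ ∈ S, ∀ T₂ ∈ S, T₁ ≠ T₂ →
        (∀ t : PGLine F, pgMem T₁ t → nsec S t ≠ 1) →
        (∀ t : PGLine F, pgMem T₂ t → nsec S t ≠ 1) →
        ∀ m : PGLine F, pgMem T₁ m → pgMem T₂ m → pgMem N m) := by
  have hnuc : IsNucleus_s17 S ℓ N := ⟨fun P hP hPℓ => (htan P hP hPℓ).exists, hN⟩
  have hS : S.ncard = Nat.card Fˣ + nsec S ℓ := by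
    rw [hsize, hℓ, Nat.card_units, Nat.card_eq_fintype_card, hcard]
  refine ⟨fun ⟨T, hTS, hT⟩ => ?_, fun ha3 T₁ hT₁S T₂ hT₂S hT₁₂ hT₁ hT₂ m hT₁m hT₂m => ?_⟩
  · have : Fact p.Prime := ⟨hp⟩
    have : CharP F p := charP_of_card_eq_prime_pow (hcard.trans hq)
    rw [← hℓ, ← CharP.cast_eq_zero_iff F p]
    exact hnuc.cast_nsec_eq_zero (by omega) hS hTS hT
  · obtain ⟨L, hNL, hL⟩ := hnuc.exists_line_of_nsec_eq_three (hℓ.trans ha3) hS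
    rwa [pgLine_eq_of_pgMem hT₁₂ hT₁m hT₂m (hL T₁ hT₁S hT₁) (hL T₂ hT₂S hT₂)]
end

section
/- Let S be a point set of size q + 2 in PG(2,q), where q is odd and q > 3. Then the number of odd-secants of S is at least (8/5)q. -/
/-!
Count the lines through a point `P` of `S`: there are `q + 1` of them, and they share the `q + 1`
other points of `S`. So `P` lies on at least as many tangents as trisecants. It is a nucleus if it
lies on no tangent, and it is light (one tangent, one trisecant, otherwise bisecants) if it lies on
exactly one tangent. Let every trisecant give weight `3` to its light points and take `1` from its
other points. This gives five times the number of odd-secants at least `8(q + 2)`, up to an error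
coming from the nuclei and from the trisecants with three light points.

Suppose a trisecant `ℓ` has three light points. The sum of the slopes seen from such a point shows
that the three tangents meet in a point `O`. Segre's lemma of tangents, applied to two points of `ℓ`
and a third point that is a nucleus or light, relates this point to the intersections of its tangent
and trisecant with `ℓ`. In characteristic other than `3` there is then no nucleus, and every other
such trisecant passes through `O`, so that there are at most three of them. In characteristic `3`
the tangent at every light point passes through `O`, and its trisecant through the harmonic
conjugate `D` of one point of `ℓ` in the other two. Segre's lemma then leaves at most six light
points and nuclei together, so that counting tangents alone suffices.
-/

namespace OddSecants

open Finset Module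
open scoped Classical

section Incidence

variable {F : Type*} [Field F] {f g : Dual F (Fin 3 → F)} {P Q X : PGPoint F} {L M : PGLine F}

lemma pgMem_iff_rep_mem : pgMem P L ↔ P.rep ∈ L.val := by
  rw [pgMem, Projectivization.submodule_eq, Submodule.span_singleton_le_iff_mem]

/-- The line with equation `f = 0`. -/
def kerLine (f : Dual F (Fin 3 → F)) (hf : f ≠ 0) : PGLine F :=
  ⟨LinearMap.ker f, by
    have := Dual.finrank_ker_add_one_of_ne_zero hf
    rw [finrank_fin_fun] at this
    lia⟩

lemma pgMem_kerLine (hf : f ≠ 0) : pgMem X (kerLine f hf) ↔ f X.rep = 0 := by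
  rw [pgMem_iff_rep_mem, kerLine, LinearMap.mem_ker]

lemma finrank_sup_submodule (h : P ≠ Q) :
    finrank F ↑(P.submodule ⊔ Q.submodule) = 2 := by
  have hli := Projectivization.linearIndependent_pair_iff_ne.2 h
  rw [Projectivization.submodule_eq, Projectivization.submodule_eq, ← Submodule.span_insert,
    ← Matrix.range_cons_cons_empty _ _ ![], finrank_span_eq_card hli, Fintype.card_fin]

lemma exists_line (P Q : PGPoint F) : ∃ L : PGLine F, pgMem P L ∧ pgMem Q L := by
  have hlt : P.submodule ⊔ Q.submodule < ⊤ := by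
    refine lt_top_iff_ne_top.2 fun h ↦ ?_
    have hle := Submodule.finrank_add_le_finrank_add_finrank P.submodule Q.submodule
    rw [h, finrank_top, finrank_fin_fun, P.finrank_submodule, Q.finrank_submodule] at hle
    lia
  obtain ⟨f, hf, hle⟩ := Submodule.exists_le_ker_of_lt_top _ hlt
  exact ⟨kerLine f hf, le_sup_left.trans hle, le_sup_right.trans hle⟩

lemma line_unique (h : P ≠ Q) (hPL : pgMem P L) (hQL : pgMem Q L) (hPM : pgMem P M)
    (hQM : pgMem Q M) : L = M := by
  have eq_sup {K : PGLine F} (hP : pgMem P K) (hQ : pgMem Q K) :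
      P.submodule ⊔ Q.submodule = K.val :=
    Submodule.eq_of_le_of_finrank_eq (sup_le hP hQ) ((finrank_sup_submodule h).trans K.2.symm)
  exact Subtype.ext ((eq_sup hPL hQL).symm.trans (eq_sup hPM hQM))

lemma exists_meet (L M : PGLine F) : ∃ X : PGPoint F, pgMem X L ∧ pgMem X M := by
  have hdim := Submodule.finrank_sup_add_finrank_inf_eq L.val M.val
  have hle := Submodule.finrank_le (L.val ⊔ M.val)
  rw [finrank_fin_fun] at hle
  obtain ⟨v, hv, hv0⟩ := (L.val ⊓ M.val).exists_mem_ne_zero_of_ne_bot fun h ↦ by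
    rw [h, finrank_bot] at hdim
    have := L.2
    have := M.2
    lia
  refine ⟨.mk F v hv0, ?_⟩
  simpa [pgMem] using hv

lemma exists_equation (L : PGLine F) :
    ∃ f : Dual F (Fin 3 → F), ∀ X : PGPoint F, pgMem X L ↔ f X.rep = 0 := by
  have hL : L.val < ⊤ := by
    refine lt_top_iff_ne_top.2 fun h ↦ ?_
    have := L.2
    rw [h, finrank_top, finrank_fin_fun] at this
    lia
  obtain ⟨f, hf, hle⟩ := Submodule.exists_le_ker_of_lt_top _ hL
  have hker : L.val = (kerLine f hf).val :=
    Submodule.eq_of_le_of_finrank_eq hle (L.2.trans (kerLine f hf).2.symm)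
  exact ⟨f, fun X ↦ by rw [pgMem_iff_rep_mem, hker, ← pgMem_iff_rep_mem, pgMem_kerLine]⟩

lemma apply_rep_mk_eq_zero {v : Fin 3 → F} (hv : v ≠ 0) :
    f (Projectivization.mk F v hv).rep = 0 ↔ f v = 0 := by
  obtain ⟨a, ha⟩ := Projectivization.exists_smul_eq_mk_rep F v hv
  simp [← ha, Units.smul_def]

lemma eq_of_forms_eq_zero (h : LinearIndependent F ![f, g]) (hfP : f P.rep = 0) (hgP : g P.rep = 0)
    (hfX : f X.rep = 0) (hgX : g X.rep = 0) : X = P := by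
  by_contra hne
  have hf := h.ne_zero 0
  have hg := h.ne_zero 1
  have hfg : kerLine f hf = kerLine g hg := line_unique hne ((pgMem_kerLine hf).2 hfX)
    ((pgMem_kerLine hf).2 hfP) ((pgMem_kerLine hg).2 hgX) ((pgMem_kerLine hg).2 hgP)
  have hspan : g ∈ Submodule.span F (Set.range fun _ : Unit ↦ f) :=
    mem_span_of_iInf_ker_le_ker (by rw [iInf_const]; exact (congrArg Subtype.val hfg).le)
  obtain ⟨a, ha⟩ := Submodule.mem_span_singleton.1 (by simpa using hspan)
  exact (LinearIndependent.pair_iff' hf).1 h a ha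

lemma finrank_map_mkQ_submodule (P : PGPoint F) {W : Submodule F (Fin 3 → F)}
    (hW : P.submodule ≤ W) : finrank F (W.map P.submodule.mkQ) + 1 = finrank F W := by
  have hP := P.submodule.finrank_quotient_add_finrank
  have hW' := W.finrank_quotient_add_finrank
  have hmap := (W.map P.submodule.mkQ).finrank_quotient_add_finrank
  rw [(Submodule.quotientQuotientEquivQuotient P.submodule W hW).finrank_eq] at hmap
  rw [P.finrank_submodule] at hP
  lia

end Incidence

section Pencil

variable {F : Type*} [Field F] [Fintype F] {P : PGPoint F}

/-- The pencil of lines through `P`. -/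
noncomputable def pencil (P : PGPoint F) : Finset (PGLine F) := {L | pgMem P L}

@[simp] lemma mem_pencil {L : PGLine F} : L ∈ pencil P ↔ pgMem P L := by
  simp [pencil]

lemma card_pencil (P : PGPoint F) : #(pencil P) = Fintype.card F + 1 := by
  have hdim : finrank F ((Fin 3 → F) ⧸ P.submodule) = 2 := by
    have := P.submodule.finrank_quotient_add_finrank
    rw [P.finrank_submodule, finrank_fin_fun] at this
    lia
  let e : {L // pgMem P L} ≃ Projectivization F ((Fin 3 → F) ⧸ P.submodule) :=
    (Equiv.subtypeSubtypeEquivSubtypeInter _ (P.submodule ≤ ·)).trans <|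
      (Equiv.subtypeEquivRight fun _ ↦ and_comm).trans <|
      (Equiv.subtypeSubtypeEquivSubtypeInter (P.submodule ≤ ·) (finrank F · = 2)).symm.trans <|
      ((Submodule.comapMkQRelIso P.submodule).symm.toEquiv.subtypeEquiv fun W ↦ by
        have := finrank_map_mkQ_submodule P W.2
        change finrank F W.1 = 2 ↔ finrank F (W.1.map P.submodule.mkQ) = 1
        lia).trans
      (Projectivization.equivSubmodule F _).symm
  rw [pencil, ← Fintype.card_subtype, ← Nat.card_eq_fintype_card, Nat.card_congr e,
    Projectivization.card_of_finrank_two _ _ hdim, Nat.card_eq_fintype_card]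

end Pencil

section Secants

variable {F : Type*} [Field F] {S : Finset (PGPoint F)} {P Q X : PGPoint F} {L : PGLine F}

lemma nsec_eq_card_filter (S : Finset (PGPoint F)) (L : PGLine F) :
    nsec S L = #{X ∈ S | pgMem X L} := by
  rw [nsec, ← Set.ncard_coe_finset, Finset.coe_filter]
  rfl

lemma nsec_eq_card_erase_add_one (hP : P ∈ S) (hPL : pgMem P L) :
    nsec S L = #{X ∈ S.erase P | pgMem X L} + 1 := by
  have hmem : P ∈ {X ∈ S | pgMem X L} := mem_filter.2 ⟨hP, hPL⟩
  rw [nsec_eq_card_filter, filter_erase, card_erase_add_one hmem]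

lemma nsec_pos (hP : P ∈ S) (hPL : pgMem P L) : 0 < nsec S L := by
  rw [nsec_eq_card_erase_add_one hP hPL]
  exact Nat.succ_pos _

lemma eq_of_nsec_eq_one (hL : nsec S L = 1) (hP : P ∈ S) (hPL : pgMem P L) (hQ : Q ∈ S)
    (hQL : pgMem Q L) : Q = P := by
  rw [nsec_eq_card_filter] at hL
  exact card_le_one.1 hL.le Q (mem_filter.2 ⟨hQ, hQL⟩) P (mem_filter.2 ⟨hP, hPL⟩)

lemma eq_or_eq_of_nsec_eq_two (hL : nsec S L = 2) (hPQ : P ≠ Q) (hP : P ∈ S) (hPL : pgMem P L)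
    (hQ : Q ∈ S) (hQL : pgMem Q L) (hX : X ∈ S) (hXL : pgMem X L) : X = P ∨ X = Q := by
  have hsub : {P, Q} ⊆ {X ∈ S | pgMem X L} := by
    simp [insert_subset_iff, *]
  have heq := eq_of_subset_of_card_le hsub (by rw [card_pair hPQ, ← nsec_eq_card_filter, hL])
  simpa using (heq.symm ▸ mem_filter.2 ⟨hX, hXL⟩ : X ∈ ({P, Q} : Finset (PGPoint F)))

end Secants

section Fibres

variable {ι κ M : Type*} [Fintype κ] [CommMonoid M]

@[to_additive]
lemma prod_comp_mul_eq_prod_mul {s : Finset ι} {r : ι → κ} {a b k₀ : κ} {φ : κ → M}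
    (hφ : φ k₀ = 1)
    (hr : ∀ c ≠ k₀, #{i ∈ s | r i = c} + (if a = c then 1 else 0) = 1 + if b = c then 1 else 0) :
    (∏ i ∈ s, φ (r i)) * φ a = (∏ c, φ c) * φ b := by
  have hsingle (k : κ) : φ k = ∏ c, φ c ^ (if k = c then 1 else 0) := by
    simp
  rw [← prod_fiberwise', hsingle a, hsingle b, ← prod_mul_distrib, ← prod_mul_distrib]
  refine prod_congr rfl fun c _ ↦ ?_
  obtain rfl | hc := eq_or_ne c k₀
  · simp [hφ]
  · rw [prod_const, ← pow_add, ← pow_succ', hr c hc, add_comm]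

end Fibres

section Ratio

variable {F : Type*} [Field F] {f g : Dual F (Fin 3 → F)} {P X : PGPoint F} {c : F}

/-- The quotient of two linear forms at a point; it is `0` where `g` vanishes. -/
noncomputable def ratio (f g : Dual F (Fin 3 → F)) (X : PGPoint F) : F :=
  f X.rep / g X.rep

lemma sub_smul_ne_zero (hfg : LinearIndependent F ![f, g]) (c : F) : f - c • g ≠ 0 := fun h ↦ by
  simpa using LinearIndependent.pair_iff.1 hfg 1 (-c) (by simpa [← sub_eq_add_neg] using h)

lemma ratio_eq_iff_pgMem (hfg : LinearIndependent F ![f, g]) (hfP : f P.rep = 0)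
    (hgP : g P.rep = 0) (hc : c ≠ 0) (hXP : X ≠ P) :
    ratio f g X = c ↔ pgMem X (kerLine (f - c • g) (sub_smul_ne_zero hfg c)) := by
  rw [pgMem_kerLine, LinearMap.sub_apply, LinearMap.smul_apply, smul_eq_mul, sub_eq_zero, ratio]
  by_cases hgX : g X.rep = 0
  · have hfX : f X.rep ≠ 0 := fun hfX ↦ hXP (eq_of_forms_eq_zero hfg hfP hgP hfX hgX)
    simp [hgX, hfX, hc.symm]
  · exact div_eq_iff hgX

/-- The identity with `0` replaced by `1`, so that products may run over all of `F`. -/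
noncomputable def unitPart (c : F) : F := if c = 0 then 1 else c

@[simp] lemma unitPart_zero : unitPart (0 : F) = 1 := if_pos rfl

lemma unitPart_of_ne_zero (hc : c ≠ 0) : unitPart c = c := if_neg hc

lemma prod_unitPart [Fintype F] : ∏ c : F, unitPart c = -1 := by
  calc ∏ c : F, unitPart c = ∏ c : F with c ≠ 0, c := by
        simp [unitPart, prod_ite]
    _ = ∏ c : {c : F // c ≠ 0}, (c : F) := prod_subtype _ (by simp) _
    _ = ((∏ u : Fˣ, u : Fˣ) : F) := by
        rw [Units.coe_prod]
        exact (Fintype.prod_equiv unitsEquivNeZero _ _ fun _ ↦ rfl).symm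
    _ = -1 := by
        rw [FiniteField.prod_univ_units_id_eq_neg_one, Units.val_neg, Units.val_one]

end Ratio

section NearNucleus

variable {F : Type*} [Field F] {S : Finset (PGPoint F)} {f g : Dual F (Fin 3 → F)}
  {P O D : PGPoint F} {c : F}

/-- Every line through `P ∈ S` is a bisecant, except that `PO` has one point of `S` less and `PD`
has one point more; the two exceptions cancel when `P`, `O`, `D` are collinear. -/
structure NearNucleus (S : Finset (PGPoint F)) (P O D : PGPoint F) : Prop where
  mem : P ∈ S
  left_ne : O ≠ P
  right_ne : D ≠ P
  nsec_add : ∀ L, pgMem P L →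
    nsec S L + (if pgMem O L then 1 else 0) = 2 + (if pgMem D L then 1 else 0)

lemma NearNucleus.card_ratio_eq (h : NearNucleus S P O D) (hfg : LinearIndependent F ![f, g])
    (hfP : f P.rep = 0) (hgP : g P.rep = 0) (hc : c ≠ 0) :
    #{X ∈ S | ratio f g X = c} + (if ratio f g O = c then 1 else 0)
      = 1 + if ratio f g D = c then 1 else 0 := by
  set L := kerLine (f - c • g) (sub_smul_ne_zero hfg c)
  have hPL : pgMem P L := (pgMem_kerLine _).2 (by simp [hfP, hgP])
  have hratio {X : PGPoint F} (hX : X ≠ P) : ratio f g X = c ↔ pgMem X L :=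
    ratio_eq_iff_pgMem hfg hfP hgP hc hX
  have hP : ratio f g P ≠ c := by simpa [ratio, hfP] using hc.symm
  have hS : {X ∈ S | ratio f g X = c} = {X ∈ S.erase P | pgMem X L} := by
    ext X
    by_cases hX : X = P
    · simp [hX, hP]
    · simp [hX, hratio hX]
  have hnsec := h.nsec_add L hPL
  rw [nsec_eq_card_erase_add_one h.mem hPL, ← hS] at hnsec
  rw [hratio h.left_ne, hratio h.right_ne]
  lia

lemma NearNucleus.prod_unitPart_ratio [Finite F] (h : NearNucleus S P O D)
    (hfg : LinearIndependent F ![f, g]) (hfP : f P.rep = 0) (hgP : g P.rep = 0) :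
    (∏ X ∈ S, unitPart (ratio f g X)) * unitPart (ratio f g O) = -unitPart (ratio f g D) := by
  cases nonempty_fintype F
  rw [prod_comp_mul_eq_prod_mul unitPart_zero fun c hc ↦ h.card_ratio_eq hfg hfP hgP hc,
    prod_unitPart, neg_one_mul]

lemma NearNucleus.sum_ratio [Fintype F] (hF : 2 < Fintype.card F) (h : NearNucleus S P O D)
    (hfg : LinearIndependent F ![f, g]) (hfP : f P.rep = 0) (hgP : g P.rep = 0) :
    ∑ X ∈ S, ratio f g X + ratio f g O = ratio f g D := by
  have hsum : ∑ c : F, c = 0 := by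
    simpa using FiniteField.sum_pow_lt_card_sub_one F 1 (by lia)
  simpa [hsum] using sum_comp_add_eq_sum_add (φ := id) rfl
    fun c hc ↦ h.card_ratio_eq hfg hfP hgP hc

end NearNucleus

section Ceva

variable {F : Type*} [Field F] {S : Finset (PGPoint F)} {x y z : Dual F (Fin 3 → F)}
  {P Q R X : PGPoint F}

/-- `x`, `y`, `z` are homogeneous coordinates with reference triangle `P`, `Q`, `R`. -/
structure HomogCoords (x y z : Dual F (Fin 3 → F)) (P Q R : PGPoint F) : Prop where
  left : x P.rep ≠ 0 ∧ y P.rep = 0 ∧ z P.rep = 0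
  mid : x Q.rep = 0 ∧ y Q.rep ≠ 0 ∧ z Q.rep = 0
  right : x R.rep = 0 ∧ y R.rep = 0 ∧ z R.rep ≠ 0

lemma exists_homogCoords (h : ∀ L, pgMem P L → pgMem Q L → ¬ pgMem R L) :
    ∃ x y z, HomogCoords x y z P Q R := by
  obtain ⟨QR, hQ, hR⟩ := exists_line Q R
  obtain ⟨RP, hR', hP⟩ := exists_line R P
  obtain ⟨PQ, hP', hQ'⟩ := exists_line P Q
  obtain ⟨x, hx⟩ := exists_equation QR
  obtain ⟨y, hy⟩ := exists_equation RP
  obtain ⟨z, hz⟩ := exists_equation PQ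
  simp only [hx, hy, hz] at hQ hR hR' hP hP' hQ'
  refine ⟨x, y, z, ⟨fun hxP ↦ ?_, hP, hP'⟩, ⟨hQ, fun hyQ ↦ ?_, hQ'⟩, ⟨hR, hR', fun hzR ↦ ?_⟩⟩
  · exact h QR ((hx P).2 hxP) ((hx Q).2 hQ) ((hx R).2 hR)
  · exact h RP ((hy P).2 hP) ((hy Q).2 hyQ) ((hy R).2 hR')
  · exact h PQ ((hz P).2 hP') ((hz Q).2 hQ') ((hz R).2 hzR)

namespace HomogCoords

lemma rotate (h : HomogCoords x y z P Q R) : HomogCoords y z x Q R P where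
  left := ⟨h.mid.2.1, h.mid.2.2, h.mid.1⟩
  mid := ⟨h.right.2.1, h.right.2.2, h.right.1⟩
  right := ⟨h.left.2.1, h.left.2.2, h.left.1⟩

lemma linearIndependent (h : HomogCoords x y z P Q R) : LinearIndependent F ![x, y] := by
  refine LinearIndependent.pair_iff.2 fun a b hab ↦ ?_
  have heval (X : PGPoint F) : a * x X.rep + b * y X.rep = 0 := LinearMap.congr_fun hab X.rep
  have hP := heval P
  have hQ := heval Q
  simp_all [h.left, h.mid]

end HomogCoords

/-- The product of the cyclic ratios of the coordinates of `X`, degenerate ratios counting as `1`;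
it is the contribution of `X` to Segre's lemma of tangents. -/
noncomputable def cevaProduct (x y z : Dual F (Fin 3 → F)) (X : PGPoint F) : F :=
  unitPart (ratio y z X) * unitPart (ratio z x X) * unitPart (ratio x y X)

lemma cevaProduct_of_ne_zero (hx : x X.rep ≠ 0) (hy : y X.rep ≠ 0) (hz : z X.rep ≠ 0) :
    cevaProduct x y z X = 1 := by
  rw [cevaProduct, ratio, ratio, ratio, unitPart_of_ne_zero (div_ne_zero hy hz),
    unitPart_of_ne_zero (div_ne_zero hz hx), unitPart_of_ne_zero (div_ne_zero hx hy)]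
  field_simp

namespace HomogCoords

lemma cevaProduct_left (h : HomogCoords x y z P Q R) : cevaProduct x y z P = 1 := by
  simp [cevaProduct, ratio, h.left]

lemma cevaProduct_mid (h : HomogCoords x y z P Q R) : cevaProduct x y z Q = 1 := by
  simp [cevaProduct, ratio, h.mid]

lemma cevaProduct_right (h : HomogCoords x y z P Q R) : cevaProduct x y z R = 1 := by
  simp [cevaProduct, ratio, h.right]

variable [Finite F] {O₁ O₂ O₃ D₁ D₂ D₃ : PGPoint F}

/-- Segre's lemma of tangents: at each vertex the slopes of the lines to the points of `S` run over
`Fˣ`, up to two exceptions, and the product of all elements of `Fˣ` is `-1`. -/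
lemma segre_tangents (h : HomogCoords x y z P Q R) (hS : ∀ X ∈ S, cevaProduct x y z X = 1)
    (hP : NearNucleus S P O₁ D₁) (hQ : NearNucleus S Q O₂ D₂) (hR : NearNucleus S R O₃ D₃) :
    unitPart (ratio y z O₁) * unitPart (ratio z x O₂) * unitPart (ratio x y O₃)
      = -(unitPart (ratio y z D₁) * unitPart (ratio z x D₂) * unitPart (ratio x y D₃)) := by
  have hprodP := hP.prod_unitPart_ratio h.rotate.linearIndependent h.left.2.1 h.left.2.2
  have hprodQ := hQ.prod_unitPart_ratio h.rotate.rotate.linearIndependent h.mid.2.2 h.mid.1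
  have hprodR := hR.prod_unitPart_ratio h.linearIndependent h.right.1 h.right.2.1
  have hprod := prod_eq_one hS
  simp only [cevaProduct, prod_mul_distrib] at hprod
  calc unitPart (ratio y z O₁) * unitPart (ratio z x O₂) * unitPart (ratio x y O₃)
      = ((∏ X ∈ S, unitPart (ratio y z X)) * (∏ X ∈ S, unitPart (ratio z x X)) *
          ∏ X ∈ S, unitPart (ratio x y X)) *
        (unitPart (ratio y z O₁) * unitPart (ratio z x O₂) * unitPart (ratio x y O₃)) := by
        rw [hprod, one_mul]
    _ = ((∏ X ∈ S, unitPart (ratio y z X)) * unitPart (ratio y z O₁)) *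
        ((∏ X ∈ S, unitPart (ratio z x X)) * unitPart (ratio z x O₂)) *
        ((∏ X ∈ S, unitPart (ratio x y X)) * unitPart (ratio x y O₃)) := by ring
    _ = -(unitPart (ratio y z D₁) * unitPart (ratio z x D₂) * unitPart (ratio x y D₃)) := by
        rw [hprodP, hprodQ, hprodR]
        ring

end HomogCoords

end Ceva

section Triangle

variable {F : Type*} [Field F] {S : Finset (PGPoint F)} {x y z : Dual F (Fin 3 → F)}
  {P Q R X O D : PGPoint F} {L : PGLine F}

namespace NearNucleus

lemma right_mem (h : NearNucleus S P O D) (hQ : Q ∈ S) (hQP : Q ≠ P) (hPL : pgMem P L)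
    (hQL : pgMem Q L) (hOL : pgMem O L) : pgMem D L := by
  by_contra hDL
  have hnsec := h.nsec_add L hPL
  rw [if_pos hOL, if_neg hDL] at hnsec
  exact hQP (eq_of_nsec_eq_one (by lia) h.mem hPL hQ hQL)

lemma nsec_eq_two (h : NearNucleus S P O D) (hQ : Q ∈ S) (hQP : Q ≠ P) (hPL : pgMem P L)
    (hQL : pgMem Q L) (hDL : ¬ pgMem D L) : nsec S L = 2 := by
  have hOL : ¬ pgMem O L := fun hOL ↦ hDL (h.right_mem hQ hQP hPL hQL hOL)
  simpa [hOL, hDL] using h.nsec_add L hPL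

end NearNucleus

namespace HomogCoords

lemma left_ne_mid (h : HomogCoords x y z P Q R) : P ≠ Q := by
  rintro rfl
  exact h.left.1 h.mid.1

lemma eq_left_or_eq_mid (h : HomogCoords x y z P Q R) (hP : NearNucleus S P O D) (hQ : Q ∈ S)
    (hD : z D.rep ≠ 0) (hX : X ∈ S) (hzX : z X.rep = 0) : X = P ∨ X = Q := by
  have hz : z ≠ 0 := h.rotate.linearIndependent.ne_zero 1
  have hPz := (pgMem_kerLine hz).2 h.left.2.2
  have hQz := (pgMem_kerLine hz).2 h.mid.2.2
  have hnsec := hP.nsec_eq_two hQ h.left_ne_mid.symm hPz hQz fun hDz ↦ hD ((pgMem_kerLine hz).1 hDz)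
  exact eq_or_eq_of_nsec_eq_two hnsec h.left_ne_mid hP.mem hPz hQ hQz hX ((pgMem_kerLine hz).2 hzX)

lemma left_ne_zero (h : HomogCoords x y z P Q R) (hP : NearNucleus S P O D) (hQ : Q ∈ S)
    (hD : z D.rep ≠ 0) : z O.rep ≠ 0 := by
  have hz : z ≠ 0 := h.rotate.linearIndependent.ne_zero 1
  intro hO
  exact hD <| (pgMem_kerLine hz).1 <| hP.right_mem hQ h.left_ne_mid.symm
    ((pgMem_kerLine hz).2 h.left.2.2) ((pgMem_kerLine hz).2 h.mid.2.2) ((pgMem_kerLine hz).2 hO)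

lemma not_nearNucleus [Finite F] (h2 : (2 : F) ≠ 0) (h : HomogCoords x y z P Q R)
    (hxD : x D.rep ≠ 0) (hyD : y D.rep ≠ 0) (hzD : z D.rep ≠ 0) (hP : NearNucleus S P O D)
    (hQ : NearNucleus S Q O D) : ¬ NearNucleus S R O D := by
  intro hR
  have hS : ∀ X ∈ S, cevaProduct x y z X = 1 := by
    intro X hX
    by_cases hx : x X.rep = 0
    · obtain rfl | rfl := h.rotate.eq_left_or_eq_mid hQ hR.mem hxD hX hx
      exacts [h.cevaProduct_mid, h.cevaProduct_right]
    by_cases hy : y X.rep = 0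
    · obtain rfl | rfl := h.rotate.rotate.eq_left_or_eq_mid hR hP.mem hyD hX hy
      exacts [h.cevaProduct_right, h.cevaProduct_left]
    by_cases hz : z X.rep = 0
    · obtain rfl | rfl := h.eq_left_or_eq_mid hP hQ.mem hzD hX hz
      exacts [h.cevaProduct_left, h.cevaProduct_mid]
    exact cevaProduct_of_ne_zero hx hy hz
  have hO : cevaProduct x y z O = 1 := cevaProduct_of_ne_zero
    (h.rotate.left_ne_zero hQ hR.mem hxD) (h.rotate.rotate.left_ne_zero hR hP.mem hyD)
    (h.left_ne_zero hP hQ.mem hzD)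
  have hD : cevaProduct x y z D = 1 := cevaProduct_of_ne_zero hxD hyD hzD
  have hsegre : cevaProduct x y z O = -cevaProduct x y z D := h.segre_tangents hS hP hQ hR
  rw [hO, hD] at hsegre
  exact h2 (by linear_combination hsegre)

end HomogCoords

/-- A point of `S` all of whose lines are bisecants. -/
def IsNucleus (S : Finset (PGPoint F)) (P : PGPoint F) : Prop :=
  P ∈ S ∧ ∀ L, pgMem P L → nsec S L = 2

lemma IsNucleus.nearNucleus (h : IsNucleus S P) (hO : O ≠ P) (hD : D ≠ P) (hPL : pgMem P L)
    (hOL : pgMem O L) (hDL : pgMem D L) : NearNucleus S P O D where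
  mem := h.1
  left_ne := hO
  right_ne := hD
  nsec_add M hPM := by
    have hOM : pgMem O M ↔ M = L :=
      ⟨fun h ↦ line_unique hO h hPM hOL hPL, fun h ↦ h ▸ hOL⟩
    have hDM : pgMem D M ↔ M = L :=
      ⟨fun h ↦ line_unique hD h hPM hDL hPL, fun h ↦ h ▸ hDL⟩
    simp only [h.2 M hPM, hOM, hDM]

lemma IsNucleus.nearNucleus_self (h : IsNucleus S P) (hO : O ≠ P) : NearNucleus S P O O :=
  have ⟨_, hPL, hOL⟩ := exists_line P O
  h.nearNucleus hO hO hPL hOL hOL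

lemma card_isNucleus_le_two [Finite F] (h2 : (2 : F) ≠ 0) (S : Finset (PGPoint F)) :
    #{P ∈ S | IsNucleus S P} ≤ 2 := by
  by_contra! hlt
  obtain ⟨P, hP, Q, hQ, R, hR, hPQ, hPR, hQR⟩ := two_lt_card.1 hlt
  simp only [mem_filter] at hP hQ hR
  obtain ⟨x, y, z, h⟩ := exists_homogCoords (P := P) (Q := Q) (R := R) fun L hPL hQL hRL ↦
    (eq_or_eq_of_nsec_eq_two (hP.2.2 L hPL) hPQ hP.1 hPL hQ.1 hQL hR.1 hRL).elim hPR.symm hQR.symm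
  let v := P.rep + Q.rep + R.rep
  have hxv : x v ≠ 0 := by simpa [v, h.mid, h.right] using h.left.1
  have hyv : y v ≠ 0 := by simpa [v, h.left, h.right] using h.mid.2.1
  have hzv : z v ≠ 0 := by simpa [v, h.left, h.mid] using h.right.2.2
  have hv : v ≠ 0 := fun hv ↦ hxv (by rw [hv, map_zero])
  have hD {f : Dual F (Fin 3 → F)} (hf : f v ≠ 0) : f (Projectivization.mk F v hv).rep ≠ 0 :=
    (apply_rep_mk_eq_zero hv).not.2 hf
  refine h.not_nearNucleus h2 (hD hxv) (hD hyv) (hD hzv) (hP.2.nearNucleus_self ?_)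
    (hQ.2.nearNucleus_self ?_) (hR.2.nearNucleus_self ?_)
  · exact fun hvP ↦ hD hyv (hvP ▸ h.left.2.1)
  · exact fun hvQ ↦ hD hxv (hvQ ▸ h.mid.1)
  · exact fun hvR ↦ hD hxv (hvR ▸ h.right.1)

lemma NearNucleus.nsec_le_three (h : NearNucleus S P O D) (hPL : pgMem P L) : nsec S L ≤ 3 := by
  have := h.nsec_add L hPL
  split_ifs at this <;> lia

lemma NearNucleus.mem_line_of_not_mem [Finite F] (h2 : (2 : F) ≠ 0) {ℓ : PGLine F} {A : PGPoint F}
    (hA : NearNucleus S A O D) (hP : NearNucleus S P O D) (hQ : NearNucleus S Q O D)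
    (hAℓ : pgMem A ℓ) (hDℓ : pgMem D ℓ) (hPℓ : ¬ pgMem P ℓ) (hQℓ : ¬ pgMem Q ℓ) (hPQ : P ≠ Q)
    (hPL : pgMem P L) (hQL : pgMem Q L) : pgMem D L := by
  by_contra hDL
  have hnsec : nsec S L = 2 := hP.nsec_eq_two hQ.mem hPQ.symm hPL hQL hDL
  have hAP : A ≠ P := fun h ↦ hPℓ (h ▸ hAℓ)
  have hAQ : A ≠ Q := fun h ↦ hQℓ (h ▸ hAℓ)
  obtain ⟨x, y, z, h⟩ := exists_homogCoords (P := P) (Q := Q) (R := A) fun M hPM hQM hAM ↦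
    (eq_or_eq_of_nsec_eq_two hnsec hPQ hP.mem hPL hQ.mem hQL hA.mem
      (line_unique hPQ hPM hQM hPL hQL ▸ hAM)).elim hAP hAQ
  have hx : x ≠ 0 := h.linearIndependent.ne_zero 0
  have hy : y ≠ 0 := h.linearIndependent.ne_zero 1
  have hz : z ≠ 0 := h.rotate.linearIndependent.ne_zero 1
  have not_mem {f : Dual F (Fin 3 → F)} (hf : f ≠ 0) {B : PGPoint F} (hBℓ : ¬ pgMem B ℓ)
      (hfA : f A.rep = 0) (hfB : f B.rep = 0) : f D.rep ≠ 0 := fun hfD ↦ by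
    rw [← pgMem_kerLine hf] at hfA hfB hfD
    exact hBℓ (line_unique hA.right_ne hfD hfA hDℓ hAℓ ▸ hfB)
  refine h.not_nearNucleus h2 (not_mem hx hQℓ h.right.1 h.mid.1)
    (not_mem hy hPℓ h.right.2.1 h.left.2.1) (fun hzD ↦ hDL ?_) hP hQ hA
  rw [← pgMem_kerLine hz] at hzD
  exact line_unique hPQ ((pgMem_kerLine hz).2 h.left.2.2) ((pgMem_kerLine hz).2 h.mid.2.2) hPL hQL
    ▸ hzD

lemma card_nearNucleus_le_six [Finite F] (h2 : (2 : F) ≠ 0) (S : Finset (PGPoint F))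
    (O D : PGPoint F) : #{P ∈ S | NearNucleus S P O D} ≤ 6 := by
  by_contra! hlt
  obtain ⟨A, hA⟩ := card_pos.1 (pos_of_gt hlt)
  replace hA := (mem_filter.1 hA).2
  obtain ⟨ℓ, hAℓ, hDℓ⟩ := exists_line A D
  have card_le {L : PGLine F} (hL : nsec S L ≤ 3) :
      #{P ∈ S | NearNucleus S P O D ∧ pgMem P L} ≤ 3 :=
    (card_le_card fun X hX ↦ by simp_all).trans ((nsec_eq_card_filter S L).symm.trans_le hL)
  have hon := card_le (hA.nsec_le_three hAℓ)
  have hsplit := card_filter_add_card_filter_not (s := {P ∈ S | NearNucleus S P O D}) (pgMem · ℓ)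
  rw [filter_filter, filter_filter] at hsplit
  have hoff : 3 < #{P ∈ S | NearNucleus S P O D ∧ ¬ pgMem P ℓ} := by lia
  obtain ⟨P, hP⟩ := card_pos.1 (pos_of_gt hoff)
  simp only [mem_filter] at hP
  obtain ⟨L, hPL, hDL⟩ := exists_line P D
  refine hoff.not_ge ((card_le_card fun Q hQ ↦ ?_).trans (card_le (hP.2.1.nsec_le_three hPL)))
  simp only [mem_filter] at hQ ⊢
  refine ⟨hQ.1, hQ.2.1, ?_⟩
  obtain rfl | hPQ := eq_or_ne P Q
  · exact hPL
  obtain ⟨M, hPM, hQM⟩ := exists_line P Q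
  have hDM := hA.mem_line_of_not_mem h2 hP.2.1 hQ.2.1 hAℓ hDℓ hP.2.2 hQ.2.2 hPQ hPM hQM
  exact line_unique hP.2.1.right_ne hDM hPM hDL hPL ▸ hQM

end Triangle

section LightPoints

variable {F : Type*} [Field F] {S : Finset (PGPoint F)} {P Q X O D : PGPoint F}
  {τ θ L : PGLine F}

/-- A point of `S` on one tangent `τ` and one trisecant `θ`, all other lines through it being
bisecants. -/
structure LightPoint (S : Finset (PGPoint F)) (P : PGPoint F) (τ θ : PGLine F) : Prop where
  mem : P ∈ S
  mem_tangent : pgMem P τ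
  mem_trisecant : pgMem P θ
  nsec_tangent : nsec S τ = 1
  nsec_trisecant : nsec S θ = 3
  nsec_eq_two : ∀ L, pgMem P L → L ≠ τ → L ≠ θ → nsec S L = 2

namespace LightPoint

lemma ne (h : LightPoint S P τ θ) : τ ≠ θ := by
  rintro rfl
  simpa [h.nsec_tangent] using h.nsec_trisecant

lemma eq_of_mem_tangent (h : LightPoint S P τ θ) (hX : X ∈ S) (hXτ : pgMem X τ) : X = P :=
  eq_of_nsec_eq_one h.nsec_tangent h.mem h.mem_tangent hX hXτ

lemma eq_of_mem_inter (h : LightPoint S P τ θ) (hXτ : pgMem X τ) (hXθ : pgMem X θ) : X = P :=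
  by_contra fun hX ↦ h.ne (line_unique hX hXτ h.mem_tangent hXθ h.mem_trisecant)

lemma nearNucleus (h : LightPoint S P τ θ) (hO : O ≠ P) (hOτ : pgMem O τ) (hD : D ≠ P)
    (hDθ : pgMem D θ) : NearNucleus S P O D where
  mem := h.mem
  left_ne := hO
  right_ne := hD
  nsec_add L hPL := by
    have hOL : pgMem O L ↔ L = τ :=
      ⟨fun hOL ↦ line_unique hO hOL hPL hOτ h.mem_tangent, fun hL ↦ hL ▸ hOτ⟩
    have hDL : pgMem D L ↔ L = θ :=
      ⟨fun hDL ↦ line_unique hD hDL hPL hDθ h.mem_trisecant, fun hL ↦ hL ▸ hDθ⟩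
    rw [if_congr hOL rfl rfl, if_congr hDL rfl rfl]
    obtain rfl | hτ := eq_or_ne L τ
    · simp [h.nsec_tangent, h.ne]
    obtain rfl | hθ := eq_or_ne L θ
    · simp [h.nsec_trisecant, hτ]
    · simp [h.nsec_eq_two L hPL hτ hθ, hτ, hθ]

lemma eq_or_eq (h : LightPoint S P τ θ) (hQ : Q ∈ S) (hQθ : ¬ pgMem Q θ) (hPL : pgMem P L)
    (hQL : pgMem Q L) (hX : X ∈ S) (hXL : pgMem X L) : X = P ∨ X = Q := by
  have hPQ : P ≠ Q := fun hPQ ↦ hQθ (hPQ ▸ h.mem_trisecant)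
  have hLτ : L ≠ τ := fun hL ↦ hPQ (h.eq_of_mem_tangent hQ (hL ▸ hQL)).symm
  have hLθ : L ≠ θ := fun hL ↦ hQθ (hL ▸ hQL)
  exact eq_or_eq_of_nsec_eq_two (h.nsec_eq_two L hPL hLτ hLθ) hPQ h.mem hPL hQ hQL hX hXL

end LightPoint

/-- A trisecant all of whose points in `S` are light. -/
def LightTrisecant (S : Finset (PGPoint F)) (ℓ : PGLine F) : Prop :=
  nsec S ℓ = 3 ∧ ∀ P ∈ S, pgMem P ℓ → ∃ τ, LightPoint S P τ ℓ

end LightPoints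

section Adapted

variable {F : Type*} [Field F] {S : Finset (PGPoint F)} {x y z : Dual F (Fin 3 → F)}
  {P A B C O T : PGPoint F} {ℓ τ τA τB τC : PGLine F}

lemma HomogCoords.smul (h : HomogCoords x y z A B O) {a b : F} (ha : a ≠ 0) (hb : b ≠ 0) :
    HomogCoords (a • x) (b • y) z A B O where
  left := by simp [ha, h.left]
  mid := by simp [hb, h.mid]
  right := by simp [h.right]

lemma HomogCoords.swap (h : HomogCoords x y z A B O) (hzC : z C.rep = 0)
    (hC : x C.rep = y C.rep) : HomogCoords x (x - y) z C B O where
  left := by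
    refine ⟨fun hxC ↦ h.right.2.2 ?_, by simp [hC], hzC⟩
    rwa [← eq_of_forms_eq_zero h.linearIndependent h.right.1 h.right.2.1 hxC (hC ▸ hxC)]
  mid := by simp [h.mid]
  right := by simp [h.right]

/-- Coordinates adapted to a light trisecant `ℓ = {A, B, C}`: the line `ℓ` is `z = 0`, its three
points are `A = (1 : 0 : 0)`, `B = (0 : 1 : 0)`, `C = (1 : 1 : 0)`, and the tangents at these points
meet in `O = (0 : 0 : 1)`. -/
structure AdaptedCoords (S : Finset (PGPoint F)) (ℓ : PGLine F) (A B C O : PGPoint F)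
    (x y z : Dual F (Fin 3 → F)) : Prop extends HomogCoords x y z A B O where
  mem_line_iff : ∀ X, pgMem X ℓ ↔ z X.rep = 0
  third_mem : pgMem C ℓ
  third_eq : x C.rep = y C.rep
  light_left : ∃ τ, pgMem O τ ∧ LightPoint S A τ ℓ
  light_mid : ∃ τ, pgMem O τ ∧ LightPoint S B τ ℓ
  light_third : ∃ τ, pgMem O τ ∧ LightPoint S C τ ℓ
  eq_of_mem : ∀ X ∈ S, pgMem X ℓ → X = A ∨ X = B ∨ X = C

lemma LightPoint.sum_ratio_add_eq_zero [Fintype F] (hF : 2 < Fintype.card F)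
    (h : LightPoint S P τ ℓ) (hℓ : ∀ X, pgMem X ℓ ↔ z X.rep = 0)
    (hxz : LinearIndependent F ![x, z]) (hxP : x P.rep = 0) (hT : T ≠ P) (hTτ : pgMem T τ) :
    ∑ X ∈ S, ratio x z X + ratio x z T = 0 := by
  obtain ⟨D, hD, hDP⟩ := exists_mem_ne (s := {X ∈ S | pgMem X ℓ})
    (by rw [← nsec_eq_card_filter, h.nsec_trisecant]; lia) P
  have hDℓ : pgMem D ℓ := (mem_filter.1 hD).2
  rw [(h.nearNucleus hT hTτ hDP hDℓ).sum_ratio hF hxz hxP ((hℓ P).1 h.mem_trisecant), ratio,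
    (hℓ D).1 hDℓ, div_zero]

/-- The slopes of `S` seen from `A`, `B` and `C` are `y / z`, `x / z` and `(x - y) / z`. The first
two have sum `0` over `S`, hence so has the third. -/
lemma HomogCoords.tangent_concurrent [Fintype F] (hF : 2 < Fintype.card F)
    (h : HomogCoords x y z A B O) (hℓ : ∀ X, pgMem X ℓ ↔ z X.rep = 0)
    (hC : x C.rep = y C.rep) (hBC : B ≠ C) (hA : LightPoint S A τA ℓ) (hOA : pgMem O τA)
    (hB : LightPoint S B τB ℓ) (hOB : pgMem O τB) (hCℓ : LightPoint S C τC ℓ) : pgMem O τC := by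
  have hswap := h.swap ((hℓ C).1 hCℓ.mem_trisecant) hC
  obtain ⟨T, hTC, hTB⟩ := exists_meet τC τB
  have hTℓ : ¬ pgMem T ℓ := fun hTℓ ↦
    hBC ((hB.eq_of_mem_inter hTB hTℓ).symm.trans (hCℓ.eq_of_mem_inter hTC hTℓ))
  have hTC' : T ≠ C := fun hTC ↦ hTℓ (hTC ▸ hCℓ.mem_trisecant)
  have hsumA := hA.sum_ratio_add_eq_zero hF hℓ h.rotate.linearIndependent h.left.2.1
    h.rotate.rotate.left_ne_mid hOA
  have hsumB := hB.sum_ratio_add_eq_zero hF hℓ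
    (LinearIndependent.pair_symm_iff.1 h.rotate.rotate.linearIndependent) h.mid.1
    h.rotate.left_ne_mid.symm hOB
  have hsumC := hCℓ.sum_ratio_add_eq_zero hF hℓ hswap.rotate.linearIndependent hswap.left.2.1
    hTC' hTC
  have hT : (x - y) T.rep = 0 := by
    have hzT : z T.rep ≠ 0 := (hℓ T).not.1 hTℓ
    simp only [ratio, h.right, zero_div, add_zero] at hsumA hsumB
    have hsub : x T.rep / z T.rep - y T.rep / z T.rep = 0 := by
      simpa [ratio, sub_div, hsumA, hsumB] using hsumC
    rwa [← sub_div, div_eq_zero_iff, or_iff_left hzT] at hsub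
  have hxy : x - y ≠ 0 := hswap.linearIndependent.ne_zero 1
  rw [← pgMem_kerLine hxy] at hT
  have hCx : pgMem C (kerLine (x - y) hxy) := (pgMem_kerLine hxy).2 hswap.left.2.1
  rw [line_unique hTC' hTC hCℓ.mem_tangent hT hCx, pgMem_kerLine]
  exact hswap.right.2.1

lemma LightTrisecant.exists_points (h : LightTrisecant S ℓ) :
    ∃ A B C, A ≠ B ∧ B ≠ C ∧ A ≠ C ∧ (∃ τ, LightPoint S A τ ℓ) ∧ (∃ τ, LightPoint S B τ ℓ) ∧
      (∃ τ, LightPoint S C τ ℓ) ∧ ∀ X ∈ S, pgMem X ℓ → X = A ∨ X = B ∨ X = C := by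
  have hcard := h.1
  rw [nsec_eq_card_filter] at hcard
  obtain ⟨A, B, C, hAB, hAC, hBC, hABC⟩ := card_eq_three.1 hcard
  have hmem (X : PGPoint F) : X ∈ S ∧ pgMem X ℓ ↔ X = A ∨ X = B ∨ X = C := by
    simpa using Finset.ext_iff.1 hABC X
  have hlight {X : PGPoint F} (hX : X = A ∨ X = B ∨ X = C) : ∃ τ, LightPoint S X τ ℓ :=
    h.2 X ((hmem X).2 hX).1 ((hmem X).2 hX).2
  exact ⟨A, B, C, hAB, hBC, hAC, hlight (by simp), hlight (by simp), hlight (by simp),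
    fun X hX hXℓ ↦ (hmem X).1 ⟨hX, hXℓ⟩⟩

lemma LightTrisecant.exists_adaptedCoords [Fintype F] (hF : 2 < Fintype.card F)
    (h : LightTrisecant S ℓ) : ∃ A B C O x y z, AdaptedCoords S ℓ A B C O x y z := by
  obtain ⟨A, B, C, hAB, hBC, hAC, ⟨τA, hA⟩, ⟨τB, hB⟩, ⟨τC, hC⟩, hABC⟩ := h.exists_points
  obtain ⟨O, hOA, hOB⟩ := exists_meet τA τB
  have hOℓ : ¬ pgMem O ℓ := fun hO ↦
    hAB ((hA.eq_of_mem_inter hOA hO).symm.trans (hB.eq_of_mem_inter hOB hO))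
  obtain ⟨x, y, z, hc⟩ := exists_homogCoords (P := A) (Q := B) (R := O) fun L hAL hBL hOL ↦
    hOℓ (line_unique hAB hAL hBL hA.mem_trisecant hB.mem_trisecant ▸ hOL)
  have hz : z ≠ 0 := hc.rotate.linearIndependent.ne_zero 1
  have hℓ (X : PGPoint F) : pgMem X ℓ ↔ z X.rep = 0 := by
    rw [line_unique hAB hA.mem_trisecant hB.mem_trisecant ((pgMem_kerLine hz).2 hc.left.2.2)
      ((pgMem_kerLine hz).2 hc.mid.2.2), pgMem_kerLine]
  have hzC : z C.rep = 0 := (hℓ C).1 hC.mem_trisecant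
  have hxC : x C.rep ≠ 0 := fun hxC ↦ hBC.symm <|
    eq_of_forms_eq_zero hc.rotate.rotate.linearIndependent hc.mid.2.2 hc.mid.1 hzC hxC
  have hyC : y C.rep ≠ 0 := fun hyC ↦ hAC.symm <|
    eq_of_forms_eq_zero hc.rotate.linearIndependent hc.left.2.1 hc.left.2.2 hyC hzC
  have hscale := hc.smul hyC hxC
  have hCeq : (y C.rep • x) C.rep = (x C.rep • y) C.rep := by simp [mul_comm]
  exact ⟨A, B, C, O, _, _, z, hscale, hℓ, hC.mem_trisecant, hCeq, ⟨τA, hOA, hA⟩, ⟨τB, hOB, hB⟩,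
    ⟨τC, hscale.tangent_concurrent hF hℓ hCeq hBC hA hOA hB hOB hC, hC⟩, hABC⟩

end Adapted

section SlopeRelations

variable {F : Type*} [Field F] {S : Finset (PGPoint F)} {x y z : Dual F (Fin 3 → F)}
  {P X A B C O T H : PGPoint F} {ℓ : PGLine F}

lemma HomogCoords.translate (h : HomogCoords x y z A B O) (hP : z P.rep ≠ 0) :
    HomogCoords (z P.rep • x - x P.rep • z) (z P.rep • y - y P.rep • z) z A B P where
  left := by simp [hP, h.left]
  mid := by simp [hP, h.mid]
  right := by simp [hP, mul_comm]

namespace AdaptedCoords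

lemma symm (h : AdaptedCoords S ℓ A B C O x y z) : AdaptedCoords S ℓ B A C O y x z where
  left := ⟨h.mid.2.1, h.mid.1, h.mid.2.2⟩
  mid := ⟨h.left.2.1, h.left.1, h.left.2.2⟩
  right := ⟨h.right.2.1, h.right.1, h.right.2.2⟩
  mem_line_iff := h.mem_line_iff
  third_mem := h.third_mem
  third_eq := h.third_eq.symm
  light_left := h.light_mid
  light_mid := h.light_left
  light_third := h.light_third
  eq_of_mem X hX hXℓ := or_left_comm.1 (h.eq_of_mem X hX hXℓ)

lemma swap (h : AdaptedCoords S ℓ A B C O x y z) : AdaptedCoords S ℓ C B A O x (x - y) z where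
  toHomogCoords := h.toHomogCoords.swap ((h.mem_line_iff C).1 h.third_mem) h.third_eq
  mem_line_iff := h.mem_line_iff
  third_mem := (h.mem_line_iff A).2 h.left.2.2
  third_eq := by simp [h.left]
  light_left := h.light_third
  light_mid := h.light_mid
  light_third := h.light_left
  eq_of_mem X hX hXℓ := by
    have := h.eq_of_mem X hX hXℓ
    tauto

lemma apex_not_mem_line (h : AdaptedCoords S ℓ A B C O x y z) : ¬ pgMem O ℓ :=
  (h.mem_line_iff O).not.2 h.right.2.2

lemma apex_ne_left (h : AdaptedCoords S ℓ A B C O x y z) : O ≠ A := fun hOA ↦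
  h.right.2.2 (hOA ▸ h.left.2.2)

lemma apex_not_mem (h : AdaptedCoords S ℓ A B C O x y z) : O ∉ S := fun hO ↦
  have ⟨_, hOτ, hA⟩ := h.light_left
  h.apex_ne_left (hA.eq_of_mem_tangent hO hOτ)

lemma left_mem (h : AdaptedCoords S ℓ A B C O x y z) : A ∈ S :=
  have ⟨_, _, hA⟩ := h.light_left
  hA.mem

lemma mid_ne_zero_of_mem_line (h : AdaptedCoords S ℓ A B C O x y z) (hX : X ∉ S)
    (hXℓ : pgMem X ℓ) : y X.rep ≠ 0 := fun hyX ↦ hX <|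
  eq_of_forms_eq_zero h.rotate.linearIndependent h.left.2.1 h.left.2.2 hyX
    ((h.mem_line_iff X).1 hXℓ) ▸ h.left_mem

lemma mid_ne_zero_of_mem (h : AdaptedCoords S ℓ A B C O x y z) (hP : P ∈ S)
    (hPℓ : ¬ pgMem P ℓ) : y P.rep ≠ 0 := by
  intro hyP
  obtain ⟨τ, hOτ, hA⟩ := h.light_left
  have hy : y ≠ 0 := h.linearIndependent.ne_zero 1
  rw [← pgMem_kerLine hy, line_unique h.apex_ne_left ((pgMem_kerLine hy).2 h.right.2.1)
    ((pgMem_kerLine hy).2 h.left.2.1) hOτ hA.mem_tangent] at hyP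
  exact hPℓ (hA.eq_of_mem_tangent hP hyP ▸ hA.mem_trisecant)

/-- `A`, `P` and `X` are collinear when the form vanishes, and `AP` is a bisecant. -/
lemma eq_of_det_eq_zero (h : AdaptedCoords S ℓ A B C O x y z) (hP : P ∈ S) (hPℓ : ¬ pgMem P ℓ)
    (hX : X ∈ S) (hXℓ : ¬ pgMem X ℓ) (hdet : (z P.rep • y - y P.rep • z) X.rep = 0) : X = P := by
  have htr := h.toHomogCoords.translate ((h.mem_line_iff P).not.1 hPℓ)
  have hf := htr.linearIndependent.ne_zero 1
  obtain ⟨τ, -, hA⟩ := h.light_left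
  obtain rfl | hXP := hA.eq_or_eq hP hPℓ ((pgMem_kerLine hf).2 htr.left.2.1)
    ((pgMem_kerLine hf).2 htr.right.2.1) hX ((pgMem_kerLine hf).2 hdet)
  · exact absurd hA.mem_trisecant hXℓ
  · exact hXP

lemma cevaProduct_translate (h : AdaptedCoords S ℓ A B C O x y z) (hP : P ∈ S)
    (hPℓ : ¬ pgMem P ℓ) (hX : X ∈ S) :
    cevaProduct (z P.rep • x - x P.rep • z) (z P.rep • y - y P.rep • z) z X = 1 := by
  have hzP : z P.rep ≠ 0 := (h.mem_line_iff P).not.1 hPℓ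
  have htr := h.toHomogCoords.translate hzP
  by_cases hXℓ : pgMem X ℓ
  · obtain rfl | rfl | rfl := h.eq_of_mem X hX hXℓ
    · exact htr.cevaProduct_left
    · exact htr.cevaProduct_mid
    · have hyX : y X.rep ≠ 0 := h.third_eq ▸ h.swap.left.1
      have hratio : z P.rep * y X.rep / (z P.rep * y X.rep) = 1 := div_self (mul_ne_zero hzP hyX)
      simp [cevaProduct, ratio, (h.mem_line_iff X).1 hXℓ, h.third_eq, hratio,
        unitPart_of_ne_zero one_ne_zero]
  · obtain rfl | hXP := eq_or_ne X P
    · exact htr.cevaProduct_right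
    · exact cevaProduct_of_ne_zero (fun hx ↦ hXP (h.symm.eq_of_det_eq_zero hP hPℓ hX hXℓ hx))
        (fun hy ↦ hXP (h.eq_of_det_eq_zero hP hPℓ hX hXℓ hy)) ((h.mem_line_iff X).not.1 hXℓ)

lemma nearNucleus_left (h : AdaptedCoords S ℓ A B C O x y z) : NearNucleus S A O B :=
  have ⟨_, hOτ, hA⟩ := h.light_left
  hA.nearNucleus h.apex_ne_left hOτ h.left_ne_mid.symm ((h.mem_line_iff B).2 h.mid.2.2)

variable [Finite F]

lemma slope_relation (h : AdaptedCoords S ℓ A B C O x y z) (hPℓ : ¬ pgMem P ℓ)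
    (hP : NearNucleus S P T H) (hT : T ∉ S) (hTℓ : pgMem T ℓ) (hH : H ∉ S) (hHℓ : pgMem H ℓ) :
    y P.rep * x T.rep * y H.rep + x P.rep * y T.rep * x H.rep = 0 := by
  have hzP : z P.rep ≠ 0 := (h.mem_line_iff P).not.1 hPℓ
  have hxP := h.symm.mid_ne_zero_of_mem hP.mem hPℓ
  have hyP := h.mid_ne_zero_of_mem hP.mem hPℓ
  have hxT := h.symm.mid_ne_zero_of_mem_line hT hTℓ
  have hyT := h.mid_ne_zero_of_mem_line hT hTℓ
  have hxH := h.symm.mid_ne_zero_of_mem_line hH hHℓ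
  have hyH := h.mid_ne_zero_of_mem_line hH hHℓ
  have hzO := h.right.2.2
  have hsegre : -(y P.rep * z O.rep) / z O.rep * (z O.rep / -(x P.rep * z O.rep)) *
      (x T.rep / y T.rep) = -(x H.rep / y H.rep) := by
    simpa [ratio, h.left, h.mid, h.right, (h.mem_line_iff T).1 hTℓ, (h.mem_line_iff H).1 hHℓ,
      unitPart_of_ne_zero, hzP, hxP, hyP, hxT, hyT, hxH, hyH, mul_div_mul_left] using
      (h.toHomogCoords.translate hzP).segre_tangents
        (fun X hX ↦ h.cevaProduct_translate hP.mem hPℓ hX)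
        h.nearNucleus_left h.symm.nearNucleus_left hP
  field_simp at hsegre
  linear_combination hsegre

lemma conjugate_relation (h : AdaptedCoords S ℓ A B C O x y z) (hPℓ : ¬ pgMem P ℓ)
    (hP : NearNucleus S P T H) (hT : T ∉ S) (hTℓ : pgMem T ℓ) (hH : H ∉ S) (hHℓ : pgMem H ℓ) :
    (2 * x H.rep - y H.rep) * x P.rep + (2 * y H.rep - x H.rep) * y P.rep = 0 := by
  have hslope := h.slope_relation hPℓ hP hT hTℓ hH hHℓ
  have hslope' := h.swap.slope_relation hPℓ hP hT hTℓ hH hHℓ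
  simp only [LinearMap.sub_apply] at hslope'
  refine (mul_eq_zero.1 ?_).resolve_left (h.symm.mid_ne_zero_of_mem_line hT hTℓ)
  linear_combination hslope + hslope'

end AdaptedCoords

end SlopeRelations

section LightTrisecants

variable {F : Type*} [Field F] {S : Finset (PGPoint F)} {x y z : Dual F (Fin 3 → F)}
  {P Q A B C O H : PGPoint F} {ℓ L M τ θ : PGLine F}

lemma HomogCoords.right_mem (h : HomogCoords x y z A B O) (hPQ : P ≠ Q) (hPL : pgMem P L)
    (hQL : pgMem Q L) (hyQ : y Q.rep ≠ 0) (hdet : x P.rep * y Q.rep = y P.rep * x Q.rep) :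
    pgMem O L := by
  let f := y Q.rep • x - x Q.rep • y
  have hf : f ≠ 0 := fun hf ↦ mul_ne_zero hyQ h.left.1 <| by
    simpa [f, h.left] using LinearMap.congr_fun hf A.rep
  have hfP : pgMem P (kerLine f hf) := (pgMem_kerLine hf).2 <| by
    simp only [f, LinearMap.sub_apply, LinearMap.smul_apply, smul_eq_mul]
    linear_combination hdet
  have hfQ : pgMem Q (kerLine f hf) := (pgMem_kerLine hf).2 <| by
    simp [f, mul_comm]
  rw [line_unique hPQ hPL hQL hfP hfQ, pgMem_kerLine]
  simp [f, h.right]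

lemma LightPoint.eq_trisecant (h : LightPoint S P τ θ) (hPM : pgMem P M) (hM : nsec S M = 3) :
    M = θ := by
  by_contra hMθ
  have hMτ : M ≠ τ := fun hMτ ↦ by simp [hMτ, h.nsec_tangent] at hM
  simp [h.nsec_eq_two M hPM hMτ hMθ] at hM

lemma LightTrisecant.not_mem_of_mem_inter (hℓ : LightTrisecant S ℓ) (hM : nsec S M = 3)
    (hMℓ : M ≠ ℓ) (hPM : pgMem P M) (hPℓ : pgMem P ℓ) : P ∉ S := fun hP ↦
  have ⟨_, hlight⟩ := hℓ.2 P hP hPℓ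
  hMℓ (hlight.eq_trisecant hPM hM)

lemma LightPoint.exists_nearNucleus (hP : LightPoint S P τ θ) (hℓ : LightTrisecant S ℓ)
    (hPℓ : ¬ pgMem P ℓ) (hHθ : pgMem H θ) (hHℓ : pgMem H ℓ) :
    H ∉ S ∧ ∃ T, pgMem T τ ∧ pgMem T ℓ ∧ T ∉ S ∧ NearNucleus S P T H := by
  obtain ⟨T, hTτ, hTℓ⟩ := exists_meet τ ℓ
  have hTP : T ≠ P := fun hTP ↦ hPℓ (hTP ▸ hTℓ)
  have hHP : H ≠ P := fun hHP ↦ hPℓ (hHP ▸ hHℓ)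
  exact ⟨hℓ.not_mem_of_mem_inter hP.nsec_trisecant (fun hθℓ ↦ hPℓ (hθℓ ▸ hP.mem_trisecant)) hHθ hHℓ,
    T, hTτ, hTℓ, fun hT ↦ hTP (hP.eq_of_mem_tangent hT hTτ), hP.nearNucleus hTP hTτ hHP hHθ⟩

lemma IsNucleus.not_mem_of_nsec_eq_three (hP : IsNucleus S P) (hℓ : nsec S ℓ = 3) :
    ¬ pgMem P ℓ := fun hPℓ ↦ by
  simp [hP.2 ℓ hPℓ] at hℓ

namespace AdaptedCoords

lemma exists_tangent (h : AdaptedCoords S ℓ A B C O x y z) (hP : P ∈ S) (hPℓ : pgMem P ℓ) :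
    ∃ τ, pgMem O τ ∧ LightPoint S P τ ℓ := by
  obtain rfl | rfl | rfl := h.eq_of_mem P hP hPℓ
  exacts [h.light_left, h.light_mid, h.light_third]

lemma lightTrisecant (h : AdaptedCoords S ℓ A B C O x y z) : LightTrisecant S ℓ := by
  obtain ⟨τ, -, hA⟩ := h.light_left
  refine ⟨hA.nsec_trisecant, fun P hP hPℓ ↦ ?_⟩
  obtain ⟨τ, -, hlight⟩ := h.exists_tangent hP hPℓ
  exact ⟨τ, hlight⟩

lemma exists_harmonic (h2 : (2 : F) ≠ 0) (h : AdaptedCoords S ℓ A B C O x y z) :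
    ∃ D, D ∉ S ∧ pgMem D ℓ ∧ x D.rep + y D.rep = 0 := by
  have hxy : x + y ≠ 0 := fun hxy ↦ h.left.1 <| by
    simpa [h.left] using LinearMap.congr_fun hxy A.rep
  obtain ⟨D, hD, hDℓ⟩ := exists_meet (kerLine (x + y) hxy) ℓ
  rw [pgMem_kerLine, LinearMap.add_apply] at hD
  refine ⟨D, fun hDS ↦ ?_, hDℓ, hD⟩
  obtain rfl | rfl | rfl := h.eq_of_mem D hDS hDℓ
  · simp [h.left] at hD
  · simp [h.mid] at hD
  · refine h.swap.left.1 ((mul_eq_zero.1 ?_).resolve_left h2)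
    rw [two_mul]
    exact h.third_eq ▸ hD

variable [Finite F]

lemma not_isNucleus (h2 : (2 : F) ≠ 0) (h3 : (3 : F) ≠ 0)
    (h : AdaptedCoords S ℓ A B C O x y z) : ¬ IsNucleus S P := by
  intro hP
  obtain ⟨D, hD, hDℓ, hxyD⟩ := h.exists_harmonic h2
  have hPℓ := hP.not_mem_of_nsec_eq_three h.lightTrisecant.1
  have hrel := h.conjugate_relation hPℓ (hP.nearNucleus_self fun hDP ↦ hPℓ (hDP ▸ hDℓ))
    hD hDℓ hD hDℓ
  have hxyP : x P.rep - y P.rep ≠ 0 := h.swap.mid_ne_zero_of_mem hP.1 hPℓ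
  have hxD := h.symm.mid_ne_zero_of_mem_line hD hDℓ
  refine mul_ne_zero (mul_ne_zero h3 hxD) hxyP ?_
  linear_combination hrel + (x P.rep - 2 * y P.rep) * hxyD

/-- The conjugate relation says that the points of `S` on another light trisecant all lie on one
line through `O`. -/
lemma apex_mem_of_lightTrisecant (h3 : (3 : F) ≠ 0) (h : AdaptedCoords S ℓ A B C O x y z)
    (hM : LightTrisecant S M) (hMℓ : M ≠ ℓ) : pgMem O M := by
  have hℓ := h.lightTrisecant
  obtain ⟨H, hHM, hHℓ⟩ := exists_meet M ℓ
  let f := (2 * x H.rep - y H.rep) • x + (2 * y H.rep - x H.rep) • y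
  have hH : H ∉ S := hℓ.not_mem_of_mem_inter hM.1 hMℓ hHM hHℓ
  have hf : f ≠ 0 := fun hf ↦ by
    obtain ⟨hx, hy⟩ := LinearIndependent.pair_iff.1 h.linearIndependent _ _ hf
    refine mul_ne_zero h3 (h.symm.mid_ne_zero_of_mem_line hH hHℓ) ?_
    linear_combination 2 * hx + hy
  have hfM : ∀ P ∈ S, pgMem P M → pgMem P (kerLine f hf) := by
    intro P hP hPM
    obtain ⟨τ, hlight⟩ := hM.2 P hP hPM
    have hPℓ : ¬ pgMem P ℓ := fun hPℓ ↦ hℓ.not_mem_of_mem_inter hM.1 hMℓ hPM hPℓ hP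
    obtain ⟨-, T, -, hTℓ, hT, hnear⟩ := hlight.exists_nearNucleus hℓ hPℓ hHM hHℓ
    exact (pgMem_kerLine hf).2 (h.conjugate_relation hPℓ hnear hT hTℓ hH hHℓ)
  have hcard : 1 < #{P ∈ S | pgMem P M} := by
    rw [← nsec_eq_card_filter, hM.1]
    lia
  obtain ⟨P, hP, Q, hQ, hPQ⟩ := one_lt_card.1 hcard
  rw [mem_filter] at hP hQ
  rw [line_unique hPQ hP.2 hQ.2 (hfM P hP.1 hP.2) (hfM Q hQ.1 hQ.2), pgMem_kerLine]
  simp [f, h.right]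

/-- In characteristic three the conjugate relation splits into linear factors. -/
lemma apex_mem_tangent (h3 : (3 : F) = 0) (h : AdaptedCoords S ℓ A B C O x y z)
    (hP : LightPoint S P τ θ) (hPℓ : ¬ pgMem P ℓ) (hHθ : pgMem H θ) (hHℓ : pgMem H ℓ) :
    pgMem O τ ∧ x H.rep + y H.rep = 0 := by
  obtain ⟨hH, T, hTτ, hTℓ, hT, hnear⟩ := hP.exists_nearNucleus h.lightTrisecant hPℓ hHθ hHℓ
  have hslope := h.slope_relation hPℓ hnear hT hTℓ hH hHℓ
  have hconj := h.conjugate_relation hPℓ hnear hT hTℓ hH hHℓ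
  have hxH := h.symm.mid_ne_zero_of_mem_line hH hHℓ
  have hyP := h.mid_ne_zero_of_mem hP.mem hPℓ
  have hprod : (x P.rep + y P.rep) * (x H.rep + y H.rep) = 0 := by
    linear_combination -hconj + (x P.rep * x H.rep + y P.rep * y H.rep) * h3
  have hTH : T ≠ H := fun hTH ↦ hPℓ (hP.eq_of_mem_inter hTτ (hTH ▸ hHθ) ▸ hTℓ)
  obtain hxyP | hxyH := mul_eq_zero.1 hprod
  · refine absurd (h.right_mem hTH hTℓ hHℓ (h.mid_ne_zero_of_mem_line hH hHℓ) ?_)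
      h.apex_not_mem_line
    refine mul_left_cancel₀ hyP ?_
    linear_combination hslope - y T.rep * x H.rep * hxyP
  · refine ⟨h.right_mem (fun hTP : T = P ↦ hPℓ (hTP ▸ hTℓ)) hTτ hP.mem_tangent hyP ?_, hxyH⟩
    refine mul_left_cancel₀ hxH ?_
    linear_combination -hslope + y P.rep * x T.rep * hxyH

lemma exists_forall_nearNucleus (h2 : (2 : F) ≠ 0) (h3 : (3 : F) = 0)
    (h : AdaptedCoords S ℓ A B C O x y z) :
    ∃ D, ∀ P, (IsNucleus S P ∨ ∃ τ θ, LightPoint S P τ θ) → NearNucleus S P O D := by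
  obtain ⟨D, hD, hDℓ, hxyD⟩ := h.exists_harmonic h2
  have ne {P X : PGPoint F} (hP : P ∈ S) (hX : X ∉ S) : X ≠ P := fun hXP ↦ hX (hXP ▸ hP)
  have hyD := h.mid_ne_zero_of_mem_line hD hDℓ
  have hxD := h.symm.mid_ne_zero_of_mem_line hD hDℓ
  refine ⟨D, fun P hP ↦ ?_⟩
  obtain hP | ⟨τ, θ, hP⟩ := hP
  · have hPℓ := hP.not_mem_of_nsec_eq_three h.lightTrisecant.1
    have hslope := h.slope_relation hPℓ (hP.nearNucleus_self (ne hP.1 hD)) hD hDℓ hD hDℓ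
    obtain ⟨L, hPL, hDL⟩ := exists_line P D
    refine hP.nearNucleus (ne hP.1 h.apex_not_mem) (ne hP.1 hD) hPL
      (h.right_mem (ne hP.1 hD).symm hPL hDL hyD (mul_left_cancel₀ hxD ?_)) hDL
    linear_combination hslope - y P.rep * x D.rep * hxyD
  have near {τ θ : PGLine F} (hP : LightPoint S P τ θ) (hOτ : pgMem O τ) (hDθ : pgMem D θ) :
      NearNucleus S P O D :=
    hP.nearNucleus (ne hP.mem h.apex_not_mem) hOτ (ne hP.mem hD) hDθ
  by_cases hPℓ : pgMem P ℓ
  · obtain ⟨σ, hOσ, hσ⟩ := h.exists_tangent hP.mem hPℓ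
    exact near hσ hOσ hDℓ
  · obtain ⟨H, hHθ, hHℓ⟩ := exists_meet θ ℓ
    obtain ⟨hOτ, hxyH⟩ := h.apex_mem_tangent h3 hP hPℓ hHθ hHℓ
    have hHD : H = D := by_contra fun hHD ↦ h.apex_not_mem_line <|
      h.right_mem hHD hHℓ hDℓ hyD (by linear_combination y D.rep * hxyH - y H.rep * hxyD)
    exact near hP hOτ (hHD ▸ hHθ)

end AdaptedCoords

end LightTrisecants

section Counting

variable {F : Type*} [Field F] [Fintype F] {S : Finset (PGPoint F)} {P : PGPoint F} {ℓ : PGLine F}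

lemma LightTrisecant.exists_apex (hF : 2 < Fintype.card F) (h3 : (3 : F) ≠ 0)
    (h : LightTrisecant S ℓ) :
    ∃ O, ¬ pgMem O ℓ ∧ ∀ M, LightTrisecant S M → M ≠ ℓ → pgMem O M := by
  obtain ⟨A, B, C, O, x, y, z, hc⟩ := h.exists_adaptedCoords hF
  exact ⟨O, hc.apex_not_mem_line, fun _ hM hMℓ ↦ hc.apex_mem_of_lightTrisecant h3 hM hMℓ⟩

lemma card_lightTrisecant_le_three (hF : 2 < Fintype.card F) (h3 : (3 : F) ≠ 0)
    (S : Finset (PGPoint F)) : #{L : PGLine F | LightTrisecant S L} ≤ 3 := by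
  by_contra! hlt
  obtain ⟨K, hK⟩ := card_pos.1 (pos_of_gt hlt)
  rw [← card_erase_add_one hK, Nat.succ_lt_succ_iff] at hlt
  obtain ⟨L, hL, M, hM, N, hN, hLM, hLN, hMN⟩ := two_lt_card.1 hlt
  simp only [mem_erase, mem_filter_univ] at hK hL hM hN
  obtain ⟨O, hOK, hO⟩ := hK.exists_apex hF h3
  obtain ⟨Q, -, hQ⟩ := hL.2.exists_apex hF h3
  have hQO : Q ≠ O := fun hQO ↦ hOK (hQO ▸ hQ K hK hL.1.symm)
  exact hMN (line_unique hQO (hQ M hM.2 hLM.symm) (hO M hM.2 hM.1) (hQ N hN.2 hLN.symm)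
    (hO N hN.2 hN.1))

/-- The number of `k`-secants of `S` through `P`. -/
noncomputable def secantCount (S : Finset (PGPoint F)) (k : ℕ) (P : PGPoint F) : ℕ :=
  #{L ∈ pencil P | nsec S L = k}

lemma sum_mul_secantCount (S : Finset (PGPoint F)) (w : PGPoint F → ℤ) (k : ℕ) :
    ∑ P ∈ S, w P * secantCount S k P
      = ∑ L : PGLine F with nsec S L = k, ∑ P ∈ S with pgMem P L, w P := by
  rw [sum_comm' (t' := S) (s' := fun P ↦ {L ∈ pencil P | nsec S L = k})]
  · simp [secantCount, mul_comm]
  · simp only [mem_filter, mem_univ, true_and, mem_pencil]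
    tauto

lemma sum_secantCount (S : Finset (PGPoint F)) (k : ℕ) :
    ∑ P ∈ S, secantCount S k P = k * #{L : PGLine F | nsec S L = k} := by
  have hsum := sum_mul_secantCount S 1 k
  simp only [Pi.one_apply, one_mul, sum_const, nsmul_one, ← nsec_eq_card_filter] at hsum
  rw [sum_congr rfl fun L hL ↦ congrArg Nat.cast (mem_filter.1 hL).2] at hsum
  simp only [sum_const, nsmul_eq_mul] at hsum
  rw [mul_comm]
  exact_mod_cast hsum

lemma sum_nsec_pencil (hP : P ∈ S) :
    ∑ L ∈ pencil P, nsec S L = #S + Fintype.card F := by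
  have hone : ∀ Q ∈ S.erase P, #{L ∈ pencil P | pgMem Q L} = 1 := by
    intro Q hQ
    obtain ⟨L, hPL, hQL⟩ := exists_line P Q
    refine card_eq_one.2 ⟨L, ext fun M ↦ ?_⟩
    rw [mem_filter, mem_pencil, mem_singleton]
    exact ⟨fun hM ↦ line_unique (ne_of_mem_erase hQ).symm hM.1 hM.2 hPL hQL,
      fun hM ↦ hM ▸ ⟨hPL, hQL⟩⟩
  calc ∑ L ∈ pencil P, nsec S L = ∑ L ∈ pencil P, (#{Q ∈ S.erase P | pgMem Q L} + 1) :=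
        sum_congr rfl fun L hL ↦ nsec_eq_card_erase_add_one hP (mem_pencil.1 hL)
    _ = ∑ Q ∈ S.erase P, #{L ∈ pencil P | pgMem Q L} + (Fintype.card F + 1) := by
        rw [sum_add_distrib, ← card_eq_sum_ones, card_pencil]
        exact congrArg (· + _) (sum_card_bipartiteAbove_eq_sum_card_bipartiteBelow pgMem).symm
    _ = #S + Fintype.card F := by
        rw [sum_congr rfl hone, ← card_eq_sum_ones, ← card_erase_add_one hP]
        ring

/-- The subtraction is truncated: tangents contribute `0` to the sum. -/
lemma sum_nsec_sub_two (hS : #S = Fintype.card F + 2) (hP : P ∈ S) :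
    ∑ L ∈ pencil P, (nsec S L - 2) = secantCount S 1 P := by
  have hadd : ∀ L ∈ pencil P,
      nsec S L + (if nsec S L = 1 then 1 else 0) = nsec S L - 2 + 2 := by
    intro L hL
    have := nsec_pos hP (mem_pencil.1 hL)
    split_ifs <;> lia
  have hsum := sum_congr rfl hadd
  rw [sum_add_distrib, sum_add_distrib, sum_nsec_pencil hP, sum_const, card_pencil,
    ← card_filter, smul_eq_mul, ← secantCount] at hsum
  lia

lemma secantCount_three_le_secantCount_one (hS : #S = Fintype.card F + 2) (hP : P ∈ S) :
    secantCount S 3 P ≤ secantCount S 1 P := by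
  rw [← sum_nsec_sub_two hS hP, secantCount, card_filter]
  refine sum_le_sum fun L _ ↦ ?_
  split_ifs <;> lia

lemma isNucleus_of_secantCount_one_eq_zero (hS : #S = Fintype.card F + 2) (hP : P ∈ S)
    (h : secantCount S 1 P = 0) : IsNucleus S P := by
  refine ⟨hP, fun L hPL ↦ ?_⟩
  have hsum := sum_nsec_sub_two hS hP
  rw [h, sum_eq_zero_iff] at hsum
  have hle := hsum L (mem_pencil.2 hPL)
  have hpos := nsec_pos hP hPL
  have hne : nsec S L ≠ 1 := filter_eq_empty_iff.1 (card_eq_zero.1 h) (mem_pencil.2 hPL)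
  lia

lemma exists_lightPoint (hS : #S = Fintype.card F + 2) (hP : P ∈ S) (h : secantCount S 1 P = 1) :
    ∃ τ θ, LightPoint S P τ θ := by
  have hsum := sum_nsec_sub_two hS hP
  obtain ⟨τ, hτ⟩ := card_eq_one.1 h
  have htangent (L : PGLine F) : pgMem P L ∧ nsec S L = 1 ↔ L = τ := by
    simpa using Finset.ext_iff.1 hτ L
  obtain ⟨hPτ, hτ1⟩ := (htangent τ).2 rfl
  obtain ⟨θ, hθ, hθ0⟩ := exists_ne_zero_of_sum_ne_zero (hsum.trans h ▸ one_ne_zero)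
  rw [h, ← add_sum_erase _ _ hθ] at hsum
  have hrest : ∑ L ∈ (pencil P).erase θ, (nsec S L - 2) = 0 := by lia
  refine ⟨τ, θ, hP, hPτ, mem_pencil.1 hθ, hτ1, by lia, fun L hPL hLτ hLθ ↦ ?_⟩
  have hle := sum_eq_zero_iff.1 hrest L (mem_erase.2 ⟨hLθ, mem_pencil.2 hPL⟩)
  have hne : nsec S L ≠ 1 := fun hL ↦ hLτ ((htangent L).1 ⟨hPL, hL⟩)
  have hpos := nsec_pos hP hPL
  lia

end Counting

section Discharging

variable {F : Type*} [Field F] [Fintype F] {S : Finset (PGPoint F)} {P : PGPoint F} {ℓ : PGLine F}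

/-- The share of a trisecant that `P` receives in the discharging argument. -/
noncomputable def weight (S : Finset (PGPoint F)) (P : PGPoint F) : ℤ :=
  if secantCount S 1 P = 1 then 3 else -1

lemma eight_le_tangents_add_weight (hS : #S = Fintype.card F + 2) (hP : P ∈ S) :
    8 ≤ 5 * (secantCount S 1 P : ℤ) + weight S P * secantCount S 3 P
      + 8 * if secantCount S 1 P = 0 then 1 else 0 := by
  have hle := secantCount_three_le_secantCount_one hS hP
  obtain h0 | h1 | h2 : secantCount S 1 P = 0 ∨ secantCount S 1 P = 1 ∨ 2 ≤ secantCount S 1 P := by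
    lia
  · simp_all
  · obtain ⟨τ, θ, hlight⟩ := exists_lightPoint hS hP h1
    have hpos : 0 < secantCount S 3 P := card_pos.2
      ⟨θ, mem_filter.2 ⟨mem_pencil.2 hlight.mem_trisecant, hlight.nsec_trisecant⟩⟩
    rw [weight, if_pos h1]
    lia
  · rw [weight, if_neg (by lia)]
    lia

lemma lightTrisecant_of_forall_secantCount (hS : #S = Fintype.card F + 2) (hℓ : nsec S ℓ = 3)
    (h : ∀ P ∈ S, pgMem P ℓ → secantCount S 1 P = 1) : LightTrisecant S ℓ := by
  refine ⟨hℓ, fun P hP hPℓ ↦ ?_⟩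
  obtain ⟨τ, θ, hlight⟩ := exists_lightPoint hS hP (h P hP hPℓ)
  exact ⟨τ, hlight.eq_trisecant hPℓ hℓ ▸ hlight⟩

lemma sum_weight_le (hS : #S = Fintype.card F + 2) (hℓ : nsec S ℓ = 3) :
    ∑ P ∈ S with pgMem P ℓ, weight S P ≤ 5 + 4 * if LightTrisecant S ℓ then 1 else 0 := by
  have hsum : ∑ P ∈ S with pgMem P ℓ, weight S P
      = 4 * #{P ∈ {P ∈ S | pgMem P ℓ} | secantCount S 1 P = 1} - 3 := by
    have hweight (P : PGPoint F) :
        weight S P = 4 * (if secantCount S 1 P = 1 then 1 else 0) - 1 := by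
      rw [weight]
      split_ifs <;> rfl
    rw [sum_congr rfl fun P _ ↦ hweight P, sum_sub_distrib, ← mul_sum, sum_boole, sum_const,
      ← nsec_eq_card_filter, hℓ]
    simp
  have hcard := card_filter_le {P ∈ S | pgMem P ℓ} (secantCount S 1 · = 1)
  rw [← nsec_eq_card_filter, hℓ] at hcard
  split_ifs with hlight
  · lia
  have hne : #{P ∈ {P ∈ S | pgMem P ℓ} | secantCount S 1 P = 1} ≠ 3 := fun heq ↦ hlight <| by
    refine lightTrisecant_of_forall_secantCount hS hℓ fun P hP hPℓ ↦ ?_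
    rw [← hℓ, nsec_eq_card_filter, card_filter_eq_iff] at heq
    exact heq P (mem_filter.2 ⟨hP, hPℓ⟩)
  lia

lemma eight_mul_card_le_add (hS : #S = Fintype.card F + 2) :
    8 * (Fintype.card F + 2) ≤ 5 * (#{L : PGLine F | nsec S L = 1} + #{L : PGLine F | nsec S L = 3})
      + 8 * #{P ∈ S | secantCount S 1 P = 0} + 4 * #{L : PGLine F | LightTrisecant S L} := by
  have hpoints := sum_le_sum fun P hP ↦ eight_le_tangents_add_weight hS hP
  have htri : ∑ P ∈ S, weight S P * secantCount S 3 P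
      ≤ 5 * #{L : PGLine F | nsec S L = 3} + 4 * #{L : PGLine F | LightTrisecant S L} := by
    calc ∑ P ∈ S, weight S P * secantCount S 3 P
        = ∑ L : PGLine F with nsec S L = 3, ∑ P ∈ S with pgMem P L, weight S P :=
          sum_mul_secantCount S (weight S) 3
      _ ≤ ∑ L : PGLine F with nsec S L = 3, (5 + 4 * if LightTrisecant S L then 1 else 0) :=
          sum_le_sum fun L hL ↦ sum_weight_le hS (mem_filter.1 hL).2
      _ = 5 * #{L : PGLine F | nsec S L = 3}
          + 4 * #{L : PGLine F | nsec S L = 3 ∧ LightTrisecant S L} := by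
          rw [sum_add_distrib, ← mul_sum, sum_boole, filter_filter, sum_const, nsmul_eq_mul,
            mul_comm]
      _ = _ := by
          simp only [and_iff_right_of_imp fun h : LightTrisecant S _ ↦ h.1]
  have htan := sum_secantCount S 1
  rw [sum_const, hS, sum_add_distrib, sum_add_distrib, ← mul_sum, ← mul_sum, sum_boole,
    ← Nat.cast_sum, htan, nsmul_eq_mul] at hpoints
  lia

lemma two_mul_card_le_add (hS : #S = Fintype.card F + 2) :
    2 * (Fintype.card F + 2) ≤ #{L : PGLine F | nsec S L = 1}
      + #{P ∈ S | secantCount S 1 P = 1} + 2 * #{P ∈ S | secantCount S 1 P = 0} := by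
  have hsum : ∑ _P ∈ S, 2 ≤ ∑ P ∈ S, (secantCount S 1 P
      + (if secantCount S 1 P = 1 then 1 else 0) + 2 * if secantCount S 1 P = 0 then 1 else 0) := by
    refine sum_le_sum fun P _ ↦ ?_
    split_ifs <;> lia
  rw [sum_const, hS, sum_add_distrib, sum_add_distrib, ← mul_sum, ← card_filter, ← card_filter,
    sum_secantCount, smul_eq_mul] at hsum
  lia

lemma card_secantCount_eq_zero_le_two (h2 : (2 : F) ≠ 0) (hS : #S = Fintype.card F + 2) :
    #{P ∈ S | secantCount S 1 P = 0} ≤ 2 := by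
  refine (card_le_card fun P hP ↦ ?_).trans (card_isNucleus_le_two h2 S)
  rw [mem_filter] at hP ⊢
  exact ⟨hP.1, isNucleus_of_secantCount_one_eq_zero hS hP.1 hP.2⟩

lemma LightTrisecant.secantCount_one_ne_zero (hF : 2 < Fintype.card F) (h2 : (2 : F) ≠ 0)
    (h3 : (3 : F) ≠ 0) (hS : #S = Fintype.card F + 2) (hℓ : LightTrisecant S ℓ) (hP : P ∈ S) :
    secantCount S 1 P ≠ 0 := by
  obtain ⟨A, B, C, O, x, y, z, h⟩ := hℓ.exists_adaptedCoords hF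
  exact fun h0 ↦ h.not_isNucleus h2 h3 (isNucleus_of_secantCount_one_eq_zero hS hP h0)

lemma LightTrisecant.card_secantCount_add_card_le_six (hF : 2 < Fintype.card F) (h2 : (2 : F) ≠ 0)
    (h3 : (3 : F) = 0) (hS : #S = Fintype.card F + 2) (hℓ : LightTrisecant S ℓ) :
    #{P ∈ S | secantCount S 1 P = 1} + #{P ∈ S | secantCount S 1 P = 0} ≤ 6 := by
  obtain ⟨A, B, C, O, x, y, z, h⟩ := hℓ.exists_adaptedCoords hF
  obtain ⟨D, hD⟩ := h.exists_forall_nearNucleus h2 h3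
  rw [← card_union_of_disjoint (disjoint_filter.2 (by lia)), ← filter_or]
  refine (card_le_card fun P hP ↦ ?_).trans (card_nearNucleus_le_six h2 S O D)
  rw [mem_filter] at hP ⊢
  obtain ⟨hPS, h1 | h0⟩ := hP
  · exact ⟨hPS, hD P (.inr (exists_lightPoint hS hPS h1))⟩
  · exact ⟨hPS, hD P (.inl (isNucleus_of_secantCount_one_eq_zero hS hPS h0))⟩

lemma nine_le_card (h3 : (3 : F) = 0) (hF : 3 < Fintype.card F) : 9 ≤ Fintype.card F := by
  have : CharP F 3 := (CharP.charP_iff_prime_eq_zero Nat.prime_three).2 h3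
  obtain ⟨n, -, hn⟩ := FiniteField.card F 3
  rw [hn] at hF ⊢
  have hn1 : 1 < (n : ℕ) := (Nat.pow_lt_pow_iff_right (a := 3) (by lia)).1 (by rwa [pow_one])
  exact Nat.pow_le_pow_right (n := 3) (by lia) hn1

theorem eight_mul_card_le (h2 : (2 : F) ≠ 0) (hF : 3 < Fintype.card F)
    (hS : #S = Fintype.card F + 2) : 8 * Fintype.card F ≤
      5 * (#{L : PGLine F | nsec S L = 1} + #{L : PGLine F | nsec S L = 3}) := by
  have hdis := eight_mul_card_le_add hS
  have hnuclei := card_secantCount_eq_zero_le_two h2 hS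
  obtain hempty | ⟨ℓ, hℓ⟩ := ({L | LightTrisecant S L} : Finset (PGLine F)).eq_empty_or_nonempty
  · rw [hempty, card_empty] at hdis
    lia
  rw [mem_filter_univ] at hℓ
  have hF2 : 2 < Fintype.card F := by lia
  by_cases h3 : (3 : F) = 0
  · have hlight := hℓ.card_secantCount_add_card_le_six hF2 h2 h3 hS
    have htwo := two_mul_card_le_add hS
    have htri : 0 < #{L : PGLine F | nsec S L = 3} := card_pos.2 ⟨ℓ, mem_filter_univ _ |>.2 hℓ.1⟩
    have hcard := nine_le_card h3 hF
    lia
  · have hle := card_lightTrisecant_le_three hF2 h3 S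
    have hzero : #{P ∈ S | secantCount S 1 P = 0} = 0 := card_eq_zero.2 <|
      filter_eq_empty_iff.2 fun P hP ↦ hℓ.secantCount_one_ne_zero hF2 h2 h3 hS hP
    lia

lemma card_add_card_le_ncard_odd (S : Finset (PGPoint F)) :
    #{L : PGLine F | nsec S L = 1} + #{L : PGLine F | nsec S L = 3}
      ≤ {L : PGLine F | Odd (nsec S L)}.ncard := by
  rw [← card_union_of_disjoint (disjoint_filter.2 (by lia)), ← filter_or, ← Set.ncard_coe_finset]
  refine Set.ncard_le_ncard (fun L hL ↦ ?_) (Set.toFinite _)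
  rw [mem_coe, mem_filter_univ] at hL
  obtain h | h := hL <;> simp [h, Nat.odd_iff]

end Discharging

end OddSecants

/-- Let `S` be a point set of size `q + 2` in `PG(2,q)`, `q` odd, `q > 3`.  Then the number of
odd-secants of `S` is at least `(8/5)·q`. -/
theorem stmt_18 {F : Type*} [Field F] [Fintype F] (q : ℕ) (hq : Fintype.card F = q)
    (hqodd : Odd q) (hq3 : 3 < q)
    (S : Set (PGPoint F)) (hsize : S.ncard = q + 2) :
    (8 / 5 : ℚ) * (q : ℚ) ≤ ({L : PGLine F | Odd (nsec S L)}.ncard : ℚ) := by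
  subst hq
  have h2 : (2 : F) ≠ 0 := Ring.two_ne_zero fun h ↦
    Nat.not_even_iff_odd.2 hqodd (Nat.even_iff.2 (FiniteField.even_card_of_char_two h))
  obtain ⟨T, rfl⟩ := (Set.toFinite S).exists_finset_coe
  rw [Set.ncard_coe_finset] at hsize
  have hodd : 8 * Fintype.card F ≤ 5 * {L : PGLine F | Odd (nsec (T : Set (PGPoint F)) L)}.ncard :=
    (OddSecants.eight_mul_card_le h2 hq3 hsize).trans <|
      Nat.mul_le_mul_left 5 (OddSecants.card_add_card_le_ncard_odd T)
  qify at hodd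
  linarith
end
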